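/- arXiv:1801.01310 — 2 statements merged into one kernel-verified Lean document; each statement's English description precedes it below -/
import Mathlib

section
/- Let G be a vertex-minimal counterexample to 'Δ(H) ≥ 9 implies χ(H) ≤ max{Δ(H) − 1, ω(H)}'. Then for every vertex u of G, the graph G − u satisfies χ(G − u) = Δ(G) − 1. -/
open SimpleGraph Finset

namespace BrooksAux

open scoped Classical in
/-- proper on a finset -/
def Proper {V : Type*} (G : SimpleGraph V) {k : ℕ} (s : Finset V) (f : V → Fin k) : Prop :=
  ∀ a ∈ s, ∀ b ∈ s, G.Adj a b → f a ≠ f b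

open scoped Classical in
theorem step {V : Type*} [Fintype V] (G : SimpleGraph V) {k : ℕ} (s : Finset V) (f : V → Fin k)
    (hf : Proper G s f) (v : V) (hv : v ∉ s)
    (hc : ((G.neighborFinset v ∩ s).image f).card < k) :
    ∃ g : V → Fin k, Proper G (insert v s) g ∧ ∀ a ∈ s, g a = f a := by
  obtain ⟨c, hc'⟩ : ∃ c : Fin k, c ∉ (G.neighborFinset v ∩ s).image f := by
    by_contra! h
    have : (G.neighborFinset v ∩ s).image f = Finset.univ := by
      ext c; simp only [Finset.mem_univ, iff_true]; exact h c
    rw [this] at hc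
    simp at hc
  have hc2 : ∀ a ∈ s, G.Adj v a → f a ≠ c := by
    intro a ha hva h
    exact hc' (Finset.mem_image.2 ⟨a, by simp [ha, hva], h⟩)
  have hne : ∀ a ∈ s, a ≠ v := fun a ha h => hv (h ▸ ha)
  refine ⟨Function.update f v c, ?_, ?_⟩
  · intro a ha b hb hab
    rcases Finset.mem_insert.1 ha with rfl | ha1 <;> rcases Finset.mem_insert.1 hb with rfl | hb1
    · exact absurd hab (G.irrefl)
    · rw [Function.update_self, Function.update_of_ne (hne b hb1)]
      exact (hc2 b hb1 hab).symm
    · rw [Function.update_self, Function.update_of_ne (hne a ha1)]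
      exact (hc2 a ha1 hab.symm)
    · rw [Function.update_of_ne (hne a ha1), Function.update_of_ne (hne b hb1)]
      exact hf a ha1 b hb1 hab
  · intro a ha
    rw [Function.update_of_ne (hne a ha)]

open scoped Classical in
theorem step_out {V : Type*} [Fintype V] (G : SimpleGraph V) {k : ℕ}
    (hdeg : ∀ v, (G.neighborFinset v).card ≤ k) (s : Finset V) (f : V → Fin k)
    (hf : Proper G s f) (v w : V) (hv : v ∉ s) (hw : w ∉ s) (hvw : G.Adj v w) :
    ∃ g : V → Fin k, Proper G (insert v s) g ∧ ∀ a ∈ s, g a = f a := by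
  refine step G s f hf v hv (lt_of_le_of_lt Finset.card_image_le (lt_of_lt_of_le ?_ (hdeg v)))
  apply Finset.card_lt_card
  refine ⟨Finset.inter_subset_left, fun h => hw ?_⟩
  exact (Finset.mem_inter.1 (h (by simpa using hvw))).2

open scoped Classical in
theorem step_two {V : Type*} [Fintype V] (G : SimpleGraph V) {k : ℕ}
    (hdeg : ∀ v, (G.neighborFinset v).card ≤ k) (s : Finset V) (f : V → Fin k)
    (hf : Proper G s f) (v x y : V) (hv : v ∉ s) (hx : x ∈ s) (hy : y ∈ s) (hxy : x ≠ y)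
    (hvx : G.Adj v x) (hvy : G.Adj v y) (he : f x = f y) :
    ∃ g : V → Fin k, Proper G (insert v s) g ∧ ∀ a ∈ s, g a = f a := by
  refine step G s f hf v hv (lt_of_lt_of_le ?_ ((Finset.card_le_card
    (Finset.inter_subset_left (s₂ := s))).trans (hdeg v)))
  refine lt_of_le_of_ne Finset.card_image_le fun h => hxy ?_
  have := Finset.card_image_iff.1 h
  exact this (by simp [hvx, hx]) (by simp [hvy, hy]) he

open scoped Classical in
theorem path {V : Type*} [Fintype V] (G : SimpleGraph V) {k : ℕ}
    (hdeg : ∀ v, (G.neighborFinset v).card ≤ k) (z : V) (l : List V) :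
    ∀ (s : Finset V) (f : V → Fin k), Proper G s f →
    (l ++ [z]).IsChain G.Adj → (l ++ [z]).Nodup → (∀ a ∈ l ++ [z], a ∉ s) →
    ∃ g : V → Fin k, Proper G (s ∪ l.toFinset) g ∧ ∀ a ∈ s, g a = f a := by
  induction l with
  | nil => intro s f hf _ _ _; exact ⟨f, by simpa using hf, fun _ _ => rfl⟩
  | cons a l ih =>
    intro s f hf hch hnd hs
    obtain ⟨w, hw, haw⟩ : ∃ w ∈ l ++ [z], G.Adj a w := by
      cases l with
      | nil => simp at hch; exact ⟨z, by simp, hch⟩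
      | cons b l => simp at hch; exact ⟨b, by simp, hch.1⟩
    obtain ⟨g, hg, hgf⟩ := step_out G hdeg s f hf a w (hs a (by simp))
      (hs w (by simp at hw ⊢; tauto)) haw
    have hnd' : a ∉ l ++ [z] ∧ (l ++ [z]).Nodup := by
      rw [List.cons_append] at hnd; exact List.nodup_cons.1 hnd
    obtain ⟨g', hg', hgf'⟩ := ih (insert a s) g hg (by
        rw [List.cons_append] at hch; exact hch.tail) hnd'.2 (by
        intro b hb hb'
        rcases Finset.mem_insert.1 hb' with rfl | hb'
        · exact hnd'.1 hb
        · exact hs b (by rw [List.cons_append]; exact List.mem_cons_of_mem _ hb) hb')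
    refine ⟨g', ?_, fun b hb => (hgf' b (Finset.mem_insert_of_mem hb)).trans (hgf b hb)⟩
    have : s ∪ (a :: l).toFinset = insert a s ∪ l.toFinset := by
      ext; simp
    rw [this]; exact hg'

open scoped Classical in
theorem maxpath {V : Type*} [Fintype V] (G : SimpleGraph V) (s : Finset V) (n : ℕ) :
    ∀ (h : V) (q : List V), s.card ≤ n + q.length → (h :: q).IsChain G.Adj → (h :: q).Nodup →
      (∀ a ∈ h :: q, a ∈ s) →
    ∃ (r : List V) (h' : V) (t : List V), r ++ (h :: q) = h' :: t ∧
      (h' :: t).IsChain G.Adj ∧ (h' :: t).Nodup ∧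
      (∀ a ∈ h' :: t, a ∈ s) ∧ ∀ w ∈ s, G.Adj h' w → w ∈ t := by
  induction n with
  | zero =>
    intro h q hc hch hnd hs
    have h1 := List.toFinset_card_of_nodup hnd
    have h2 : (h :: q).toFinset ⊆ s := fun a ha => hs a (by simpa using ha)
    have h3 := Finset.card_le_card h2
    simp only [List.length_cons] at h1
    omega
  | succ n ih =>
    intro h q hc hch hnd hs
    by_cases hm : ∀ w ∈ s, G.Adj h w → w ∈ q
    · exact ⟨[], h, q, rfl, hch, hnd, hs, hm⟩
    · push Not at hm
      obtain ⟨w, hws, hhw, hwq⟩ := hm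
      obtain ⟨r, h', t, e, H⟩ := ih w (h :: q) (by simp; omega)
        (List.isChain_cons_cons.2 ⟨hhw.symm, hch⟩)
        (List.nodup_cons.2 ⟨by simp [hwq]; exact hhw.ne', hnd⟩)
        (by intro a ha; rcases List.mem_cons.1 ha with rfl | ha; exacts [hws, hs a ha])
      exact ⟨r ++ [w], h', t, by simpa using e, H⟩

theorem split_first {α : Type*} (p : α → Prop) (l : List α) (h : ∃ a ∈ l, p a) :
    ∃ l1 a l2, l = l1 ++ a :: l2 ∧ p a ∧ ∀ b ∈ l1, ¬ p b := by
  induction l with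
  | nil => simp at h
  | cons c l ih =>
    by_cases hc : p c
    · exact ⟨[], c, l, rfl, hc, by simp⟩
    · obtain ⟨l1, a, l2, rfl, ha, hb⟩ := ih (by
        obtain ⟨a, ha, hp⟩ := h
        rcases List.mem_cons.1 ha with rfl | ha
        · exact absurd hp hc
        · exact ⟨a, ha, hp⟩)
      exact ⟨c :: l1, a, l2, rfl, ha, by
        intro b hb'; rcases List.mem_cons.1 hb' with rfl | hb'; exacts [hc, hb b hb']⟩

theorem split_last {α : Type*} (p : α → Prop) (l : List α) (h : ∃ a ∈ l, p a) :
    ∃ l1 a l2, l = l1 ++ a :: l2 ∧ p a ∧ ∀ b ∈ l2, ¬ p b := by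
  obtain ⟨l1, a, l2, e, ha, hb⟩ := split_first p l.reverse (by simpa using h)
  refine ⟨l2.reverse, a, l1.reverse, ?_, ha, by simpa using hb⟩
  have := congrArg List.reverse e
  simpa using this

theorem chain_rev {V : Type*} (G : SimpleGraph V) (l : List V) (h : l.IsChain G.Adj) :
    l.reverse.IsChain G.Adj := by
  rw [List.isChain_reverse]
  exact h.imp fun a b hab => hab.symm

open scoped Classical in
/-- Cycle case: `C = D ++ a :: b :: Y` cyclic. -/
theorem cyc {V : Type*} [Fintype V] (G : SimpleGraph V) {k : ℕ}
    (hdeg : ∀ v, (G.neighborFinset v).card ≤ k) (s : Finset V) (f : V → Fin k)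
    (hf : Proper G s f) (D Y : List V) (a b u : V)
    (hch : (D ++ a :: b :: Y).IsChain G.Adj) (hnd : (D ++ a :: b :: Y).Nodup)
    (hs : ∀ c ∈ D ++ a :: b :: Y, c ∉ s)
    (hcl : ∀ x ∈ (D ++ [a]).head?, ∀ y ∈ (b :: Y).getLast?, G.Adj x y)
    (ha : ∀ c ∈ s, ¬ G.Adj a c) (hu : u ∈ s) (hbu : G.Adj b u) :
    ∃ g : V → Fin k, Proper G (s ∪ (D ++ a :: b :: Y).toFinset) g := by
  have has : a ∉ s := hs a (by simp)
  have hbs : b ∉ s := hs b (by simp)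
  have hne : ∀ c ∈ s, c ≠ a := fun c hc h => has (h ▸ hc)
  have hg : Proper G (insert a s) (Function.update f a (f u)) := by
    intro x hx y hy hxy
    rcases Finset.mem_insert.1 hx with rfl | hx1 <;> rcases Finset.mem_insert.1 hy with rfl | hy1
    · exact absurd hxy (G.irrefl)
    · exact absurd hxy (ha y hy1)
    · exact absurd hxy.symm (ha x hx1)
    · rw [Function.update_of_ne (hne x hx1), Function.update_of_ne (hne y hy1)]
      exact hf x hx1 y hy1 hxy
  have hab : G.Adj a b := by
    have := (List.isChain_append.1 hch).2.1
    exact (List.isChain_cons_cons.1 this).1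
  have hperm : (a :: (D.reverse ++ Y.reverse ++ [b])).Perm (D ++ a :: b :: Y) := by
    refine List.Perm.trans ?_ List.perm_middle.symm
    refine List.Perm.cons _ ?_
    rw [List.append_assoc]
    refine List.Perm.append (List.reverse_perm D) ?_
    have : Y.reverse ++ [b] = (b :: Y).reverse := by simp
    rw [this]; exact List.reverse_perm _
  have hnd2 := hperm.nodup_iff.2 hnd
  rw [List.nodup_cons] at hnd2
  have hch2 : (D.reverse ++ Y.reverse ++ [b]).IsChain G.Adj := by
    rw [List.append_assoc]
    have e : Y.reverse ++ [b] = (b :: Y).reverse := by simp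
    rw [e]
    obtain ⟨h1, h2, h3⟩ := List.isChain_append.1 hch
    refine List.isChain_append.2 ⟨chain_rev G _ h1, chain_rev G _ h2.tail, ?_⟩
    intro x hx y hy
    rw [List.getLast?_reverse] at hx
    rw [List.head?_reverse] at hy
    refine hcl x ?_ y hy
    cases D with
    | nil => simp at hx
    | cons d D => simpa using hx
  obtain ⟨g, hg1, hg2⟩ := path G hdeg b (D.reverse ++ Y.reverse) _ _ hg hch2 hnd2.2 (by
    intro c hc hc'
    rcases Finset.mem_insert.1 hc' with rfl | hc'
    · exact hnd2.1 hc
    · exact hs c (hperm.mem_iff.1 (List.mem_cons_of_mem _ hc)) hc')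
  have hbn : b ∉ D.reverse ++ Y.reverse := by
    have := List.nodup_append.1 hnd2.2
    intro hb
    exact this.2.2 b hb b (by simp) rfl
  obtain ⟨g', hg', -⟩ := step_two G hdeg _ g hg1 b a u (by
      intro h
      rcases Finset.mem_union.1 h with h | h
      · rcases Finset.mem_insert.1 h with h | h
        · exact hab.ne h.symm
        · exact hbs h
      · exact hbn (List.mem_toFinset.1 h))
    (by simp) (by simp [hu]) (hne u hu).symm hab.symm hbu (by
      rw [hg2 a (by simp), hg2 u (by simp [hu]), Function.update_self,
        Function.update_of_ne (hne u hu)])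
  refine ⟨g', ?_⟩
  convert hg' using 1
  ext; simp; tauto

open scoped Classical in
/-- Hamiltonian case. -/
theorem ham {V : Type*} [Fintype V] (G : SimpleGraph V) {k : ℕ} (hk : 3 ≤ k)
    (hdeg : ∀ v, (G.neighborFinset v).card ≤ k) (r1 r2 : List V) (z y v x : V)
    (hch : (r1 ++ z :: r2 ++ [y, v, x]).IsChain G.Adj)
    (hnd : (r1 ++ z :: r2 ++ [y, v, x]).Nodup)
    (hxy : ¬ G.Adj x y) (hzv : G.Adj z v) :
    ∃ g : V → Fin k, Proper G (r1 ++ z :: r2 ++ [y, v, x]).toFinset g := by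
  have h0 : Proper G {x, y} (fun _ => (⟨0, by omega⟩ : Fin k)) := by
    intro a ha b hb hab
    simp only [Finset.mem_insert, Finset.mem_singleton] at ha hb
    rcases ha with rfl | rfl <;> rcases hb with rfl | rfl
    · exact absurd hab G.irrefl
    · exact absurd hab hxy
    · exact absurd hab.symm hxy
    · exact absurd hab G.irrefl
  obtain ⟨c1, c2, -⟩ := List.isChain_append.1 hch
  obtain ⟨c3, c4, c5⟩ := List.isChain_append.1 c1
  have hyv : G.Adj y v := by simp at c2; exact c2.1
  have hvx : G.Adj v x := by simp at c2; exact c2.2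
  have hnd0 := hnd
  simp only [List.nodup_append, List.nodup_cons, List.mem_cons, List.mem_append] at hnd0
  obtain ⟨g, hg, hg2⟩ := path G hdeg z r2.reverse _ _ h0 (by
      have := chain_rev G _ c4
      simpa using this) (by
      have : (z :: r2).Nodup := by simp; tauto
      have := List.nodup_reverse.2 this
      simpa using this) (by
      intro a ha
      simp only [List.mem_append, List.mem_reverse, List.mem_singleton] at ha
      simp only [Finset.mem_insert, Finset.mem_singleton]
      grind)
  obtain ⟨g', hg', hg2'⟩ := path G hdeg v (r1 ++ [z]) _ _ hg (by
      refine List.isChain_append.2 ⟨?_, by simp, ?_⟩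
      · refine List.isChain_append.2 ⟨c3, by simp, ?_⟩
        simpa using c5
      · simpa using hzv) (by
      have h1 : (r1 ++ [z] ++ [v]).Sublist (r1 ++ z :: r2 ++ [y, v, x]) := by
        have : r1 ++ z :: r2 ++ [y, v, x] = (r1 ++ [z]) ++ (r2 ++ [y, v, x]) := by simp
        rw [this]
        exact List.Sublist.append (List.Sublist.refl _) (by simp)
      exact hnd.sublist h1) (by
      intro a ha
      simp only [List.mem_append, List.mem_singleton] at ha
      simp only [Finset.mem_insert, Finset.mem_singleton, Finset.mem_union, List.mem_toFinset,
        List.mem_reverse]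
      grind)
  obtain ⟨g3, hg3, -⟩ := step_two G hdeg _ g' hg' v x y (by
      simp only [Finset.mem_insert, Finset.mem_singleton, Finset.mem_union, List.mem_toFinset,
        List.mem_reverse, List.mem_append]
      grind) (by simp) (by simp) (by grind) hvx hyv.symm (by
      rw [hg2' x (by simp), hg2' y (by simp), hg2 x (by simp), hg2 y (by simp)])
  refine ⟨g3, ?_⟩
  convert hg3 using 1
  ext; simp; tauto

open scoped Classical in
theorem brooks_aux {V : Type*} [Fintype V] (G : SimpleGraph V) {k : ℕ} (hk : 3 ≤ k)
    (hdeg : ∀ v, (G.neighborFinset v).card ≤ k) (hcf : G.CliqueFree (k + 1)) (s : Finset V) :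
    ∃ g : V → Fin k, Proper G s g := by
  induction s using Finset.strongInduction with
  | H s ih =>
  rcases s.eq_empty_or_nonempty with rfl | ⟨v, hv⟩
  · exact ⟨fun _ => ⟨0, by omega⟩, by intro a ha; simp at ha⟩
  by_cases hreg : ∃ v ∈ s, (G.neighborFinset v ∩ s).card < k
  · obtain ⟨v, hv, hlt⟩ := hreg
    obtain ⟨f, hf⟩ := ih (s.erase v) (Finset.erase_ssubset hv)
    obtain ⟨g, hg, -⟩ := step G _ f hf v (by simp) (lt_of_le_of_lt Finset.card_image_le
      (lt_of_le_of_lt (Finset.card_le_card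
        (Finset.inter_subset_inter_left (Finset.erase_subset v s))) hlt))
    rw [Finset.insert_erase hv] at hg
    exact ⟨g, hg⟩
  push Not at hreg
  -- nonadjacent neighbours
  obtain ⟨x, hx, y, hy, hvx, hvy, hne, hxy⟩ : ∃ x ∈ s, ∃ y ∈ s, G.Adj v x ∧ G.Adj v y ∧
      x ≠ y ∧ ¬ G.Adj x y := by
    by_contra! hcon
    refine hcf (insert v (G.neighborFinset v ∩ s)) ⟨?_, ?_⟩
    · intro a ha b hb hab
      simp only [Finset.coe_insert, Set.mem_insert_iff, Finset.mem_coe, Finset.mem_inter,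
        mem_neighborFinset] at ha hb
      rcases ha with rfl | ⟨ha, ha'⟩ <;> rcases hb with rfl | ⟨hb, hb'⟩
      · exact absurd rfl hab
      · exact hb
      · exact ha.symm
      · exact hcon a ha' b hb' ha hb hab
    · rw [Finset.card_insert_of_notMem (by simp)]
      have h1 := hreg v hv
      have h2 := (Finset.card_le_card (Finset.inter_subset_left (s₁ := G.neighborFinset v)
        (s₂ := s))).trans (hdeg v)
      omega
  obtain ⟨r, h, t, e, hch, hnd, hsub, hmax⟩ := maxpath G s s.card y [v, x] (by omega)
    (by simp [hvy.symm, hvx]) (by simp [hvy.ne', hvx.ne, hne.symm])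
    (by simp [hx, hy, hv])
  have hhs : h ∈ s := hsub h (by simp)
  obtain ⟨t1, w, t2, rfl, hhw, ht2⟩ := split_last (fun w => G.Adj h w) t (by
    have h1 := hreg h hhs
    obtain ⟨w, hw⟩ := Finset.card_pos.1 (lt_of_lt_of_le (by omega : 0 < k) h1)
    simp only [Finset.mem_inter, mem_neighborFinset] at hw
    exact ⟨w, hmax w hw.2 hw.1, hw.1⟩)
  -- the cycle
  have eC : h :: (t1 ++ w :: t2) = (h :: (t1 ++ [w])) ++ t2 := by simp
  have hchC : (h :: (t1 ++ [w])).IsChain G.Adj := by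
    rw [eC] at hch; exact (List.isChain_append.1 hch).1
  have hndC : (h :: (t1 ++ [w])).Nodup := by
    rw [eC] at hnd; exact (List.nodup_append.1 hnd).1
  have hCs : (h :: (t1 ++ [w])).toFinset ⊆ s := by
    intro a ha
    apply hsub; rw [eC]; exact List.mem_append_left _ (List.mem_toFinset.1 ha)
  have hhC : ∀ c ∈ s, G.Adj h c → c ∈ h :: (t1 ++ [w]) := by
    intro c hc hhc
    have := hmax c hc hhc
    have h2 : c ∉ t2 := fun h' => ht2 c h' hhc
    simp at this ⊢; tauto
  have hlast : (h :: (t1 ++ [w])).getLast? = some w := by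
    rw [← List.cons_append, List.getLast?_append]; simp
  have hhead : (h :: (t1 ++ [w])).head? = some h := rfl
  have hhC' : h ∈ h :: (t1 ++ [w]) := by simp
  have eC2 : r ++ [y, v, x] = (h :: (t1 ++ [w])) ++ t2 := by rw [← eC]; exact e
  rw [← e] at hch hnd hsub
  generalize (h :: (t1 ++ [w])) = C at *
  by_cases hout : ∃ b ∈ C, ∃ u ∈ s \ C.toFinset, G.Adj b u
  · obtain ⟨D, b, Y, rfl, ⟨u, hu, hbu⟩, hD⟩ :=
      split_first (fun b => ∃ u ∈ s \ C.toFinset, G.Adj b u) C hout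
    rcases List.eq_nil_or_concat D with rfl | ⟨D, a, rfl⟩
    · simp only [List.nil_append, List.head?_cons, Option.some.injEq] at hhead
      subst hhead
      simp only [Finset.mem_sdiff, List.mem_toFinset] at hu
      exact absurd (hhC u hu.1 hbu) hu.2
    · have eD : (D ++ [a]) ++ b :: Y = D ++ a :: b :: Y := by simp
      simp only [List.concat_eq_append] at *
      rw [eD] at *
      obtain ⟨f, hf⟩ := ih (s \ (D ++ a :: b :: Y).toFinset)
        (Finset.sdiff_ssubset hCs ⟨a, by simp⟩)
      obtain ⟨g, hg⟩ := cyc G hdeg _ f hf D Y a b u hchC hndC (by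
          intro c hc hc'
          exact (Finset.mem_sdiff.1 hc').2 (List.mem_toFinset.2 hc)) (by
          intro p hp q hq
          have h1 : p = h := by
            cases D with
            | nil => simp at hp hhead; rw [← hp, hhead]
            | cons d D => simp at hp hhead; rw [← hp, hhead]
          have h2 : q = w := by
            rw [List.getLast?_append] at hlast
            rw [List.getLast?_cons_cons] at hlast
            rw [Option.mem_def.1 hq] at hlast
            simpa using hlast
          rw [h1, h2]; exact hhw) (by
          intro c hc hac
          exact hD a (by simp) ⟨c, hc, hac⟩) hu hbu
      rw [Finset.sdiff_union_of_subset hCs] at hg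
      exact ⟨g, hg⟩
  push Not at hout
  by_cases hall : C.toFinset = s
  · -- Hamiltonian
    have hmem : ∀ a ∈ s, a ∈ r ++ [y, v, x] := by
      intro a ha
      rw [eC2]; rw [← hall] at ha
      exact List.mem_append_left _ (List.mem_toFinset.1 ha)
    obtain ⟨z, hz⟩ : ((G.neighborFinset v ∩ s) \ {x, y}).Nonempty := by
      rw [← Finset.card_pos]
      have h1 := Finset.le_card_sdiff {x, y} (G.neighborFinset v ∩ s)
      have h2 : ({x, y} : Finset V).card ≤ 2 := Finset.card_le_two
      have h3 := hreg v hv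
      omega
    simp only [Finset.mem_sdiff, Finset.mem_inter, mem_neighborFinset, Finset.mem_insert,
      Finset.mem_singleton, not_or] at hz
    obtain ⟨⟨hvz, hzs⟩, hzx, hzy⟩ := hz
    have hzr : z ∈ r := by
      have := hmem z hzs
      have := hvz.ne'
      simp at *; tauto
    obtain ⟨r1, r2, rfl⟩ := List.append_of_mem hzr
    obtain ⟨g, hg⟩ := ham G hk hdeg r1 r2 z y v x hch hnd hxy hvz.symm
    exact ⟨g, fun a ha b hb => hg a (List.mem_toFinset.2 (hmem a ha)) b
      (List.mem_toFinset.2 (hmem b hb))⟩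
  · obtain ⟨f1, hf1⟩ := ih C.toFinset (lt_of_le_of_ne hCs hall)
    obtain ⟨f2, hf2⟩ := ih (s \ C.toFinset) (Finset.sdiff_ssubset hCs
      ⟨h, List.mem_toFinset.2 hhC'⟩)
    refine ⟨fun a => if a ∈ C.toFinset then f1 a else f2 a, ?_⟩
    intro a ha b hb hab
    by_cases ha' : a ∈ C.toFinset <;> by_cases hb' : b ∈ C.toFinset
    · simp only [ha', hb', if_true]; exact hf1 a ha' b hb' hab
    · exact absurd hab (hout a (List.mem_toFinset.1 ha') b (Finset.mem_sdiff.2 ⟨hb, hb'⟩))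
    · exact absurd hab.symm (hout b (List.mem_toFinset.1 hb') a (Finset.mem_sdiff.2 ⟨ha, ha'⟩))
    · simp only [ha', hb', if_false]
      exact hf2 a (Finset.mem_sdiff.2 ⟨ha, ha'⟩) b (Finset.mem_sdiff.2 ⟨hb, hb'⟩) hab

open scoped Classical in
theorem brooks {V : Type*} [Fintype V] (G : SimpleGraph V) {k : ℕ} (hk : 3 ≤ k)
    (hdeg : G.maxDegree ≤ k) (hcf : G.cliqueNum ≤ k) : G.Colorable k := by
  obtain ⟨g, hg⟩ := brooks_aux G hk (fun v => (G.degree_le_maxDegree v).trans hdeg) (by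
    intro t ht
    have := ht.isClique.card_le_cliqueNum
    rw [ht.card_eq] at this
    omega) Finset.univ
  exact ⟨Coloring.mk g fun {a b} hab => hg a (by simp) b (by simp) hab⟩

end BrooksAux

open scoped Classical in
/-- In a vertex-minimal counterexample `G` to the Borodin–Kostochka bound,
for every vertex `u`, the graph `G - u` has chromatic number exactly `Δ(G) - 1`. -/
theorem min_counterexample_delete_vertex_chromatic {V : Type*} [Fintype V]
    (G : SimpleGraph V) (hconn : G.Connected)
    (hΔ : 9 ≤ G.maxDegree)
    (hχ : ((max (G.maxDegree - 1) G.cliqueNum : ℕ) : ℕ∞) < G.chromaticNumber)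
    (hmin : ∀ s : Finset V, s ≠ Finset.univ →
      9 ≤ (G.induce (s : Set V)).maxDegree →
      (G.induce (s : Set V)).chromaticNumber ≤
        ((max ((G.induce (s : Set V)).maxDegree - 1)
          (G.induce (s : Set V)).cliqueNum : ℕ) : ℕ∞)) :
    ∀ u : V, (G.induce ({u}ᶜ : Set V)).chromaticNumber = ((G.maxDegree - 1 : ℕ) : ℕ∞) := by
  intro u
  have hω : G.cliqueNum ≤ G.maxDegree - 1 := by
    by_contra! hlt
    have hc : G.Colorable G.cliqueNum := BrooksAux.brooks G (by omega) (by omega) le_rfl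
    have := hc.chromaticNumber_le
    rw [max_eq_right hlt.le] at hχ
    exact absurd this (not_le.2 hχ)
  rw [max_eq_left hω] at hχ
  have hnc : ¬ G.Colorable (G.maxDegree - 1) := fun h =>
    absurd h.chromaticNumber_le (not_le.2 hχ)
  have hupper : (G.induce ({u}ᶜ : Set V)).Colorable (G.maxDegree - 1) := by
    have e : ((Finset.univ.erase u : Finset V) : Set V) = {u}ᶜ := by ext; simp
    rw [← e]
    have hs : (Finset.univ.erase u : Finset V) ≠ Finset.univ := by
      intro h
      have := Finset.mem_univ u
      rw [← h] at this
      simp at this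
    have hm := hmin _ hs
    generalize (Finset.univ.erase u : Finset V) = s at hm
    have hω' : (G.induce (s : Set V)).cliqueNum ≤ G.cliqueNum := by
      obtain ⟨t, ht⟩ := (G.induce (s : Set V)).exists_isNClique_cliqueNum
      have h1 := (ht.map (f := Function.Embedding.subtype _)).mono (H := G) (by
        rw [SimpleGraph.map_le_iff_le_comap])
      have h2 := h1.isClique.card_le_cliqueNum
      rwa [h1.card_eq] at h2
    have hd' : (G.induce (s : Set V)).maxDegree ≤ G.maxDegree := by
      apply maxDegree_le_of_forall_degree_le
      intro v
      refine le_trans ?_ (G.degree_le_maxDegree v)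
      rw [← card_neighborFinset_eq_degree, ← card_neighborFinset_eq_degree,
        ← Finset.card_map (Function.Embedding.subtype _)]
      apply Finset.card_le_card
      intro a ha
      simp at ha ⊢
      exact ha.1
    by_cases h9 : 9 ≤ (G.induce (s : Set V)).maxDegree
    · have := hm h9
      rw [← chromaticNumber_le_iff_colorable]
      refine this.trans ?_
      norm_cast
      omega
    · have h8 : (G.induce (s : Set V)).maxDegree ≤ G.maxDegree - 1 := by omega
      exact BrooksAux.brooks _ (by omega) (by convert h8) (by omega)
  refine le_antisymm hupper.chromaticNumber_le ?_
  by_contra! hlt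
  obtain ⟨n, hn⟩ := ENat.ne_top_iff_exists.1 (ne_top_of_lt hlt)
  rw [← hn] at hlt
  have hlt' : n < G.maxDegree - 1 := by exact_mod_cast hlt
  obtain ⟨c⟩ := chromaticNumber_le_iff_colorable.1 hn.symm.le
  apply hnc
  have hG : G.Colorable (n + 1) := by
    have C : G.Coloring (Option (Fin n)) := Coloring.mk
      (fun v => if h : v = u then none else some (c ⟨v, h⟩)) (by
        intro a b hab
        by_cases ha : a = u <;> by_cases hb : b = u
        · subst ha; subst hb; exact absurd hab G.irrefl
        · simp [ha, hb]
        · simp [ha, hb]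
        · simp only [ha, hb, dite_false]
          intro h
          exact c.valid (v := ⟨a, ha⟩) (w := ⟨b, hb⟩) hab (Option.some.inj h))
    have := C.colorable
    simpa using this
  exact hG.mono (by omega)
end

section
/- Every 4K₁-free graph G with Δ(G) ≥ 9 satisfies χ(G) ≤ max{Δ(G) − 1, ω(G)}. -/
open SimpleGraph Finset

/-- A graph is `4K₁`-free: no set of 4 pairwise non-adjacent vertices. -/
def FourK1Free {V : Type*} (G : SimpleGraph V) : Prop :=
  ¬ ∃ s : Finset V, s.card = 4 ∧ ∀ v ∈ s, ∀ w ∈ s, v ≠ w → ¬ G.Adj v w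

namespace BK
section
open Classical
set_option linter.unusedSectionVars false

variable {V : Type*} [Fintype V] {G : SimpleGraph V} {k : ℕ} {ι : Type*} {P : Finset ι}
  {Q : Finset V} {φ : V → ι}

/-- Minimal counterexample data. -/
structure Base (G : SimpleGraph V) (k : ℕ) : Prop where
  k8 : 8 ≤ k
  alpha : ∀ a b c d : V, a ≠ b → a ≠ c → a ≠ d → b ≠ c → b ≠ d → c ≠ d →
    ¬ G.Adj a b → ¬ G.Adj a c → ¬ G.Adj a d → ¬ G.Adj b c → ¬ G.Adj b d → ¬ G.Adj c d → False
  deg : ∀ v, (univ.filter (fun w => G.Adj v w)).card ≤ k + 1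
  nc : ¬ ∃ c : V → Fin k, ∀ u v, G.Adj u v → c u ≠ c v
  crit : ∀ v, ∃ c : V → Fin k, ∀ u w, u ≠ v → w ≠ v → G.Adj u w → c u ≠ c w

/-- clique as a finset -/
def Clq (G : SimpleGraph V) (Q : Finset V) : Prop := ∀ u ∈ Q, ∀ v ∈ Q, u ≠ v → G.Adj u v

/-- `φ` properly colours the complement of `Q` with colours from `P`. -/
structure Col (G : SimpleGraph V) (Q : Finset V) (P : Finset ι) (φ : V → ι) : Prop where
  proper : ∀ u v, u ∉ Q → v ∉ Q → G.Adj u v → φ u ≠ φ v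
  mem : ∀ v, v ∉ Q → φ v ∈ P

/-- `z` has a neighbour of colour `c` outside `Q`. -/
def Sees (G : SimpleGraph V) (Q : Finset V) (φ : V → ι) (z : V) (c : ι) : Prop :=
  ∃ v, v ∉ Q ∧ G.Adj z v ∧ φ v = c

/-- number of neighbours in `Q` -/
noncomputable def nQ (G : SimpleGraph V) (Q : Finset V) (u : V) : Finset V :=
  Q.filter (fun z => G.Adj u z)

/-- neighbours outside `Q` -/
noncomputable def nO (G : SimpleGraph V) (Q : Finset V) (u : V) : Finset V :=
  univ.filter (fun v => v ∉ Q ∧ G.Adj u v)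

/-- colour class outside `Q` -/
noncomputable def cls (Q : Finset V) (φ : V → ι) (c : ι) : Finset V :=
  univ.filter (fun v => v ∉ Q ∧ φ v = c)

theorem mem_nQ {u z : V} : z ∈ nQ G Q u ↔ z ∈ Q ∧ G.Adj u z := by simp [nQ]
theorem mem_nO {u z : V} : z ∈ nO G Q u ↔ z ∉ Q ∧ G.Adj u z := by simp [nO]
theorem mem_cls {c : ι} {z : V} : z ∈ cls Q φ c ↔ z ∉ Q ∧ φ z = c := by simp [cls]

theorem Base.nc' (hb : Base G k) (hP : P.card = k) (c : V → ι)
    (hc : ∀ u v, G.Adj u v → c u ≠ c v) (hm : ∀ v, c v ∈ P) : False := by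
  apply hb.nc
  refine ⟨fun v => (P.equivFinOfCardEq hP) ⟨c v, hm v⟩, fun u v huv h => ?_⟩
  apply hc u v huv
  simpa using h

theorem deg_split (hb : Base G k) (Q : Finset V) (u : V) :
    (nQ G Q u).card + (nO G Q u).card ≤ k + 1 := by
  refine le_trans ?_ (hb.deg u)
  rw [← card_union_of_disjoint]
  · apply card_le_card
    intro z; simp only [mem_union, mem_nQ, mem_nO, mem_filter, mem_univ, true_and]; tauto
  · rw [Finset.disjoint_left]; intro z; simp only [mem_nQ, mem_nO]; tauto

theorem nO_clq (hb : Base G k) (hQ : Clq G Q) {z : V} (hz : z ∈ Q) :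
    (nO G Q z).card + Q.card ≤ k + 2 := by
  have h := deg_split hb Q z
  have : nQ G Q z = Q.erase z := by
    ext w; simp only [mem_nQ, mem_erase]
    constructor
    · rintro ⟨h1, h2⟩; exact ⟨h2.ne', h1⟩
    · rintro ⟨h1, h2⟩; exact ⟨h2, hQ z hz w h2 h1.symm⟩
  rw [this, card_erase_of_mem hz] at h
  have := card_pos.2 ⟨z, hz⟩
  omega

/-- the number of colours seen is at most the number of outside neighbours -/
theorem sees_card (z : V) (F : Finset ι) (hF : ∀ c ∈ F, Sees G Q φ z c) :
    F.card ≤ (nO G Q z).card := by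
  calc F.card ≤ ((nO G Q z).image φ).card := by
        apply card_le_card
        intro c hc
        obtain ⟨v, h1, h2, h3⟩ := hF c hc
        exact mem_image.2 ⟨v, mem_nO.2 ⟨h1, h2⟩, h3⟩
    _ ≤ _ := card_image_le

theorem hall (hb : Base G k) (hQ : Clq G Q) (hP : P.card = k) (hφ : Col G Q P φ) :
    ∃ S ⊆ Q, Q.card ≤ S.card + 1 ∧
      k + 1 ≤ S.card + (P.filter (fun c => ∀ z ∈ S, Sees G Q φ z c)).card := by
  by_contra hcon
  push Not at hcon
  let t : Q → Finset ι := fun z => P.filter (fun c => ¬ Sees G Q φ z c)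
  have key : ∀ s : Finset Q, s.card ≤ (s.biUnion t).card := by
    intro s
    by_contra hlt
    push Not at hlt
    let S : Finset V := s.map (Function.Embedding.subtype _)
    have hS : S.card = s.card := card_map _
    have hSQ : S ⊆ Q := by
      intro z hz
      simp only [S, mem_map, Function.Embedding.coe_subtype] at hz
      obtain ⟨a, _, rfl⟩ := hz
      exact a.2
    have hun : (P.filter (fun c => ∀ z ∈ S, Sees G Q φ z c)).card + (s.biUnion t).card = k := by
      rw [← hP, ← card_union_of_disjoint]
      · congr 1
        ext c
        simp only [mem_union, mem_filter, mem_biUnion, t, S, mem_map,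
          Function.Embedding.coe_subtype]
        constructor
        · rintro (h | ⟨a, _, h, _⟩)
          · exact h.1
          · exact h
        · intro hc
          by_cases h : ∃ a ∈ s, ¬ Sees G Q φ a c
          · obtain ⟨a, h1, h2⟩ := h
            exact Or.inr ⟨a, h1, hc, h2⟩
          · push Not at h
            left
            refine ⟨hc, ?_⟩
            rintro z ⟨a, ha, rfl⟩
            exact h a ha
      · rw [Finset.disjoint_left]
        intro c hc hc'
        simp only [mem_filter, mem_biUnion, t, S, mem_map,
          Function.Embedding.coe_subtype] at hc hc'
        obtain ⟨a, h1, _, h2⟩ := hc'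
        exact h2 (hc.2 a ⟨a, h1, rfl⟩)
    have hne : s.Nonempty := by
      rw [nonempty_iff_ne_empty]; rintro rfl; simp at hlt
    obtain ⟨a, ha⟩ := hne
    have h1 : (P.filter (fun c => ∀ z ∈ S, Sees G Q φ z c)).card ≤ (nO G Q a).card := by
      apply sees_card (φ := φ)
      intro c hc
      simp only [mem_filter] at hc
      exact hc.2 a (by simp only [S, mem_map, Function.Embedding.coe_subtype]; exact ⟨a, ha, rfl⟩)
    have h2 := nO_clq hb hQ a.2
    have := hcon S hSQ (by omega)
    omega
  rw [Finset.all_card_le_biUnion_card_iff_exists_injective] at key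
  obtain ⟨f, hf, hft⟩ := key
  simp only [t, mem_filter] at hft
  refine hb.nc' hP (fun v => if h : v ∈ Q then f ⟨v, h⟩ else φ v) ?_ ?_
  · intro u v huv
    by_cases hu : u ∈ Q <;> by_cases hv : v ∈ Q
    · simp only [hu, hv, dif_pos]
      intro h
      have := hf h
      simp only [Subtype.mk.injEq] at this
      exact huv.ne this
    · simp only [hu, hv, dif_pos, dif_neg, not_false_eq_true]
      intro h
      exact (hft ⟨u, hu⟩).2 ⟨v, hv, huv, h.symm⟩
    · simp only [hu, hv, dif_pos, dif_neg, not_false_eq_true]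
      intro h
      exact (hft ⟨v, hv⟩).2 ⟨u, hu, huv.symm, h⟩
    · simp only [hu, hv, dif_neg, not_false_eq_true]
      exact hφ.proper u v hu hv huv
  · intro v
    by_cases hv : v ∈ Q
    · simp only [hv, dif_pos]; exact (hft ⟨v, hv⟩).1
    · simp only [hv, dif_neg, not_false_eq_true]; exact hφ.mem v hv

/-- `c` is a free colour for `u` -/
def Free (G : SimpleGraph V) (Q : Finset V) (φ : V → ι) (u : V) (c : ι) : Prop :=
  c ≠ φ u ∧ ∀ v, v ∉ Q → G.Adj u v → φ v ≠ c

theorem free_card (hb : Base G k) (hP : P.card = k) (hφ : Col G Q P φ) {u : V} (hu : u ∉ Q) :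
    (nQ G Q u).card ≤ (P.filter (fun c => Free G Q φ u c)).card + 2 := by
  have h1 := deg_split hb Q u
  have h2 : (P.erase (φ u)).card ≤
      (P.filter (fun c => Free G Q φ u c)).card + (nO G Q u).card := by
    calc (P.erase (φ u)).card ≤
      ((P.filter (fun c => Free G Q φ u c)) ∪ (nO G Q u).image φ).card := by
          apply card_le_card
          intro c hc
          simp only [mem_erase] at hc
          simp only [mem_union, mem_image, mem_nO]
          by_cases h : ∃ v, v ∉ Q ∧ G.Adj u v ∧ φ v = c
          · obtain ⟨v, a1, a2, a3⟩ := h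
            exact Or.inr ⟨v, ⟨a1, a2⟩, a3⟩
          · push Not at h
            exact Or.inl (mem_filter.2 ⟨hc.2, hc.1, h⟩)
      _ ≤ _ := (card_union_le _ _).trans (by gcongr; exact card_image_le)
  rw [card_erase_of_mem (hφ.mem u hu), hP] at h2
  have := hb.k8
  omega

theorem free_one (hb : Base G k) (hP : P.card = k) (hφ : Col G Q P φ) {u : V} (hu : u ∉ Q)
    (hs : 3 ≤ (nQ G Q u).card) : ∃ c ∈ P, Free G Q φ u c := by
  have := free_card hb hP hφ hu
  obtain ⟨c, hc⟩ := card_pos.1 (show 0 < (P.filter (fun c => Free G Q φ u c)).card by omega)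
  exact ⟨c, (mem_filter.1 hc).1, (mem_filter.1 hc).2⟩

theorem free_two (hb : Base G k) (hP : P.card = k) (hφ : Col G Q P φ) {u : V} (hu : u ∉ Q)
    (hs : 4 ≤ (nQ G Q u).card) :
    ∃ c ∈ P, ∃ c' ∈ P, c ≠ c' ∧ Free G Q φ u c ∧ Free G Q φ u c' := by
  have := free_card hb hP hφ hu
  obtain ⟨c, hc, c', hc', hne⟩ :=
    one_lt_card.1 (show 1 < (P.filter (fun c => Free G Q φ u c)).card by omega)
  exact ⟨c, (mem_filter.1 hc).1, c', (mem_filter.1 hc').1, hne, (mem_filter.1 hc).2,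
    (mem_filter.1 hc').2⟩

/-- two free colours, one avoiding a given colour -/
theorem free_avoid (hb : Base G k) (hP : P.card = k) (hφ : Col G Q P φ) {u : V} (hu : u ∉ Q)
    (hs : 4 ≤ (nQ G Q u).card) (e : ι) : ∃ c ∈ P, c ≠ e ∧ Free G Q φ u c := by
  obtain ⟨c, hc, c', hc', hne, h1, h2⟩ := free_two hb hP hφ hu hs
  by_cases h : c = e
  · exact ⟨c', hc', fun h' => hne (h.trans h'.symm), h2⟩
  · exact ⟨c, hc, h, h1⟩

theorem Col.move (hφ : Col G Q P φ) {u : V} {c : ι} (hc : c ∈ P) (hf : Free G Q φ u c) :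
    Col G Q P (Function.update φ u c) := by
  constructor
  · intro a b ha hb hab
    by_cases h1 : a = u <;> by_cases h2 : b = u
    · subst h1; subst h2; exact absurd hab (G.loopless.irrefl _)
    · subst h1; simp [h2]; exact (hf.2 b hb hab).symm
    · subst h2; simp [h1]; exact (hf.2 a ha hab.symm)
    · simp [h1, h2]; exact hφ.proper a b ha hb hab
  · intro v hv
    by_cases h : v = u
    · subst h; simpa using hc
    · simp [h]; exact hφ.mem v hv

theorem sees_move {u z : V} {c e : ι} :
    Sees G Q (Function.update φ u c) z e ↔
      ((∃ v, v ∉ Q ∧ v ≠ u ∧ G.Adj z v ∧ φ v = e) ∨ (u ∉ Q ∧ e = c ∧ G.Adj z u)) := by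
  unfold Sees
  constructor
  · rintro ⟨v, h1, h2, h3⟩
    by_cases h : v = u
    · subst h; simp at h3; exact Or.inr ⟨h1, h3.symm, h2⟩
    · simp [h] at h3; exact Or.inl ⟨v, h1, h, h2, h3⟩
  · rintro (⟨v, h1, h2, h3, h4⟩ | ⟨h1, h2, h3⟩)
    · exact ⟨v, h1, h3, by simp [h2, h4]⟩
    · exact ⟨u, h1, h3, by simp [h2]⟩

/-- independent sets have at most three vertices -/
theorem indep_le (hb : Base G k) (D : Finset V) (hD : ∀ u ∈ D, ∀ v ∈ D, ¬ G.Adj u v) :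
    D.card ≤ 3 := by
  by_contra h
  obtain ⟨s, hs, hs4⟩ := exists_subset_card_eq (show 4 ≤ D.card by omega)
  obtain ⟨a, b, c, d, h1, h2, h3, h4, h5, h6, rfl⟩ := card_eq_four.1 hs4
  simp only [insert_subset_iff, singleton_subset_iff] at hs
  obtain ⟨ha, hb', hc, hd⟩ := hs
  exact hb.alpha a b c d h1 h2 h3 h4 h5 h6 (hD _ ha _ hb') (hD _ ha _ hc) (hD _ ha _ hd)
    (hD _ hb' _ hc) (hD _ hb' _ hd) (hD _ hc _ hd)

theorem cls_indep (hφ : Col G Q P φ) {c : ι} :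
    ∀ u ∈ cls Q φ c, ∀ v ∈ cls Q φ c, ¬ G.Adj u v := by
  intro u hu v hv h
  rw [mem_cls] at hu hv
  exact hφ.proper u v hu.1 hv.1 h (hu.2.trans hv.2.symm)

theorem cls_le (hb : Base G k) (hφ : Col G Q P φ) (c : ι) : (cls Q φ c).card ≤ 3 :=
  indep_le hb _ (cls_indep hφ)

/-- covering inequality -/
theorem cover (K D : Finset V) (h : ∀ z ∈ K, ∃ u ∈ D, G.Adj u z) :
    K.card ≤ ∑ u ∈ D, (nQ G K u).card := by
  calc K.card ≤ (D.biUnion (fun u => nQ G K u)).card := by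
        apply card_le_card
        intro z hz
        obtain ⟨u, hu, h1⟩ := h z hz
        exact mem_biUnion.2 ⟨u, hu, mem_nQ.2 ⟨hz, h1⟩⟩
    _ ≤ _ := card_biUnion_le

theorem nQ_mono {K : Finset V} (h : K ⊆ Q) (u : V) : nQ G K u ⊆ nQ G Q u := by
  intro z hz; rw [mem_nQ] at hz ⊢; exact ⟨h hz.1, hz.2⟩

/-- pigeonhole: if `m * |D| < |K|`, some letter has more than `m` neighbours. -/
theorem cover_big {K D : Finset V} (h : ∀ z ∈ K, ∃ u ∈ D, G.Adj u z) (m : ℕ)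
    (hm : D.card * m < K.card) : ∃ u ∈ D, m < (nQ G K u).card := by
  by_contra hcon
  push Not at hcon
  have := cover K D h
  have h2 := sum_le_card_nsmul D _ m hcon
  simp only [smul_eq_mul] at h2
  omega

end
end BK

namespace BK
section
open Classical
set_option linter.unusedSectionVars false

variable {V : Type*} [Fintype V] {G : SimpleGraph V} {k : ℕ} {ι : Type*} {P : Finset ι}
  {Q : Finset V} {φ : V → ι}

theorem contract {U : Finset V} {m : ℕ} (hm : 0 < m) (g : V → V)
    (hg : ∀ u ∈ U, ∀ v ∈ U, G.Adj u v → g u ≠ g v) (hc : (U.image g).card ≤ m) :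
    ∃ c : V → Fin m, ∀ u ∈ U, ∀ v ∈ U, G.Adj u v → c u ≠ c v := by
  have : Nonempty (Fin m) := ⟨⟨0, hm⟩⟩
  obtain ⟨e⟩ : Nonempty ((U.image g : Finset V) ↪ Fin m) :=
    Function.Embedding.nonempty_of_card_le (by rw [Fintype.card_coe, Fintype.card_fin]; exact hc)
  refine ⟨fun v => if h : g v ∈ U.image g then e ⟨g v, h⟩ else Classical.arbitrary _, ?_⟩
  intro u hu v hv huv h
  have h1 : g u ∈ U.image g := mem_image_of_mem _ hu
  have h2 : g v ∈ U.image g := mem_image_of_mem _ hv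
  simp only [h1, h2, dif_pos] at h
  have := e.injective h
  simp only [Subtype.mk.injEq] at this
  exact hg u hu v hv huv this

theorem merge2 {U : Finset V} {m : ℕ} (hm : 0 < m) (hU : U.card ≤ m + 2) {a b c d : V}
    (ha : a ∈ U) (hb : b ∈ U) (hc : c ∈ U) (hd : d ∈ U) (h1 : a ≠ b) (h2 : c ≠ d) (h4 : a ≠ d)
    (h5 : b ≠ c) (h6 : b ≠ d) (h7 : ¬ G.Adj a b) (h8 : ¬ G.Adj c d) (h9 : a = c → ¬ G.Adj b d) :
    ∃ c : V → Fin m, ∀ u ∈ U, ∀ v ∈ U, G.Adj u v → c u ≠ c v := by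
  refine contract hm (fun v => if v = b then a else if v = d then c else v) ?_ ?_
  · intro u _ v _ huv
    have s := huv.symm
    have n := huv.ne
    have g1 : ¬ G.Adj b a := fun h => h7 h.symm
    have g2 : ¬ G.Adj d c := fun h => h8 h.symm
    have g3 : a = c → ¬ G.Adj d b := fun e h => h9 e h.symm
    clear ha hb hc hd hU hm
    grind
  · have : (U.image (fun v => if v = b then a else if v = d then c else v)) ⊆
      (U.erase b).erase d := by
      intro z hz
      simp only [mem_image] at hz
      obtain ⟨w, hw, rfl⟩ := hz
      simp only [mem_erase]
      grind
    have h := card_le_card this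
    rw [card_erase_of_mem (mem_erase.2 ⟨h6.symm, hd⟩), card_erase_of_mem hb] at h
    omega

theorem small {U : Finset V} {m : ℕ} (hm : 0 < m) (hU : U.card ≤ m + 2)
    (hc : ∀ W ⊆ U, W.card = m + 1 → ¬ Clq G W) :
    ∃ c : V → Fin m, ∀ u ∈ U, ∀ v ∈ U, G.Adj u v → c u ≠ c v := by
  have ne_of : ∀ W ⊆ U, W.card = m + 1 → ∃ a ∈ W, ∃ b ∈ W, a ≠ b ∧ ¬ G.Adj a b := by
    intro W h1 h2
    have := hc W h1 h2
    unfold Clq at this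
    push Not at this
    exact this
  have disj : U.card = m + 2 → ∀ a ∈ U, ∀ b ∈ U, ∀ c ∈ U, ∀ d ∈ U, a ≠ b → c ≠ d → a ≠ c → a ≠ d →
      b ≠ c → b ≠ d → ¬ G.Adj a b → ¬ G.Adj c d →
      ∃ c : V → Fin m, ∀ u ∈ U, ∀ v ∈ U, G.Adj u v → c u ≠ c v := by
    intro hU a ha b hb c hc d hd h1 h2 h3 h4 h5 h6 h7 h8
    exact merge2 hm hU.le ha hb hc hd h1 h2 h4 h5 h6 h7 h8 (fun h => absurd h h3)
  rcases Nat.lt_or_ge m U.card with h | h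
  · rcases Nat.lt_or_ge (m + 1) U.card with h' | h'
    · have hU : U.card = m + 2 := by omega
      have av : ∀ a ∈ U, ∃ c ∈ U, ∃ d ∈ U, c ≠ d ∧ ¬ G.Adj c d ∧ c ≠ a ∧ d ≠ a := by
        intro a ha
        obtain ⟨c, hc, d, hd, h1, h2⟩ := ne_of (U.erase a) (erase_subset _ _)
          (by rw [card_erase_of_mem ha]; omega)
        rw [mem_erase] at hc hd
        exact ⟨c, hc.2, d, hd.2, h1, h2, hc.1, hd.1⟩
      obtain ⟨x, hx⟩ := card_pos.1 (show 0 < U.card by omega)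
      obtain ⟨a, ha, b, hb, hab, nab, -, -⟩ := av x hx
      obtain ⟨c, hc, d, hd, hcd, ncd, hca, hda⟩ := av a ha
      by_cases hbb : b ≠ c ∧ b ≠ d
      · exact disj hU a ha b hb c hc d hd hab hcd hca.symm hda.symm hbb.1 hbb.2 nab ncd
      -- third vertex `c'` nonadjacent to `b`
      obtain ⟨c', hc', hc'a, hc'b, nbc⟩ : ∃ c' ∈ U, c' ≠ a ∧ c' ≠ b ∧ ¬ G.Adj b c' := by
        by_cases h1 : b = c
        · subst h1; exact ⟨d, hd, hda, hcd.symm, ncd⟩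
        · have : b = d := by tauto
          subst this; exact ⟨c, hc, hca, hcd, fun h => ncd h.symm⟩
      obtain ⟨e, he, f, hf, hef, nef, heb, hfb⟩ := av b hb
      by_cases haa : a ≠ e ∧ a ≠ f
      · exact disj hU a ha b hb e he f hf hab hef haa.1 haa.2 heb.symm hfb.symm nab nef
      obtain ⟨f', hf', hf'a, hf'b, naf⟩ : ∃ f' ∈ U, f' ≠ a ∧ f' ≠ b ∧ ¬ G.Adj a f' := by
        by_cases h1 : a = e
        · subst h1; exact ⟨f, hf, hef.symm, hfb, nef⟩
        · have : a = f := by tauto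
          subst this; exact ⟨e, he, hef, heb, fun h => nef h.symm⟩
      by_cases hfc : f' = c'
      · subst hfc
        exact merge2 hm hU.le ha hb ha hf' hab hf'a.symm hf'a.symm hab.symm hf'b.symm nab naf (fun _ => nbc)
      · exact disj hU a ha f' hf' b hb c' hc' hf'a.symm hc'b.symm hab hc'a.symm hf'b hfc naf nbc
    · obtain ⟨a, ha, b, hb, hab, nab⟩ := ne_of U subset_rfl (by omega)
      refine contract hm (fun v => if v = b then a else v) ?_ ?_
      · intro u _ v _ huv
        have s := huv.symm
        have n := huv.ne
        clear ne_of disj hc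
        grind
      · have : (U.image (fun v => if v = b then a else v)) ⊆ U.erase b := by
          intro z hz
          simp only [mem_image] at hz
          obtain ⟨w, hw, rfl⟩ := hz
          simp only [mem_erase]
          clear ne_of disj hc
          grind
        have h := card_le_card this
        rw [card_erase_of_mem hb] at h
        omega
  · refine contract hm id (fun u _ v _ huv => huv.ne) (by simpa using h)

/-- an independent triple complete to a big clique -/
theorem TL (hb : Base G k) {K : Finset V} (hK : Clq G K) (hk : k ≤ K.card + 2)
    {a b c : V} (hab : a ≠ b) (hac : a ≠ c) (hbc : b ≠ c)
    (nab : ¬ G.Adj a b) (nac : ¬ G.Adj a c) (nbc : ¬ G.Adj b c)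
    (ha : ∀ z ∈ K, G.Adj a z) (hb' : ∀ z ∈ K, G.Adj b z) (hc : ∀ z ∈ K, G.Adj c z)
    (hno : k ≤ K.card + 1 ∨ ∀ W : Finset V, W.card = k → ¬ Clq G W) : False := by
  have k8 := hb.k8
  set T : Finset V := {a, b, c} with hT
  have hTc : T.card = 3 := by rw [card_eq_three]; exact ⟨a, b, c, hab, hac, hbc, rfl⟩
  have hTK : ∀ t ∈ T, t ∉ K := by
    intro t ht hk
    simp only [hT, mem_insert, mem_singleton] at ht
    rcases ht with rfl | rfl | rfl
    · exact (ha _ hk).ne rfl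
    · exact (hb' _ hk).ne rfl
    · exact (hc _ hk).ne rfl
  have hTcomp : ∀ t ∈ T, ∀ z ∈ K, G.Adj t z := by
    intro t ht
    simp only [hT, mem_insert, mem_singleton] at ht
    rcases ht with rfl | rfl | rfl <;> assumption
  have hO : ∀ t ∈ T, (nO G K t).card + K.card ≤ k + 1 := by
    intro t ht
    have h := deg_split hb K t
    have : nQ G K t = K := by
      ext z; rw [mem_nQ]; exact ⟨fun h => h.1, fun h => ⟨h, hTcomp t ht z h⟩⟩
    rw [this] at h; omega
  set U : Finset V := univ.filter (fun v => v ∉ K ∧ v ∉ T) with hU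
  have hUsub : U ⊆ T.biUnion (fun t => nO G K t) := by
    intro v hv
    simp only [hU, mem_filter, mem_univ, true_and] at hv
    rw [mem_biUnion]
    by_contra hcon
    push Not at hcon
    simp only [mem_nO, hT, mem_insert, mem_singleton, not_and, forall_eq_or_imp, forall_eq] at hcon
    simp only [hT, mem_insert, mem_singleton, not_or] at hv
    obtain ⟨hv1, h1, h2, h3⟩ := hv
    exact hb.alpha a b c v hab hac (Ne.symm h1) hbc (Ne.symm h2) (Ne.symm h3) nab nac
      (hcon.1 hv1) nbc (hcon.2.1 hv1) (hcon.2.2 hv1)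
  have hUc : U.card ≤ 3 * (k + 1 - K.card) := by
    refine (card_le_card hUsub).trans (card_biUnion_le.trans ?_)
    refine (sum_le_card_nsmul T _ (k + 1 - K.card) ?_).trans ?_
    · intro t ht; have := hO t ht; omega
    · rw [hTc]; simp
  obtain ⟨col, hcol⟩ := small (G := G) (U := U) (m := k - 1) (by omega) (by omega) (by
    intro W hW hWc
    rcases hno with h | h
    · have := card_le_card hW; omega
    · exact h W (by omega))
  let ψ : V → Option (Fin (k - 1)) := fun v => if v ∈ T then none else some (col v)
  have hψ : Col G K (univ : Finset (Option (Fin (k - 1)))) ψ := by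
    constructor
    · intro u v hu hv huv
      simp only [ψ]
      split_ifs with h1 h2
      · exfalso
        simp only [hT, mem_insert, mem_singleton] at h1 h2
        have := huv.symm
        have := huv.ne
        rcases h1 with rfl | rfl | rfl <;> rcases h2 with rfl | rfl | rfl <;> tauto
      · simp
      · simp
      · simp only [ne_eq, Option.some.injEq]
        exact hcol u (by simp [hU, hu, h1]) v (by simp [hU, hv]; assumption) huv
    · intro v _; exact mem_univ _
  have hPc : (univ : Finset (Option (Fin (k - 1)))).card = k := by
    rw [card_univ, Fintype.card_option, Fintype.card_fin]; omega
  obtain ⟨S, hSK, hS1, hS2⟩ := hall hb hK hPc hψ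
  have hSne : S.Nonempty := by
    rw [← card_pos]; omega
  obtain ⟨z, hz⟩ := hSne
  have hzK := hSK hz
  have h1 := nO_clq hb hK hzK
  have h2 : ((univ.filter (fun c => ∀ z ∈ S, Sees G K ψ z c)).erase none).card ≤
      ((nO G K z) \ T).card := by
    calc _ ≤ (((nO G K z) \ T).image ψ).card := by
          apply card_le_card
          intro e he
          simp only [mem_erase, mem_filter, mem_univ, true_and] at he
          obtain ⟨v, h1, h2, h3⟩ := he.2 z hz
          refine mem_image.2 ⟨v, mem_sdiff.2 ⟨mem_nO.2 ⟨h1, h2⟩, ?_⟩, h3⟩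
          intro hvT
          simp only [ψ, hvT, if_true] at h3
          exact he.1 h3.symm
      _ ≤ _ := card_image_le
  have hsub : T ⊆ nO G K z := by
    intro t ht; rw [mem_nO]; exact ⟨hTK t ht, (hTcomp t ht z hzK).symm⟩
  rw [card_sdiff_of_subset hsub, hTc] at h2
  have h3 := pred_card_le_card_erase (s := univ.filter (fun c => ∀ z ∈ S, Sees G K ψ z c)) (a := none)
  have h4 := card_le_card hSK
  have h5 := card_le_card hsub
  omega

end
end BK

namespace BK
section
open Classical
set_option linter.unusedSectionVars false

variable {V : Type*} [Fintype V] {G : SimpleGraph V} {k : ℕ} {ι : Type*} {P : Finset ι}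
  {Q : Finset V} {φ : V → ι}

/-- class `c` dominates `Q` -/
def Full (G : SimpleGraph V) (Q : Finset V) (φ : V → ι) (c : ι) : Prop :=
  ∀ z ∈ Q, Sees G Q φ z c

theorem out2 (hb : Base G k) (hQ : Clq G Q) (hk : Q.card = k) {z a b v : V} (hz : z ∈ Q)
    (ha : a ∉ Q) (hza : G.Adj z a) (hb' : b ∉ Q) (hzb : G.Adj z b) (hv : v ∉ Q) (hzv : G.Adj z v)
    (hab : a ≠ b) : v = a ∨ v = b := by
  by_contra h
  push Not at h
  have h1 := nO_clq hb hQ hz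
  have : ({a, b, v} : Finset V).card ≤ (nO G Q z).card := by
    apply card_le_card
    intro w hw
    simp only [mem_insert, mem_singleton] at hw
    rcases hw with rfl | rfl | rfl <;> rw [mem_nO] <;> constructor <;> assumption
  rw [card_eq_three.2 ⟨a, b, v, hab, h.1.symm, h.2.symm, rfl⟩] at this
  omega

theorem sees3 (hb : Base G k) (hQ : Clq G Q) (hk : Q.card = k) {z : V} (hz : z ∈ Q)
    {a b c : ι} (ha : Sees G Q φ z a) (hb' : Sees G Q φ z b) (hc : Sees G Q φ z c)
    (hab : a ≠ b) : c = a ∨ c = b := by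
  obtain ⟨x, x1, x2, rfl⟩ := ha
  obtain ⟨y, y1, y2, rfl⟩ := hb'
  obtain ⟨w, w1, w2, rfl⟩ := hc
  rcases out2 hb hQ hk hz x1 x2 y1 y2 w1 w2 (by rintro rfl; exact hab rfl) with rfl | rfl <;> simp

theorem hall_k (hb : Base G k) (hQ : Clq G Q) (hk : Q.card = k) (hP : P.card = k)
    (hφ : Col G Q P φ) : (∃ c ∈ P, Full G Q φ c) ∨
    ∃ q ∈ Q, ∃ c ∈ P, ∃ d ∈ P, c ≠ d ∧ ∀ z ∈ Q, z ≠ q → Sees G Q φ z c ∧ Sees G Q φ z d := by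
  obtain ⟨S, hS, h1, h2⟩ := hall hb hQ hP hφ
  by_cases h : S = Q
  · subst h
    left
    obtain ⟨c, hc⟩ := card_pos.1 (show 0 < (P.filter (fun c => ∀ z ∈ S, Sees G S φ z c)).card by omega)
    exact ⟨c, (mem_filter.1 hc).1, (mem_filter.1 hc).2⟩
  · right
    have hlt := card_lt_card (ssubset_of_subset_of_ne hS h)
    obtain ⟨q, hq⟩ : ∃ q, q ∈ Q \ S := by
      apply card_pos.1; rw [card_sdiff_of_subset hS]; omega
    rw [mem_sdiff] at hq
    have hSe : S = Q.erase q := by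
      apply eq_of_subset_of_card_le
      · intro z hz; rw [mem_erase]; exact ⟨by rintro rfl; exact hq.2 hz, hS hz⟩
      · rw [card_erase_of_mem hq.1]; omega
    obtain ⟨c, hc, d, hd, hne⟩ :=
      one_lt_card.1 (show 1 < (P.filter (fun c => ∀ z ∈ S, Sees G Q φ z c)).card by omega)
    refine ⟨q, hq.1, c, (mem_filter.1 hc).1, d, (mem_filter.1 hd).1, hne, fun z hz hzq => ?_⟩
    have : z ∈ S := by rw [hSe, mem_erase]; exact ⟨hzq, hz⟩
    exact ⟨(mem_filter.1 hc).2 z this, (mem_filter.1 hd).2 z this⟩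

/-- no vertex complete to `Q` -/
theorem not_compl (hQ : Clq G Q) (hno : ∀ W : Finset V, W.card = Q.card + 1 → ¬ Clq G W) {u : V}
    (hu : u ∉ Q) : ∃ z ∈ Q, ¬ G.Adj z u := by
  by_contra hcon
  push Not at hcon
  refine hno (insert u Q) (card_insert_of_notMem hu) ?_
  intro a ha b hb hab
  rw [mem_insert] at ha hb
  rcases ha with rfl | ha <;> rcases hb with rfl | hb
  · exact absurd rfl hab
  · exact (hcon b hb).symm
  · exact hcon a ha
  · exact hQ a ha b hb hab

theorem typeII_aux (hb : Base G k) (hQ : Clq G Q) (hk : Q.card = k) (hP : P.card = k)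
    (hφ : Col G Q P φ) (hnf : ∀ c ∈ P, ¬ Full G Q φ c)
    {q : V} (hq : q ∈ Q) {A B : ι} (hA : A ∈ P) (hB : B ∈ P) (hAB : A ≠ B)
    (hs : ∀ z ∈ Q, z ≠ q → Sees G Q φ z A ∧ Sees G Q φ z B) :
    (¬ Sees G Q φ q A) ∧ ∃ u, u ∉ Q ∧ φ u = A ∧ ∀ z ∈ Q, z ≠ q → G.Adj u z := by
  have k8 := hb.k8
  have nA : ¬ Sees G Q φ q A := by
    intro h; refine hnf A hA fun z hz => ?_
    by_cases e : z = q
    · subst e; exact h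
    · exact (hs z hz e).1
  have nB : ¬ Sees G Q φ q B := by
    intro h; refine hnf B hB fun z hz => ?_
    by_cases e : z = q
    · subst e; exact h
    · exact (hs z hz e).2
  refine ⟨nA, ?_⟩
  obtain ⟨u, hu, hu3⟩ := cover_big (G := G) (K := Q.erase q) (D := cls Q φ A) (by
      intro z hz; rw [mem_erase] at hz
      obtain ⟨v, h1, h2, h3⟩ := (hs z hz.2 hz.1).1
      exact ⟨v, mem_cls.2 ⟨h1, h3⟩, h2.symm⟩) 2 (by
        have := cls_le hb hφ A
        rw [card_erase_of_mem hq]; omega)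
  rw [mem_cls] at hu
  obtain ⟨huQ, huA⟩ := hu
  obtain ⟨C, hC, hf⟩ := free_one hb hP hφ huQ (hu3.trans_le (card_le_card (nQ_mono (erase_subset _ _) u)))
  refine ⟨u, huQ, huA, ?_⟩
  by_contra hcon
  push Not at hcon
  obtain ⟨w, hw, hwq, hwu⟩ := hcon
  have hwu' : ¬ G.Adj w u := fun h => hwu h.symm
  have hqu : ¬ G.Adj q u := fun h => nA ⟨u, huQ, h, huA⟩
  have hCA : C ≠ A := huA ▸ hf.1
  have hφ' := hφ.move hC hf
  set ψ := Function.update φ u C with hψ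
  -- what vertices see
  have see1 : ∀ z ∈ Q, z ≠ q → ¬ G.Adj z u → ∀ e, Sees G Q ψ z e → e = A ∨ e = B := by
    intro z hz hzq hzu e he
    rw [hψ, sees_move] at he
    rcases he with ⟨v, h1, -, h3, h4⟩ | ⟨-, -, h⟩
    · exact sees3 hb hQ hk hz (hs z hz hzq).1 (hs z hz hzq).2 ⟨v, h1, h3, h4⟩ hAB
    · exact absurd h hzu
  have see2 : ∀ z ∈ Q, z ≠ q → G.Adj z u → ∀ e, Sees G Q ψ z e → e = B ∨ e = C := by
    intro z hz hzq hzu e he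
    rw [hψ, sees_move] at he
    rcases he with ⟨v, h1, h2, h3, h4⟩ | ⟨-, h, -⟩
    · obtain ⟨b, b1, b2, b3⟩ := (hs z hz hzq).2
      rcases out2 hb hQ hk hz huQ hzu b1 b2 h1 h3 (by rintro rfl; exact hAB (huA.symm.trans b3)) with h | h
      · exact absurd h h2
      · subst h; left; rw [← h4, b3]
    · exact Or.inr h
  have seeq : ∀ e, Sees G Q ψ q e → Sees G Q φ q e := by
    intro e he
    rw [hψ, sees_move] at he
    rcases he with ⟨v, h1, h2, h3, h4⟩ | ⟨-, -, h⟩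
    · exact ⟨v, h1, h3, h4⟩
    · exact absurd h hqu
  -- enough neighbours of u
  have exN : ∀ p : V, ∃ z ∈ Q, z ≠ q ∧ z ≠ p ∧ G.Adj z u := by
    intro p
    obtain ⟨z, hz⟩ := card_pos.1 (show 0 < ((nQ G (Q.erase q) u).erase p).card by
      have := pred_card_le_card_erase (s := nQ G (Q.erase q) u) (a := p); omega)
    rw [mem_erase, mem_nQ, mem_erase] at hz
    exact ⟨z, hz.2.1.2, hz.2.1.1, hz.1, hz.2.2.symm⟩
  rcases hall_k hb hQ hk hP hφ' with ⟨c, hc, hfull⟩ | ⟨p, hp, c, hc, d, hd, hcd, hsee⟩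
  · have h1 := see1 w hw hwq hwu' c (hfull w hw)
    have h2 := seeq c (hfull q hq)
    rcases h1 with rfl | rfl
    · exact nA h2
    · exact nB h2
  · obtain ⟨z, hz, hzq, hzp, hzu⟩ := exN p
    have e1 := see2 z hz hzq hzu c (hsee z hz hzp).1
    have e2 := see2 z hz hzq hzu d (hsee z hz hzp).2
    by_cases hpw : w = p
    · subst hpw
      have e3 := seeq c (hsee q hq (Ne.symm hwq)).1
      have e4 := seeq d (hsee q hq (Ne.symm hwq)).2
      grind
    · have e3 := see1 w hw hwq hwu' c (hsee w hw hpw).1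
      have e4 := see1 w hw hwq hwu' d (hsee w hw hpw).2
      grind

theorem exists_full (hb : Base G k) (hQ : Clq G Q) (hk : Q.card = k) (hP : P.card = k)
    (hno : ∀ W : Finset V, W.card = k + 1 → ¬ Clq G W) (hφ : Col G Q P φ) :
    ∃ c ∈ P, Full G Q φ c := by
  rcases hall_k hb hQ hk hP hφ with h | ⟨q, hq, c, hc, d, hd, hcd, hsee⟩
  · exact h
  by_contra hnf
  push Not at hnf
  obtain ⟨n1, u, hu, huc, hu1⟩ := typeII_aux hb hQ hk hP hφ hnf hq hc hd hcd hsee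
  obtain ⟨n2, v, hv, hvd, hv1⟩ := typeII_aux hb hQ hk hP hφ hnf hq hd hc hcd.symm
    (fun z hz h => (hsee z hz h).symm)
  have huv : u ≠ v := by rintro rfl; exact hcd (huc.symm.trans hvd)
  have hK : Clq G (Q.erase q) := fun a ha b hb hab =>
    hQ a (mem_of_mem_erase ha) b (mem_of_mem_erase hb) hab
  have hnuv : ¬ G.Adj u v := by
    intro h
    have hv' : v ∉ Q.erase q := fun h => hv (mem_of_mem_erase h)
    have hu' : u ∉ insert v (Q.erase q) := by
      rw [mem_insert]; rintro (h | h); exacts [huv h, hu (mem_of_mem_erase h)]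
    refine hno (insert u (insert v (Q.erase q))) ?_ ?_
    · rw [card_insert_of_notMem hu', card_insert_of_notMem hv', card_erase_of_mem hq]
      have := hb.k8; omega
    · intro a ha b hb' hab
      simp only [mem_insert, mem_erase] at ha hb'
      have hs := h.symm
      rcases ha with rfl | rfl | ha <;> rcases hb' with rfl | rfl | hb'
      · exact absurd rfl hab
      · exact h
      · exact hu1 _ hb'.2 hb'.1
      · exact hs
      · exact absurd rfl hab
      · exact hv1 _ hb'.2 hb'.1
      · exact (hu1 _ ha.2 ha.1).symm
      · exact (hv1 _ ha.2 ha.1).symm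
      · exact hQ a ha.2 b hb'.2 hab
  refine TL hb hK (by rw [card_erase_of_mem hq]; omega) (a := q) (b := u) (c := v)
    (by rintro rfl; exact hu hq) (by rintro rfl; exact hv hq) huv
    (fun h => n1 ⟨u, hu, h, huc⟩) (fun h => n2 ⟨v, hv, h, hvd⟩) hnuv
    (fun z hz => hQ q hq z (mem_of_mem_erase hz) (ne_of_mem_erase hz).symm)
    (fun z hz => hu1 z (mem_of_mem_erase hz) (ne_of_mem_erase hz))
    (fun z hz => hv1 z (mem_of_mem_erase hz) (ne_of_mem_erase hz))
    (Or.inl (by rw [card_erase_of_mem hq]; omega))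

theorem disjpair (hb : Base G k) (hk : 8 ≤ Q.card) (hφ : Col G Q P φ) {D : ι}
    (hD : Full G Q φ D) (h3 : ∀ u, u ∉ Q → φ u = D → (nQ G Q u).card ≤ 3) :
    ∃ u v, u ∉ Q ∧ v ∉ Q ∧ φ u = D ∧ φ v = D ∧ u ≠ v ∧ 3 ≤ (nQ G Q u).card ∧
      3 ≤ (nQ G Q v).card ∧ ∀ z ∈ Q, G.Adj z u → ¬ G.Adj z v := by
  have hD3 := cls_le hb hφ D
  obtain ⟨u, hu, hu3⟩ := cover_big (G := G) (K := Q) (D := cls Q φ D) (by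
      intro z hz
      obtain ⟨v, h1, h2, h3⟩ := hD z hz
      exact ⟨v, mem_cls.2 ⟨h1, h3⟩, h2.symm⟩) 2 (by omega)
  have hu' := mem_cls.1 hu
  have hcu := h3 u hu'.1 hu'.2
  have hsub : nQ G Q u ⊆ Q := filter_subset _ _
  obtain ⟨v, hv, hv3⟩ := cover_big (G := G) (K := Q \ nQ G Q u) (D := (cls Q φ D).erase u) (by
      intro z hz
      rw [mem_sdiff, mem_nQ] at hz
      obtain ⟨v, h1, h2, h3⟩ := hD z hz.1
      refine ⟨v, mem_erase.2 ⟨?_, mem_cls.2 ⟨h1, h3⟩⟩, h2.symm⟩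
      rintro rfl; exact hz.2 ⟨hz.1, h2.symm⟩) 2 (by
        rw [card_erase_of_mem hu, card_sdiff_of_subset hsub]; omega)
  rw [mem_erase, mem_cls] at hv
  have hcv := h3 v hv.2.1 hv.2.2
  have hss : nQ G (Q \ nQ G Q u) v ⊆ nQ G Q v := nQ_mono sdiff_subset v
  have heq := eq_of_subset_of_card_le hss (by omega)
  refine ⟨u, v, hu'.1, hv.2.1, hu'.2, hv.2.2, hv.1.symm, hu3, ?_, ?_⟩
  · rw [← heq]; exact hv3
  · intro z hz h1 h2
    have : z ∈ nQ G Q v := mem_nQ.2 ⟨hz, h2.symm⟩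
    rw [← heq, mem_nQ, mem_sdiff] at this
    exact this.1.2 (mem_nQ.2 ⟨hz, h1.symm⟩)

end
end BK

namespace BK
section
open Classical
set_option linter.unusedSectionVars false

variable {V : Type*} [Fintype V] {G : SimpleGraph V} {k : ℕ} {ι : Type*} {P : Finset ι}
  {Q : Finset V} {φ : V → ι}

theorem exQ {u : V} {n : ℕ} (h : n + 1 ≤ (nQ G Q u).card) : ∃ z ∈ Q, G.Adj z u := by
  obtain ⟨z, hz⟩ := card_pos.1 (show 0 < (nQ G Q u).card by omega)
  rw [mem_nQ] at hz
  exact ⟨z, hz.1, hz.2.symm⟩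

theorem sat_false (hb : Base G k) (hQ : Clq G Q) (hk : Q.card = k) (hP : P.card = k)
    (hno : ∀ W : Finset V, W.card = k + 1 → ¬ Clq G W) (hφ : Col G Q P φ)
    {D L : ι} (hDL : D ≠ L) (hD : Full G Q φ D) (hL : Full G Q φ L) : False := by
  have k8 := hb.k8
  have hno' : ∀ W : Finset V, W.card = Q.card + 1 → ¬ Clq G W := by rw [hk]; exact hno
  have only : ∀ z ∈ Q, ∀ v, v ∉ Q → G.Adj z v → φ v = D ∨ φ v = L := fun z hz v hv hzv =>
    sees3 hb hQ hk hz (hD z hz) (hL z hz) ⟨v, hv, hzv, rfl⟩ hDL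
  have uniD : ∀ z ∈ Q, ∀ u v, u ∉ Q → v ∉ Q → G.Adj z u → G.Adj z v → φ u = D → φ v = D → u = v := by
    intro z hz u v hu hv h1 h2 h3 h4
    obtain ⟨l, l1, l2, l3⟩ := hL z hz
    by_contra hne
    rcases out2 hb hQ hk hz hu h1 hv h2 l1 l2 hne with rfl | rfl
    · exact hDL (h3.symm.trans l3)
    · exact hDL (h4.symm.trans l3)
  have uniL : ∀ z ∈ Q, ∀ u v, u ∉ Q → v ∉ Q → G.Adj z u → G.Adj z v → φ u = L → φ v = L → u = v := by
    intro z hz u v hu hv h1 h2 h3 h4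
    obtain ⟨l, l1, l2, l3⟩ := hD z hz
    by_contra hne
    rcases out2 hb hQ hk hz hu h1 hv h2 l1 l2 hne with rfl | rfl
    · exact hDL (l3.symm.trans h3)
    · exact hDL (l3.symm.trans h4)
  -- find u
  obtain ⟨u, hu, huD, hu3, C, hC, hCL, hfree⟩ : ∃ u, u ∉ Q ∧ φ u = D ∧ 3 ≤ (nQ G Q u).card ∧
      ∃ C ∈ P, C ≠ L ∧ Free G Q φ u C := by
    by_cases h4 : ∃ u, u ∉ Q ∧ φ u = D ∧ 4 ≤ (nQ G Q u).card
    · obtain ⟨u, hu, huD, h⟩ := h4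
      exact ⟨u, hu, huD, by omega, free_avoid hb hP hφ hu h L⟩
    push Not at h4
    obtain ⟨u, v, hu, hv, huD, hvD, huv, hu3, hv3, -⟩ := disjpair hb (by omega) hφ hD
      (fun u h1 h2 => by have := h4 u h1 h2; omega)
    obtain ⟨C, hC, hf⟩ := free_one hb hP hφ hu hu3
    obtain ⟨C', hC', hf'⟩ := free_one hb hP hφ hv hv3
    by_cases h1 : C = L
    · by_cases h2 : C' = L
      · exfalso
        subst h1; subst h2
        obtain ⟨z, hz⟩ : Q.Nonempty := by rw [← card_pos]; omega
        obtain ⟨l, l1, l2, l3⟩ := hL z hz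
        obtain ⟨w, hw, hwl⟩ := not_compl hQ hno' l1
        obtain ⟨m, m1, m2, m3⟩ := hL w hw
        refine hb.alpha u v l m huv ?_ ?_ ?_ ?_ ?_ ?_ ?_ ?_ ?_ ?_ ?_
        · rintro rfl; exact hDL (huD.symm.trans l3)
        · rintro rfl; exact hDL (huD.symm.trans m3)
        · rintro rfl; exact hDL (hvD.symm.trans l3)
        · rintro rfl; exact hDL (hvD.symm.trans m3)
        · rintro rfl; exact hwl m2
        · intro h; exact hφ.proper u v hu hv h (huD.trans hvD.symm)
        · intro h; exact hf.2 l l1 h l3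
        · intro h; exact hf.2 m m1 h m3
        · intro h; exact hf'.2 l l1 h l3
        · intro h; exact hf'.2 m m1 h m3
        · intro h; exact hφ.proper l m l1 m1 h (l3.trans m3.symm)
      · exact ⟨v, hv, hvD, hv3, C', hC', h2, hf'⟩
    · exact ⟨u, hu, huD, hu3, C, hC, h1, hf⟩
  have hCD : C ≠ D := huD ▸ hfree.1
  have hφ' := hφ.move hC hfree
  set ψ := Function.update φ u C with hψ
  have hψu : ψ u = C := by simp [hψ]
  have hψo : ∀ v, v ≠ u → ψ v = φ v := fun v hv => by simp [hψ, hv]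
  obtain ⟨zu, hzu, hzu'⟩ := exQ (n := 2) hu3
  obtain ⟨wu, hwu, hwu'⟩ := not_compl hQ hno' hu
  have key : ∀ l, l ∉ Q → φ l = L → 3 ≤ (nQ G Q l).card → ∀ E ∈ P, Free G Q ψ l E →
      (E = D ∧ ∀ z ∈ Q, G.Adj z u → G.Adj z l) ∨ (E = C ∧ ∀ z ∈ Q, G.Adj z u ∨ G.Adj z l) := by
    intro l hl hlL hl3 E hE hfE
    have hlu : l ≠ u := by rintro rfl; exact hDL (huD.symm.trans hlL)
    have hEL : E ≠ L := by have := hfE.1; rwa [hψo l hlu, hlL] at this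
    obtain ⟨zl, hzl, hzl'⟩ := exQ (n := 2) hl3
    obtain ⟨wl, hwl, hwl'⟩ := not_compl hQ hno' hl
    obtain ⟨F, hF, hfull⟩ := exists_full hb hQ hk hP hno (hφ'.move hE hfE)
    have hs : ∀ z ∈ Q, (∃ v, v ∉ Q ∧ v ≠ l ∧ v ≠ u ∧ G.Adj z v ∧ φ v = F) ∨ (F = C ∧ G.Adj z u) ∨
        (F = E ∧ G.Adj z l) := by
      intro z hz
      have := hfull z hz
      rw [sees_move] at this
      rcases this with ⟨v, h1, h2, h3, h4⟩ | ⟨-, h1, h2⟩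
      · by_cases h : v = u
        · subst h; rw [hψu] at h4; exact Or.inr (Or.inl ⟨h4.symm, h3⟩)
        · rw [hψo v h] at h4; exact Or.inl ⟨v, h1, h2, h, h3, h4⟩
      · exact Or.inr (Or.inr ⟨h1, h2⟩)
    have hs' : ∀ z ∈ Q, (F = D ∧ ¬ G.Adj z u) ∨ (F = L ∧ ¬ G.Adj z l) ∨ (F = C ∧ G.Adj z u) ∨
        (F = E ∧ G.Adj z l) := by
      intro z hz
      rcases hs z hz with ⟨v, h1, h2, h3, h4, h5⟩ | h
      · rcases only z hz v h1 h4 with h6 | h6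
        · exact Or.inl ⟨h5.symm.trans h6, fun h => h3 (uniD z hz v u h1 hu h4 h h6 huD)⟩
        · exact Or.inr (Or.inl ⟨h5.symm.trans h6, fun h => h2 (uniL z hz v l h1 hl h4 h h6 hlL)⟩)
      · exact Or.inr (Or.inr h)
    have a1 := hs' zl hzl
    have a2 := hs' zu hzu
    have a3 := hs' wl hwl
    have a4 := hs' wu hwu
    by_cases hED : E = D
    · left
      refine ⟨hED, fun z hz h => ?_⟩
      have := hs' z hz
      grind
    · right
      by_cases hEC : E = C
      · refine ⟨hEC, fun z hz => ?_⟩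
        have := hs' z hz
        grind
      · exfalso
        grind
  by_cases h4 : ∃ l, l ∉ Q ∧ φ l = L ∧ 4 ≤ (nQ G Q l).card
  · obtain ⟨l, hl, hlL, h4⟩ := h4
    obtain ⟨E, hE, E', hE', hne, f1, f2⟩ := free_two hb hP hφ' hl h4
    obtain ⟨wl, hwl, hwl'⟩ := not_compl hQ hno' hl
    rcases key l hl hlL (by omega) E hE f1 with ⟨e1, g1⟩ | ⟨e1, g1⟩ <;>
    rcases key l hl hlL (by omega) E' hE' f2 with ⟨e2, g2⟩ | ⟨e2, g2⟩
    · exact hne (e1.trans e2.symm)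
    · have := g1 wl hwl; have := g2 wl hwl; tauto
    · have := g1 wl hwl; have := g2 wl hwl; tauto
    · exact hne (e1.trans e2.symm)
  · push Not at h4
    have h4' : ∀ u, u ∉ Q → φ u = L → (nQ G Q u).card ≤ 3 :=
      fun u h1 h2 => by have := h4 u h1 h2; omega
    obtain ⟨l, m, hl, hm, hlL, hmL, hlm, hl3, hm3, hdis⟩ := disjpair hb (by omega) hφ hL h4'
    obtain ⟨E, hE, f1⟩ := free_one hb hP hφ' hl hl3
    obtain ⟨E', hE', f2⟩ := free_one hb hP hφ' hm hm3
    have mixed : ∀ l m, l ∉ Q → m ∉ Q → φ l = L → φ m = L →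
        (∀ z ∈ Q, G.Adj z u → G.Adj z l) → (∀ z ∈ Q, G.Adj z u ∨ G.Adj z m) → False := by
      intro l m hl hm hlL hmL g1 g2
      have hsub : Q ⊆ nQ G Q l ∪ nQ G Q m := by
        intro z hz
        rw [mem_union, mem_nQ, mem_nQ]
        rcases g2 z hz with h | h
        · exact Or.inl ⟨hz, (g1 z hz h).symm⟩
        · exact Or.inr ⟨hz, h.symm⟩
      have := (card_le_card hsub).trans (card_union_le _ _)
      have := h4' l hl hlL
      have := h4' m hm hmL
      omega
    rcases key l hl hlL hl3 E hE f1 with ⟨e1, g1⟩ | ⟨e1, g1⟩ <;>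
    rcases key m hm hmL hm3 E' hE' f2 with ⟨e2, g2⟩ | ⟨e2, g2⟩
    · exact hdis zu hzu (g1 zu hzu hzu') (g2 zu hzu hzu')
    · exact mixed l m hl hm hlL hmL g1 g2
    · exact mixed m l hm hl hmL hlL g2 g1
    · have := g1 wu hwu; have := g2 wu hwu; have := hdis wu hwu; tauto

theorem full_false (hb : Base G k) (hQ : Clq G Q) (hk : Q.card = k) (hP : P.card = k)
    (hno : ∀ W : Finset V, W.card = k + 1 → ¬ Clq G W) : ∀ n : ℕ, ∀ (φ : V → ι), Col G Q P φ →
    ∀ D, Full G Q φ D → (cls Q φ D).card = n → False := by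
  intro n
  induction n using Nat.strong_induction_on with
  | _ n ih =>
  intro φ hφ D hD hn
  have k8 := hb.k8
  have hno' : ∀ W : Finset V, W.card = Q.card + 1 → ¬ Clq G W := by rw [hk]; exact hno
  have only : ∀ L, Full G Q φ L → L = D := by
    intro L hL
    by_contra h
    exact sat_false hb hQ hk hP hno hφ (Ne.symm h) hD hL
  have key : ∀ u, u ∉ Q → φ u = D → ∀ C ∈ P, Free G Q φ u C →
      ∀ z ∈ Q, ¬ G.Adj z u → Sees G Q φ z C := by
    intro u hu huD C hC hf
    obtain ⟨F, hF, hfull⟩ := exists_full hb hQ hk hP hno (hφ.move hC hf)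
    have hCD : C ≠ D := huD ▸ hf.1
    by_cases hFC : F = C
    · subst hFC
      intro z hz hzu
      have := hfull z hz
      rw [sees_move] at this
      rcases this with ⟨v, h1, h2, h3, h4⟩ | ⟨-, h1, h2⟩
      · exact ⟨v, h1, h3, h4⟩
      · exact absurd h2 hzu
    · exfalso
      have hFφ : Full G Q φ F := by
        intro z hz
        have := hfull z hz
        rw [sees_move] at this
        rcases this with ⟨v, h1, h2, h3, h4⟩ | ⟨-, h1, h2⟩
        · exact ⟨v, h1, h3, h4⟩
        · exact absurd h1 hFC
      have hFD := only F hFφ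
      subst hFD
      refine ih _ ?_ _ (hφ.move hC hf) F hfull rfl
      rw [← hn]
      apply card_lt_card
      refine ⟨?_, ?_⟩
      · intro v hv
        rw [mem_cls] at hv ⊢
        refine ⟨hv.1, ?_⟩
        by_cases h : v = u
        · subst h; exact huD
        · rw [← hv.2]; simp [h]
      · intro hsub
        have := hsub (mem_cls.2 ⟨hu, huD⟩)
        rw [mem_cls] at this
        simp at this
        exact hFC this.2.symm
  have h3 : ∀ u, u ∉ Q → φ u = D → (nQ G Q u).card ≤ 3 := by
    intro u hu huD
    by_contra h
    obtain ⟨E, hE, E', hE', hne, f1, f2⟩ := free_two hb hP hφ hu (by omega)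
    obtain ⟨w, hw, hwu⟩ := not_compl hQ hno' hu
    have a1 := key u hu huD E hE f1 w hw hwu
    have a2 := key u hu huD E' hE' f2 w hw hwu
    have := f1.1
    have := f2.1
    rcases sees3 hb hQ hk hw a1 a2 (hD w hw) hne with h | h <;> subst h <;> tauto
  obtain ⟨u, v, hu, hv, huD, hvD, huv, hu3, hv3, hdis⟩ := disjpair hb (by omega) hφ hD h3
  obtain ⟨E, hE, f1⟩ := free_one hb hP hφ hu hu3
  obtain ⟨E', hE', f2⟩ := free_one hb hP hφ hv hv3
  have hED : E ≠ D := huD ▸ f1.1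
  have hED' : E' ≠ D := hvD ▸ f2.1
  have heq : E = E' := by
    by_contra hne
    have hsub : Q ⊆ nQ G Q u ∪ nQ G Q v := by
      intro z hz
      rw [mem_union, mem_nQ, mem_nQ]
      by_contra hcon
      push Not at hcon
      have a1 := key u hu huD E hE f1 z hz (fun h => hcon.1 hz h.symm)
      have a2 := key v hv hvD E' hE' f2 z hz (fun h => hcon.2 hz h.symm)
      rcases sees3 hb hQ hk hz a1 a2 (hD z hz) hne with h | h
      · exact hED h.symm
      · exact hED' h.symm
    have := (card_le_card hsub).trans (card_union_le _ _)
    have := h3 u hu huD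
    have := h3 v hv hvD
    omega
  subst heq
  apply hED
  apply only
  intro z hz
  by_cases h : G.Adj z u
  · exact key v hv hvD E hE' f2 z hz (hdis z hz h)
  · exact key u hu huD E hE f1 z hz h

/-- restriction of a vertex-critical colouring -/
theorem crit_col (hb : Base G k) {q : V} (hq : q ∈ Q) :
    ∃ φ : V → Fin k, Col G Q (univ : Finset (Fin k)) φ := by
  obtain ⟨c, hc⟩ := hb.crit q
  refine ⟨c, ⟨fun u v hu hv h => hc u v ?_ ?_ h, fun v _ => mem_univ _⟩⟩
  · rintro rfl; exact hu hq
  · rintro rfl; exact hv hq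

theorem W1 (hb : Base G k) (hno : ∀ W : Finset V, W.card = k + 1 → ¬ Clq G W) :
    ∀ Q : Finset V, Q.card = k → ¬ Clq G Q := by
  intro Q hk hQ
  have k8 := hb.k8
  obtain ⟨q, hq⟩ : Q.Nonempty := by rw [← card_pos]; omega
  obtain ⟨φ, hφ⟩ := crit_col hb hq
  obtain ⟨F, hF, hfull⟩ := exists_full hb hQ hk (by simp) hno hφ
  exact full_false hb hQ hk (by simp) hno _ φ hφ F hfull rfl

end
end BK

namespace BK
section
open Classical
set_option linter.unusedSectionVars false

variable {V : Type*} [Fintype V] {G : SimpleGraph V} {k : ℕ} {ι : Type*} {P : Finset ι}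
  {Q : Finset V} {φ : V → ι}

theorem hall_B (hb : Base G k) (hQ : Clq G Q) (hP : P.card = k) (B : Finset ι)
    (hk : Q.card + B.card = k) (hφ : Col G Q P φ) : (∃ c ∈ P, c ∉ B ∧ Full G Q φ c) ∨
    ∃ q ∈ Q, ∃ c ∈ P, ∃ d ∈ P, c ∉ B ∧ d ∉ B ∧ c ≠ d ∧
      ∀ z ∈ Q, z ≠ q → Sees G Q φ z c ∧ Sees G Q φ z d := by
  obtain ⟨S, hS, h1, h2⟩ := hall hb hQ hP hφ
  have hsd := le_card_sdiff B (P.filter (fun c => ∀ z ∈ S, Sees G Q φ z c))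
  by_cases h : S = Q
  · subst h
    left
    obtain ⟨c, hc⟩ := card_pos.1 (show 0 < (P.filter (fun c => ∀ z ∈ S, Sees G S φ z c) \ B).card by omega)
    rw [mem_sdiff] at hc
    exact ⟨c, (mem_filter.1 hc.1).1, hc.2, (mem_filter.1 hc.1).2⟩
  · right
    have hlt := card_lt_card (ssubset_of_subset_of_ne hS h)
    obtain ⟨q, hq⟩ : ∃ q, q ∈ Q \ S := by
      apply card_pos.1; rw [card_sdiff_of_subset hS]; omega
    rw [mem_sdiff] at hq
    have hSe : S = Q.erase q := by
      apply eq_of_subset_of_card_le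
      · intro z hz; rw [mem_erase]; exact ⟨by rintro rfl; exact hq.2 hz, hS hz⟩
      · rw [card_erase_of_mem hq.1]; omega
    obtain ⟨c, hc, d, hd, hne⟩ :=
      one_lt_card.1 (show 1 < (P.filter (fun c => ∀ z ∈ S, Sees G Q φ z c) \ B).card by omega)
    rw [mem_sdiff] at hc hd
    refine ⟨q, hq.1, c, (mem_filter.1 hc.1).1, d, (mem_filter.1 hd.1).1, hc.2, hd.2, hne,
      fun z hz hzq => ?_⟩
    have : z ∈ S := by rw [hSe, mem_erase]; exact ⟨hzq, hz⟩
    exact ⟨(mem_filter.1 hc.1).2 z this, (mem_filter.1 hd.1).2 z this⟩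

/-- data for the doubly-dominating case -/
structure DD (G : SimpleGraph V) (k : ℕ) (Q : Finset V) (P : Finset ι) (φ : V → ι)
    (B : Finset ι) (d j : ι) (r : V) : Prop where
  base : Base G k
  clq : Clq G Q
  hP : P.card = k
  col : Col G Q P φ
  card : Q.card + B.card = k
  B2 : B.card ≤ 2
  dB : d ∉ B
  jB : j ∉ B
  jd : j ≠ d
  jP : j ∈ P
  dd : ∀ z ∈ Q, ∃ u v, u ≠ v ∧ u ∉ Q ∧ v ∉ Q ∧ G.Adj z u ∧ G.Adj z v ∧ φ u = d ∧ φ v = d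
  fB : ∀ b ∈ B, Full G Q φ b
  jr : ∀ v, v ∉ Q → φ v = j → v = r
  rd : ∀ u v, u ∉ Q → v ∉ Q → φ u = d → φ v = d → G.Adj u r → G.Adj v r → u = v
  rb : B.card = 2 → ∀ b ∈ B, (cls Q φ b).card = 3 → ∃ u, u ∉ Q ∧ φ u = b ∧ ¬ G.Adj u r
  no : ∀ W : Finset V, W.card = k → ¬ Clq G W

theorem DD.count {B : Finset ι} {d j : ι} {r : V} (h : DD G k Q P φ B d j r) {z : V}
    (hz : z ∈ Q) : ((nO G Q z).filter (fun v => φ v = d)).card = 2 ∧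
    ((nO G Q z).filter (fun v => φ v ≠ d)).image φ = B ∧
    Set.InjOn φ ((nO G Q z).filter (fun v => φ v ≠ d) : Finset V) := by
  have h0 := nO_clq h.base h.clq hz
  have hc := h.card
  have h1 := card_filter_add_card_filter_not (s := nO G Q z) (fun v => φ v = d)
  have h2 : 2 ≤ ((nO G Q z).filter (fun v => φ v = d)).card := by
    obtain ⟨u, v, huv, hu, hv, a1, a2, a3, a4⟩ := h.dd z hz
    rw [← card_pair huv]
    apply card_le_card
    intro w hw
    rw [mem_insert, mem_singleton] at hw
    rw [mem_filter, mem_nO]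
    rcases hw with rfl | rfl
    · exact ⟨⟨hu, a1⟩, a3⟩
    · exact ⟨⟨hv, a2⟩, a4⟩
  have h3 : B ⊆ ((nO G Q z).filter (fun v => φ v ≠ d)).image φ := by
    intro b hbB
    obtain ⟨v, v1, v2, v3⟩ := h.fB b hbB z hz
    refine mem_image.2 ⟨v, mem_filter.2 ⟨mem_nO.2 ⟨v1, v2⟩, ?_⟩, v3⟩
    rw [v3]; rintro rfl; exact h.dB hbB
  have h4 := card_le_card h3
  have h5 : (((nO G Q z).filter (fun v => φ v ≠ d)).image φ).card ≤
    ((nO G Q z).filter (fun v => φ v ≠ d)).card := card_image_le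
  have h6 : (filter (fun a => ¬ φ a = d) (nO G Q z)).card =
    ((nO G Q z).filter (fun v => φ v ≠ d)).card := rfl
  rw [h6] at h1
  refine ⟨by omega, (eq_of_subset_of_card_le h3 (by omega)).symm, ?_⟩
  rw [← card_image_iff]
  omega

theorem DD.only {B : Finset ι} {d j : ι} {r : V} (h : DD G k Q P φ B d j r) {z v : V}
    (hz : z ∈ Q) (hv : v ∉ Q) (hzv : G.Adj z v) : φ v = d ∨ φ v ∈ B := by
  by_cases e : φ v = d
  · exact Or.inl e
  · right
    rw [← (h.count hz).2.1]
    exact mem_image_of_mem _ (mem_filter.2 ⟨mem_nO.2 ⟨hv, hzv⟩, e⟩)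

theorem DD.uni {B : Finset ι} {d j : ι} {r : V} (h : DD G k Q P φ B d j r) {z v w : V}
    (hz : z ∈ Q) (hv : v ∉ Q) (hzv : G.Adj z v) (hw : w ∉ Q) (hzw : G.Adj z w) (he : φ v = φ w)
    (hB : φ v ∈ B) : v = w := by
  have hd : φ v ≠ d := fun e => h.dB (e ▸ hB)
  apply (h.count hz).2.2 _ _ he
  · exact mem_coe.2 (mem_filter.2 ⟨mem_nO.2 ⟨hv, hzv⟩, hd⟩)
  · exact mem_coe.2 (mem_filter.2 ⟨mem_nO.2 ⟨hw, hzw⟩, he ▸ hd⟩)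

theorem DD.step {B : Finset ι} {d j : ι} {r : V} (h : DD G k Q P φ B d j r) {u v w : V}
    (hnc : ∀ x, x ∉ Q → φ x = d → ∃ z ∈ Q, ¬ G.Adj z x)
    (hu : u ∉ Q) (hv : v ∉ Q) (hw : w ∉ Q) (huv : u ≠ v) (hud : φ u = d) (hvd : φ v = d)
    (hwd : φ w = d) (hall3 : ∀ x, x ∉ Q → φ x = d → x = u ∨ x = v ∨ x = w)
    (hur : ¬ G.Adj u r) (hv4 : 4 ≤ (nQ G Q v).card) : False := by
  have hf1 : Free G Q φ u j := ⟨by rw [hud]; exact h.jd, fun x hx hux e => by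
    rw [h.jr x hx e] at hux; exact hur hux⟩
  have hφ1 := h.col.move h.jP hf1
  obtain ⟨C, hC, hCj, hf2⟩ := free_avoid h.base h.hP hφ1 hv hv4 j
  have hCd : C ≠ d := by have := hf2.1; rwa [Function.update_of_ne huv.symm, hvd] at this
  have hs : ∀ z ∈ Q, ∀ e, e ∉ B → Sees G Q (Function.update (Function.update φ u j) v C) z e →
      (e = d ∧ G.Adj z w) ∨ (e = j ∧ G.Adj z u) ∨ (e = C ∧ G.Adj z v) := by
    intro z hz e heB he
    rw [sees_move] at he
    rcases he with ⟨x, h1, h2, h3, h4⟩ | ⟨-, h1, h2⟩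
    · by_cases hxu : x = u
      · subst hxu; simp at h4; exact Or.inr (Or.inl ⟨h4.symm, h3⟩)
      · rw [Function.update_of_ne hxu] at h4
        rcases h.only hz h1 h3 with h5 | h5
        · rcases hall3 x h1 h5 with rfl | rfl | rfl
          · exact absurd rfl hxu
          · exact absurd rfl h2
          · exact Or.inl ⟨h4.symm.trans h5, h3⟩
        · rw [h4] at h5; exact absurd h5 heB
    · exact Or.inr (Or.inr ⟨h1, h2⟩)
  have jd := h.jd
  have two : ∀ z ∈ Q, (G.Adj z u ∧ G.Adj z v) ∨ (G.Adj z u ∧ G.Adj z w) ∨ (G.Adj z v ∧ G.Adj z w) := by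
    intro z hz
    obtain ⟨x, y, hxy, hx, hy, a1, a2, a3, a4⟩ := h.dd z hz
    have b1 := hall3 x hx a3
    have b2 := hall3 y hy a4
    clear hs hall3 hnc hf1 hf2
    rcases b1 with rfl | rfl | rfl <;> rcases b2 with rfl | rfl | rfl <;> tauto
  obtain ⟨zu, zu1, zu2⟩ := hnc u hu hud
  obtain ⟨zv, zv1, zv2⟩ := hnc v hv hvd
  obtain ⟨zw, zw1, zw2⟩ := hnc w hw hwd
  rcases hall_B h.base h.clq h.hP B h.card (hφ1.move hC hf2) with ⟨c, hc, hcB, hfull⟩ |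
    ⟨q, hq, c, hc, e, he, hcB, heB, hce, hsee⟩
  · have a1 := hs zu zu1 c hcB (hfull zu zu1)
    have a2 := hs zv zv1 c hcB (hfull zv zv1)
    have a3 := hs zw zw1 c hcB (hfull zw zw1)
    grind
  · have a : ∀ z ∈ Q, z ≠ q → _ := fun z hz hzq => hs z hz c hcB (hsee z hz hzq).1
    have b : ∀ z ∈ Q, z ≠ q → _ := fun z hz hzq => hs z hz e heB (hsee z hz hzq).2
    have t := two q hq
    have a1 := a zu zu1
    have a2 := a zv zv1
    have a3 := a zw zw1
    have b1 := b zu zu1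
    have b2 := b zv zv1
    have b3 := b zw zw1
    clear a b hs hsee two hnc hall3
    by_cases e1 : zu = q <;> by_cases e2 : zv = q <;> by_cases e3 : zw = q <;> grind

theorem DD.compl_d {B : Finset ι} {d j : ι} {r : V} (h : DD G k Q P φ B d j r) :
    ∃ x, x ∉ Q ∧ φ x = d ∧ ∀ z ∈ Q, G.Adj x z := by
  by_contra hcon
  have hnc : ∀ x, x ∉ Q → φ x = d → ∃ z ∈ Q, ¬ G.Adj z x := by
    push Not at hcon
    intro x hx hxd
    obtain ⟨z, hz, hh⟩ := hcon x hx hxd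
    exact ⟨z, hz, fun e => hh e.symm⟩
  clear hcon
  have hc := h.card
  have hB2 := h.B2
  have k8 := h.base.k8
  obtain ⟨z, hz⟩ : Q.Nonempty := by rw [← card_pos]; omega
  obtain ⟨u, -, -, hu, -, -, -, hud, -⟩ := h.dd z hz
  obtain ⟨z', hz', hzu⟩ := hnc u hu hud
  obtain ⟨v, w, hvw, hv, hw, av, aw, hvd, hwd⟩ := h.dd z' hz'
  have huv : u ≠ v := by rintro rfl; exact hzu av
  have huw : u ≠ w := by rintro rfl; exact hzu aw
  have hall3 : ∀ x, x ∉ Q → φ x = d → x = u ∨ x = v ∨ x = w := by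
    have h3 := cls_le h.base h.col d
    have : ({u, v, w} : Finset V) ⊆ cls Q φ d := by
      intro x hx
      simp only [mem_insert, mem_singleton] at hx
      rw [mem_cls]
      rcases hx with rfl | rfl | rfl <;> constructor <;> assumption
    have heq := eq_of_subset_of_card_le this (by
      rw [card_eq_three.2 ⟨u, v, w, huv, huw, hvw, rfl⟩]; exact h3)
    intro x hx hxd
    have : x ∈ cls Q φ d := mem_cls.2 ⟨hx, hxd⟩
    rw [← heq] at this
    simpa using this
  have main : ∀ x y t : V, x ∉ Q → y ∉ Q → t ∉ Q → x ≠ y → φ x = d → φ y = d →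
      φ t = d → (∀ s, s ∉ Q → φ s = d → s = x ∨ s = y ∨ s = t) → ¬ G.Adj x r → ¬ G.Adj y r →
      False := by
    intro x y t hx hy ht hxy hxd hyd htd hall hxr hyr
    have hsub : Q ⊆ nQ G Q x ∪ nQ G Q y := by
      intro z hz
      obtain ⟨a, b, hab, ha, hb, a1, a2, a3, a4⟩ := h.dd z hz
      have := hall a ha a3
      have := hall b hb a4
      have a1' := a1.symm
      have a2' := a2.symm
      rw [mem_union, mem_nQ, mem_nQ]
      grind
    obtain ⟨zt, hzt, hzt'⟩ := hnc t ht htd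
    have hin : zt ∈ nQ G Q x ∩ nQ G Q y := by
      obtain ⟨a, b, hab, ha, hb, a1, a2, a3, a4⟩ := h.dd zt hzt
      have := hall a ha a3
      have := hall b hb a4
      have a1' := a1.symm
      have a2' := a2.symm
      rw [mem_inter, mem_nQ, mem_nQ]
      grind
    have h1 := card_le_card hsub
    have h2 := card_pos.2 ⟨zt, hin⟩
    have h3 := card_union_add_card_inter (nQ G Q x) (nQ G Q y)
    rcases Nat.lt_or_ge 3 (nQ G Q y).card with h4 | h4
    · exact h.step hnc hx hy ht hxy hxd hyd htd hall hxr h4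
    · exact h.step hnc hy hx ht hxy.symm hyd hxd htd
        (fun s h1 h2 => by rcases hall s h1 h2 with h | h | h <;> tauto) hyr (by omega)
  have rd := h.rd
  by_cases hur : G.Adj u r
  · exact main v w u hv hw hu hvw hvd hwd hud (fun s h1 h2 => by have := hall3 s h1 h2; tauto)
      (fun e => huv (rd u v hu hv hud hvd hur e)) (fun e => huw (rd u w hu hw hud hwd hur e))
  · by_cases hvr : G.Adj v r
    · exact main u w v hu hw hv huw hud hwd hvd (fun s h1 h2 => by have := hall3 s h1 h2; tauto)
        hur (fun e => hvw (rd v w hv hw hvd hwd hvr e))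
    · exact main u v w hu hv hw huv hud hvd hwd hall3 hur hvr

theorem DD.letter {B : Finset ι} {d j : ι} {r : V} (h : DD G k Q P φ B d j r) {b C : ι}
    (hbB : b ∈ B) (hC : C ∈ P) {u : V} (hu : u ∉ Q) (hub : φ u = b) (hf : Free G Q φ u C)
    (hne : ∃ z ∈ Q, G.Adj z u) : ∀ z ∈ Q, G.Adj u z := by
  by_contra hcon
  push Not at hcon
  obtain ⟨w, hw, hwu⟩ := hcon
  have hwu' : ¬ G.Adj w u := fun e => hwu e.symm
  obtain ⟨y, hy, hyu⟩ := hne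
  have hCb : C ≠ b := hub ▸ hf.1
  have hcard := h.card
  have hB2 := h.B2
  have k8 := h.base.k8
  have hB' : (insert d (B.erase b)).card = B.card := by
    rw [card_insert_of_notMem (fun e => h.dB (mem_of_mem_erase e)), card_erase_of_mem hbB]
    have := card_pos.2 ⟨b, hbB⟩; omega
  have hs : ∀ z ∈ Q, ∀ e, e ∉ insert d (B.erase b) → Sees G Q (Function.update φ u C) z e →
      (e = b ∧ ¬ G.Adj z u) ∨ (e = C ∧ G.Adj z u) := by
    intro z hz e heB he
    rw [mem_insert, mem_erase, not_or] at heB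
    rw [sees_move] at he
    rcases he with ⟨x, h1, h2, h3, h4⟩ | ⟨-, h1, h2⟩
    · left
      have h5 : e ∈ B := by
        rcases h.only hz h1 h3 with h5 | h5
        · exact absurd (h4.symm.trans h5) heB.1
        · exact h4 ▸ h5
      have h6 : e = b := by by_contra e'; exact heB.2 ⟨e', h5⟩
      refine ⟨h6, fun hzu => h2 (h.uni hz h1 h3 hu hzu ?_ ?_)⟩
      · rw [h4, h6, hub]
      · rw [h4]; exact h5
    · exact Or.inr ⟨h1, h2⟩
  rcases hall_B h.base h.clq h.hP _ (by rw [hB']; exact h.card) (h.col.move hC hf) with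
    ⟨c, hc, hcB, hfull⟩ | ⟨q, hq, c, hc, e, he, hcB, heB, hce, hsee⟩
  · have a1 := hs w hw c hcB (hfull w hw)
    have a2 := hs y hy c hcB (hfull y hy)
    grind
  · obtain ⟨z, hz⟩ := card_pos.1 (show 0 < (Q.erase q).card by
      rw [card_erase_of_mem hq]; omega)
    rw [mem_erase] at hz
    have a1 := hs z hz.2 c hcB (hsee z hz.2 hz.1).1
    have a2 := hs z hz.2 e heB (hsee z hz.2 hz.1).2
    grind

theorem DD.compl_b {B : Finset ι} {d j : ι} {r : V} (h : DD G k Q P φ B d j r) (hB2e : B.card = 2) {b : ι}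
    (hbB : b ∈ B) : ∃ x, x ∉ Q ∧ φ x = b ∧ ∀ z ∈ Q, G.Adj x z := by
  have hcard := h.card
  have hB2 := h.B2
  have k8 := h.base.k8
  by_cases h3 : ∃ u, u ∉ Q ∧ φ u = b ∧ 3 ≤ (nQ G Q u).card
  · obtain ⟨u, hu, hub, h3⟩ := h3
    obtain ⟨C, hC, hf⟩ := free_one h.base h.hP h.col hu h3
    exact ⟨u, hu, hub, h.letter hbB hC hu hub hf (exQ (n := 2) h3)⟩
  exfalso
  push Not at h3
  have hcov : ∀ z ∈ Q, ∃ u ∈ cls Q φ b, G.Adj u z := by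
    intro z hz
    obtain ⟨v, v1, v2, v3⟩ := h.fB b hbB z hz
    exact ⟨v, mem_cls.2 ⟨v1, v3⟩, v2.symm⟩
  have hc3 := cls_le h.base h.col b
  have h2 : ∀ u ∈ cls Q φ b, (nQ G Q u).card ≤ 2 := by
    intro u hu; rw [mem_cls] at hu; have := h3 u hu.1 hu.2; omega
  have h6 := (cover Q _ hcov).trans (sum_le_card_nsmul _ _ 2 h2)
  simp only [smul_eq_mul] at h6
  obtain ⟨u, hu, hub, hur⟩ := h.rb hB2e b hbB (by omega)
  have hf1 : Free G Q φ u j := ⟨by rw [hub]; rintro rfl; exact h.jB hbB, fun x hx hux e => by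
    rw [h.jr x hx e] at hux; exact hur hux⟩
  have hum : u ∈ cls Q φ b := mem_cls.2 ⟨hu, hub⟩
  have hne : ∃ z ∈ Q, G.Adj z u := by
    by_contra hcon
    push Not at hcon
    have : ∀ z ∈ Q, ∃ x ∈ (cls Q φ b).erase u, G.Adj x z := by
      intro z hz
      obtain ⟨x, hx, hxz⟩ := hcov z hz
      refine ⟨x, mem_erase.2 ⟨?_, hx⟩, hxz⟩
      rintro rfl; exact hcon z hz hxz.symm
    have h7 := (cover Q _ this).trans (sum_le_card_nsmul _ _ 2
      (fun x hx => h2 x (mem_of_mem_erase hx)))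
    rw [card_erase_of_mem hum] at h7
    simp only [smul_eq_mul] at h7
    omega
  have hcompl := h.letter hbB h.jP hu hub hf1 hne
  have : nQ G Q u = Q := by
    ext z; rw [mem_nQ]; exact ⟨fun e => e.1, fun e => ⟨e, hcompl z e⟩⟩
  have := h2 u hum
  simp_all
  omega

theorem DD.false {B : Finset ι} {d j : ι} {r : V} (h : DD G k Q P φ B d j r) (hB1 : B.Nonempty) :
    False := by
  have hcard := h.card
  have hB2 := h.B2
  have k8 := h.base.k8
  have hB1' := card_pos.2 hB1
  obtain ⟨x, hx, hxd, hxc⟩ := h.compl_d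
  rcases Nat.lt_or_ge B.card 2 with h1 | h1
  · obtain ⟨z, hz, hzx⟩ := not_compl h.clq (fun W hW => h.no W (by omega)) hx
    exact hzx (hxc z hz).symm
  · obtain ⟨b1, b2, hb12, rfl⟩ := card_eq_two.1 (show B.card = 2 by omega)
    obtain ⟨y, hy, hyb, hyc⟩ := h.compl_b (by omega) (b := b1) (by simp)
    obtain ⟨w, hw, hwb, hwc⟩ := h.compl_b (by omega) (b := b2) (by simp)
    have dB := h.dB
    simp only [mem_insert, mem_singleton, not_or] at dB
    have nadj : ∀ s t : V, s ∉ Q → t ∉ Q → (∀ z ∈ Q, G.Adj s z) → (∀ z ∈ Q, G.Adj t z) →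
        ¬ G.Adj s t := by
      intro s t hs ht hsc htc hst
      have hs' : s ∉ insert t Q := by
        rw [mem_insert]; rintro (e | e); exacts [hst.ne e, hs e]
      refine h.no (insert s (insert t Q)) ?_ ?_
      · rw [card_insert_of_notMem hs', card_insert_of_notMem ht]; omega
      · intro a ha b hb' hab
        have hts := hst.symm
        simp only [mem_insert] at ha hb'
        rcases ha with rfl | rfl | ha <;> rcases hb' with rfl | rfl | hb'
        · exact absurd rfl hab
        · exact hst
        · exact hsc _ hb'
        · exact hts
        · exact absurd rfl hab
        · exact htc _ hb'
        · exact (hsc _ ha).symm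
        · exact (htc _ ha).symm
        · exact h.clq a ha b hb' hab
    exact TL h.base h.clq (by omega) (a := x) (b := y) (c := w)
      (by rintro rfl; exact dB.1 (hxd.symm.trans hyb))
      (by rintro rfl; exact dB.2 (hxd.symm.trans hwb))
      (by rintro rfl; exact hb12 (hyb.symm.trans hwb))
      (nadj x y hx hy hxc hyc) (nadj x w hx hw hxc hwc) (nadj y w hy hw hyc hwc) hxc hyc hwc
      (Or.inr h.no)

end
end BK

namespace BK
section
open Classical
set_option linter.unusedSectionVars false

variable {V : Type*} [Fintype V] {G : SimpleGraph V} {k : ℕ} {ι : Type*} {P : Finset ι}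
  {Q : Finset V} {φ : V → ι}

theorem out4 (hb : Base G k) (hQ : Clq G Q) (hk : Q.card + 1 = k) {z a b c d : V} (hz : z ∈ Q)
    (ha : a ∉ Q) (hza : G.Adj z a) (hb' : b ∉ Q) (hzb : G.Adj z b) (hc : c ∉ Q) (hzc : G.Adj z c)
    (hd : d ∉ Q) (hzd : G.Adj z d)
    (hab : a ≠ b) (hac : a ≠ c) (had : a ≠ d) (hbc : b ≠ c) (hbd : b ≠ d) (hcd : c ≠ d) :
    False := by
  have h1 := nO_clq hb hQ hz
  have : ({a, b, c, d} : Finset V).card ≤ (nO G Q z).card := by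
    apply card_le_card
    intro w hw
    simp only [mem_insert, mem_singleton] at hw
    rcases hw with rfl | rfl | rfl | rfl <;> rw [mem_nO] <;> constructor <;> assumption
  rw [card_eq_four.2 ⟨a, b, c, d, hab, hac, had, hbc, hbd, hcd, rfl⟩] at this
  omega

theorem sees4 (hb : Base G k) (hQ : Clq G Q) (hk : Q.card + 1 = k) {z : V} (hz : z ∈ Q)
    {a b c d : ι} (ha : Sees G Q φ z a) (hb' : Sees G Q φ z b) (hc : Sees G Q φ z c)
    (hd : Sees G Q φ z d)
    (hab : a ≠ b) (hac : a ≠ c) (had : a ≠ d) (hbc : b ≠ c) (hbd : b ≠ d) (hcd : c ≠ d) :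
    False := by
  obtain ⟨x, x1, x2, rfl⟩ := ha
  obtain ⟨y, y1, y2, rfl⟩ := hb'
  obtain ⟨w, w1, w2, rfl⟩ := hc
  obtain ⟨t, t1, t2, rfl⟩ := hd
  refine out4 hb hQ hk hz x1 x2 y1 y2 w1 w2 t1 t2 ?_ ?_ ?_ ?_ ?_ ?_ <;> rintro rfl <;>
    contradiction

/-- adding two adjacent vertices to a clique -/
theorem clq_two {K : Finset V} (hK : Clq G K) {s t : V} (hsc : ∀ z ∈ K, G.Adj s z)
    (htc : ∀ z ∈ K, G.Adj t z) (hst : G.Adj s t) : Clq G (insert s (insert t K)) := by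
  intro a ha b hb' hab
  have hts := hst.symm
  simp only [mem_insert] at ha hb'
  rcases ha with rfl | rfl | ha <;> rcases hb' with rfl | rfl | hb'
  · exact absurd rfl hab
  · exact hst
  · exact hsc _ hb'
  · exact hts
  · exact absurd rfl hab
  · exact htc _ hb'
  · exact (hsc _ ha).symm
  · exact (htc _ ha).symm
  · exact hK a ha b hb' hab

theorem TLp (hb : Base G k) (hQ : Clq G Q) (hk : Q.card + 1 = k)
    (hno : ∀ W : Finset V, W.card = k → ¬ Clq G W) {q u v : V} (hq : q ∈ Q) (hu : u ∉ Q)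
    (hv : v ∉ Q) (huv : u ≠ v) (hu1 : ∀ z ∈ Q, z ≠ q → G.Adj z u)
    (hv1 : ∀ z ∈ Q, z ≠ q → G.Adj z v) : False := by
  have hno' : ∀ W : Finset V, W.card = Q.card + 1 → ¬ Clq G W := by rw [hk]; exact hno
  have hcompl : ∀ x, x ∉ Q → (∀ z ∈ Q, z ≠ q → G.Adj z x) → ¬ G.Adj q x := by
    intro x hx h1 h2
    obtain ⟨z, hz, hzx⟩ := not_compl hQ hno' hx
    by_cases e : z = q
    · subst e; exact hzx h2
    · exact hzx (h1 z hz e)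
  have hK : Clq G (Q.erase q) := fun a ha b hb hab =>
    hQ a (mem_of_mem_erase ha) b (mem_of_mem_erase hb) hab
  have hu2 : ∀ z ∈ Q.erase q, G.Adj u z := fun z hz =>
    (hu1 z (mem_of_mem_erase hz) (ne_of_mem_erase hz)).symm
  have hv2 : ∀ z ∈ Q.erase q, G.Adj v z := fun z hz =>
    (hv1 z (mem_of_mem_erase hz) (ne_of_mem_erase hz)).symm
  have hc : (Q.erase q).card = Q.card - 1 := card_erase_of_mem hq
  have := card_pos.2 ⟨q, hq⟩
  refine TL hb hK (by omega) (a := q) (b := u) (c := v)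
    (by rintro rfl; exact hu hq) (by rintro rfl; exact hv hq) huv
    (hcompl u hu hu1) (hcompl v hv hv1) ?_
    (fun z hz => hQ q hq z (mem_of_mem_erase hz) (ne_of_mem_erase hz).symm) hu2 hv2 (Or.inr hno)
  intro h
  refine hno _ ?_ (clq_two hK hu2 hv2 h)
  rw [card_insert_of_notMem, card_insert_of_notMem]
  · omega
  · exact fun h => hv (mem_of_mem_erase h)
  · rw [mem_insert]; rintro (h | h)
    exacts [huv h, hu (mem_of_mem_erase h)]

structure T20 (G : SimpleGraph V) (k : ℕ) (Q : Finset V) (P : Finset ι) (φ : V → ι)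
    (b b' j : ι) (r : V) (f : ι → V) : Prop where
  base : Base G k
  clq : Clq G Q
  hP : P.card = k
  col : Col G Q P φ
  card : Q.card + 1 = k
  bb : b ≠ b'
  jb : j ≠ b
  jb' : j ≠ b'
  jP : j ∈ P
  fb : Full G Q φ b
  fb' : Full G Q φ b'
  rQ : r ∉ Q
  rj : φ r = j
  jr : ∀ v, v ∉ Q → φ v = j → v = r
  nr : ∀ z ∈ Q, ¬ G.Adj z r
  miss : ∀ m ∈ P, m ≠ b → m ≠ b' → m ≠ j → f m ∈ Q ∧ ¬ Sees G Q φ (f m) m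
  inj : ∀ m ∈ P, ∀ n ∈ P, m ≠ b → m ≠ b' → m ≠ j → n ≠ b → n ≠ b' → n ≠ j → f m = f n → m = n
  rb : (cls Q φ b).card = 3 → ∃ u, u ∉ Q ∧ φ u = b ∧ ¬ G.Adj u r
  rb' : (cls Q φ b').card = 3 → ∃ u, u ∉ Q ∧ φ u = b' ∧ ¬ G.Adj u r
  no : ∀ W : Finset V, W.card = k → ¬ Clq G W

variable {b b' j : ι} {r : V} {f : ι → V}

theorem T20.swap (h : T20 G k Q P φ b b' j r f) : T20 G k Q P φ b' b j r f where
  base := h.base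
  clq := h.clq
  hP := h.hP
  col := h.col
  card := h.card
  bb := h.bb.symm
  jb := h.jb'
  jb' := h.jb
  jP := h.jP
  fb := h.fb'
  fb' := h.fb
  rQ := h.rQ
  rj := h.rj
  jr := h.jr
  nr := h.nr
  miss := fun m hm h1 h2 h3 => h.miss m hm h2 h1 h3
  inj := fun m hm n hn h1 h2 h3 h4 h5 h6 => h.inj m hm n hn h2 h1 h3 h5 h4 h6
  rb := h.rb'
  rb' := h.rb
  no := h.no

/-- an ordinary colour, saturated -/
def Sat (G : SimpleGraph V) (Q : Finset V) (P : Finset ι) (φ : V → ι) (b b' j : ι) (f : ι → V)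
    (m : ι) : Prop :=
  m ∈ P ∧ m ≠ b ∧ m ≠ b' ∧ m ≠ j ∧ ∀ z ∈ Q, z ≠ f m → Sees G Q φ z m

theorem T20.ncompl (h : T20 G k Q P φ b b' j r f) {u : V} (hu : u ∉ Q) : ∃ z ∈ Q, ¬ G.Adj z u :=
  not_compl h.clq (by rw [h.card]; exact h.no) hu

theorem T20.L2 (h : T20 G k Q P φ b b' j r f) {ψ : V → ι} {U : V} (hψ : Col G Q P ψ)
    (h1 : Full G Q ψ b) (h2 : Full G Q ψ b') (hc : (cls Q ψ b).card ≤ 2)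
    (hm : ∀ m, m ≠ b → m ≠ j → ∀ z, Sees G Q ψ z m → Sees G Q φ z m)
    (hbb : ∀ v, v ∉ Q → ψ v = b → φ v = b)
    (hU : U ∉ Q) (hUj : ψ U = j) (hU1 : ∀ z ∈ Q, Sees G Q ψ z j → G.Adj z U)
    (hU2 : φ U = b ∨ ∀ z ∈ Q, ¬ G.Adj z U) :
    ∃ m, Sat G Q P φ b b' j f m ∧ ∃ v, v ∉ Q ∧ φ v = b ∧ ∀ z ∈ Q, z ≠ f m → G.Adj z v := by
  have hb := h.base
  have k8 := hb.k8
  have hcard := h.card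
  have bb := h.bb
  have jb := h.jb
  have jb' := h.jb'
  by_contra hgoal
  obtain ⟨v, hv, hv4⟩ := cover_big (G := G) (K := Q) (D := cls Q ψ b) (by
      intro z hz
      obtain ⟨v, h1, h2, h3⟩ := h1 z hz
      exact ⟨v, mem_cls.2 ⟨h1, h3⟩, h2.symm⟩) 3 (by omega)
  have hv' := hv
  rw [mem_cls] at hv
  obtain ⟨hvQ, hvb⟩ := hv
  obtain ⟨zv, hzv, hzv'⟩ := h.ncompl hvQ
  obtain ⟨w, hwQ, hzw, hwb⟩ := h1 zv hzv
  have hvw : v ≠ w := by rintro rfl; exact hzv' hzw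
  have honly : ∀ x, x ∉ Q → ψ x = b → x = v ∨ x = w := by
    have : ({v, w} : Finset V) ⊆ cls Q ψ b := by
      intro x hx
      simp only [mem_insert, mem_singleton] at hx
      rw [mem_cls]
      rcases hx with rfl | rfl <;> constructor <;> assumption
    have heq := eq_of_subset_of_card_le this (by rw [card_pair hvw]; exact hc)
    intro x hx hxb
    have : x ∈ cls Q ψ b := mem_cls.2 ⟨hx, hxb⟩
    rw [← heq] at this
    simpa using this
  have alt : ∀ C ∈ P, Free G Q ψ v C → C ≠ b' ∧ ∀ z ∈ Q, ¬ G.Adj z v → Sees G Q ψ z C := by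
    intro C hC hf
    have hCb : C ≠ b := hvb ▸ hf.1
    have hs : ∀ z, ∀ e, Sees G Q (Function.update ψ v C) z e →
        (e = b ∧ G.Adj z w) ∨ (e ≠ b ∧ Sees G Q ψ z e) ∨ (e = C ∧ G.Adj z v) := by
      intro z e he
      rw [sees_move] at he
      rcases he with ⟨x, x1, x2, x3, x4⟩ | ⟨-, h1, h2⟩
      · by_cases e' : e = b
        · left
          rcases honly x x1 (x4.trans e') with rfl | rfl
          · exact absurd rfl x2
          · exact ⟨e', x3⟩
        · exact Or.inr (Or.inl ⟨e', x, x1, x3, x4⟩)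
      · exact Or.inr (Or.inr ⟨h1, h2⟩)
    rcases hall_B hb h.clq h.hP {b'} (by simpa using hcard) (hψ.move hC hf) with
      ⟨c, hc, hcB, hfull⟩ | ⟨q, hq, c, hc, e, he, hcB, heB, hce, hsee⟩
    · rw [mem_singleton] at hcB
      by_cases e1 : c = C
      · subst e1
        refine ⟨hcB, fun z hz hzv => ?_⟩
        rcases hs z c (hfull z hz) with ⟨a, -⟩ | ⟨-, a⟩ | ⟨-, a⟩
        · exact absurd a hCb
        · exact a
        · exact absurd a hzv
      · exfalso
        by_cases e2 : c = b
        · subst e2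
          obtain ⟨z, hz, hzw⟩ := h.ncompl hwQ
          rcases hs z c (hfull z hz) with ⟨-, a⟩ | ⟨a, -⟩ | ⟨a, -⟩
          · exact hzw a
          · exact a rfl
          · exact e1 a
        · by_cases e3 : c = j
          · subst e3
            obtain ⟨z, hz, hzU⟩ := h.ncompl hU
            rcases hs z c (hfull z hz) with ⟨a, -⟩ | ⟨-, a⟩ | ⟨a, -⟩
            · exact e2 a
            · exact hzU (hU1 z hz a)
            · exact e1 a
          · obtain ⟨m1, m2⟩ := h.miss c hc e2 hcB e3
            rcases hs _ c (hfull _ m1) with ⟨a, -⟩ | ⟨-, a⟩ | ⟨a, -⟩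
            · exact e2 a
            · exact m2 (hm c e2 e3 _ a)
            · exact e1 a
    · rw [mem_singleton] at hcB heB
      have cas : ∀ c ∈ P, c ≠ b' → (∀ z ∈ Q, z ≠ q → Sees G Q (Function.update ψ v C) z c) →
          (c = b ∧ ∀ z ∈ Q, z ≠ q → G.Adj z w) ∨
          (c = C ∧ ∀ z ∈ Q, z ≠ q → ¬ G.Adj z v → Sees G Q ψ z C) ∨
          (c = j ∧ ∀ z ∈ Q, z ≠ q → Sees G Q ψ z j) ∨
          (c ≠ C ∧ Sat G Q P φ b b' j f c ∧ f c = q ∧ ∀ z ∈ Q, z ≠ q → Sees G Q ψ z c) := by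
        intro c hc hcb hsee
        by_cases e1 : c = C
        · subst e1
          refine Or.inr (Or.inl ⟨rfl, fun z hz hzq hzv => ?_⟩)
          rcases hs z c (hsee z hz hzq) with ⟨a, -⟩ | ⟨-, a⟩ | ⟨-, a⟩
          · exact absurd a hCb
          · exact a
          · exact absurd a hzv
        by_cases e2 : c = b
        · subst e2
          refine Or.inl ⟨rfl, fun z hz hzq => ?_⟩
          rcases hs z c (hsee z hz hzq) with ⟨-, a⟩ | ⟨a, -⟩ | ⟨a, -⟩
          · exact a
          · exact absurd rfl a
          · exact absurd a e1
        have hsee' : ∀ z ∈ Q, z ≠ q → Sees G Q ψ z c := by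
          intro z hz hzq
          rcases hs z c (hsee z hz hzq) with ⟨a, -⟩ | ⟨-, a⟩ | ⟨a, -⟩
          · exact absurd a e2
          · exact a
          · exact absurd a e1
        by_cases e3 : c = j
        · subst e3
          exact Or.inr (Or.inr (Or.inl ⟨rfl, hsee'⟩))
        · obtain ⟨m1, m2⟩ := h.miss c hc e2 hcb e3
          have hfq : f c = q := by
            by_contra hne
            exact m2 (hm c e2 e3 _ (hsee' _ m1 hne))
          refine Or.inr (Or.inr (Or.inr ⟨e1, ⟨hc, e2, hcb, e3, ?_⟩, hfq, hsee'⟩))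
          intro z hz hzf
          exact hm c e2 e3 z (hsee' z hz (hfq ▸ hzf))
      have pair : ∀ c ∈ P, ∀ e ∈ P, c ≠ b' → e ≠ b' → c ≠ e →
          (c = b ∧ ∀ z ∈ Q, z ≠ q → G.Adj z w) ∨
          (c = C ∧ ∀ z ∈ Q, z ≠ q → ¬ G.Adj z v → Sees G Q ψ z C) ∨
          (c = j ∧ ∀ z ∈ Q, z ≠ q → Sees G Q ψ z j) →
          (c ≠ b) →
          (e = b ∧ ∀ z ∈ Q, z ≠ q → G.Adj z w) ∨
          (c ≠ j ∧ e = j ∧ ∀ z ∈ Q, z ≠ q → Sees G Q ψ z j) → c ≠ b' ∧ c = C ∧ ∀ z ∈ Q, ¬ G.Adj z v → Sees G Q ψ z C := by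
        intro c _ e _ hcb heb hce hc1 hcb2 he1
        rcases hc1 with ⟨a, -⟩ | ⟨a, a1⟩ | ⟨a, a1⟩
        · exact absurd a hcb2
        · rcases he1 with ⟨-, b1⟩ | ⟨c1, -, b1⟩
          · refine ⟨hcb, a, fun z hz hzv => a1 z hz ?_ hzv⟩
            rintro rfl
            obtain ⟨x, x1, x2, x3⟩ := h1 z hz
            obtain ⟨y, hy, hyw⟩ := h.ncompl hwQ
            rcases honly x x1 x3 with rfl | rfl
            · exact hzv x2
            · by_cases e : y = z
              · subst e; exact hyw x2
              · exact hyw (b1 y hy e)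
          · exfalso
            refine TLp hb h.clq hcard h.no hq hvQ hU (by rintro rfl; exact jb (hUj.symm.trans hvb))
              (fun z hz hzq => ?_) (fun z hz hzq => hU1 z hz (b1 z hz hzq))
            by_contra hzv
            subst a
            exact sees4 hb h.clq hcard hz (h1 z hz) (h2 z hz) (a1 z hz hzq hzv) (b1 z hz hzq) bb
              hCb.symm jb.symm hcb.symm jb'.symm c1
        · exfalso
          rcases he1 with ⟨-, b1⟩ | ⟨c1, -, b1⟩
          · refine TLp hb h.clq hcard h.no hq hwQ hU (by rintro rfl; exact jb (hUj.symm.trans hwb))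
              b1 (fun z hz hzq => hU1 z hz (a1 z hz hzq))
          · exact c1 a
      have four : ∀ c ∈ P, ∀ e ∈ P, c ≠ b' → e ≠ b' → c ≠ e →
          (c ≠ C ∧ Sat G Q P φ b b' j f c ∧ f c = q ∧ ∀ z ∈ Q, z ≠ q → Sees G Q ψ z c) →
          ((e = b ∧ ∀ z ∈ Q, z ≠ q → G.Adj z w) ∨
          (e = C ∧ ∀ z ∈ Q, z ≠ q → ¬ G.Adj z v → Sees G Q ψ z C) ∨
          (e = j ∧ ∀ z ∈ Q, z ≠ q → Sees G Q ψ z j) ∨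
          (e ≠ C ∧ Sat G Q P φ b b' j f e ∧ f e = q ∧ ∀ z ∈ Q, z ≠ q → Sees G Q ψ z e)) → False := by
        rintro c hc e he hcb heb hce ⟨cC, cS, cq, cs⟩ hh
        rcases hh with ⟨-, a1⟩ | ⟨rfl, a1⟩ | ⟨-, a1⟩ | ⟨-, aS, aq, -⟩
        · exact hgoal ⟨c, cS, w, hwQ, hbb w hwQ hwb, fun z hz hzf => a1 z hz (cq ▸ hzf)⟩
        · refine hgoal ⟨c, cS, v, hvQ, hbb v hvQ hvb, fun z hz hzf => ?_⟩
          rw [cq] at hzf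
          by_contra hzv
          exact sees4 hb h.clq hcard hz (h1 z hz) (h2 z hz) (a1 z hz hzf hzv) (cs z hz hzf) bb
              hCb.symm cS.2.1.symm heb.symm hcb.symm cC.symm
        · rcases hU2 with hU2 | hU2
          · exact hgoal ⟨c, cS, U, hU, hU2, fun z hz hzf => hU1 z hz (a1 z hz (cq ▸ hzf))⟩
          · obtain ⟨z, hz⟩ := card_pos.1 (show 0 < (Q.erase q).card by
              rw [card_erase_of_mem hq]; omega)
            rw [mem_erase] at hz
            exact hU2 z hz.2 (hU1 z hz.2 (a1 z hz.2 hz.1))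
        · exact hce (h.inj c hc e he cS.2.1 cS.2.2.1 cS.2.2.2.1 aS.2.1 aS.2.2.1 aS.2.2.2.1
            (cq.trans aq.symm))
      have A := cas c hc hcB (fun z hz hzq => (hsee z hz hzq).1)
      have A' := cas e he heB (fun z hz hzq => (hsee z hz hzq).2)
      rcases A with a | a | a | a
      · have hcb : e ≠ b := fun x => hce (a.1.trans x.symm)
        have : e ≠ b' ∧ e = C ∧ ∀ z ∈ Q, ¬ G.Adj z v → Sees G Q ψ z C := by
          rcases A' with x | x | x | x
          · exact absurd x.1 hcb
          · exact pair e he c hc heB hcB hce.symm (Or.inr (Or.inl x)) hcb (Or.inl a)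
          · exact pair e he c hc heB hcB hce.symm (Or.inr (Or.inr x)) hcb (Or.inl a)
          · exact (four e he c hc heB hcB hce.symm x (Or.inl a)).elim
        exact ⟨this.2.1 ▸ this.1, this.2.2⟩
      · have hcb : c ≠ b := a.1 ▸ hCb
        have : c ≠ b' ∧ c = C ∧ ∀ z ∈ Q, ¬ G.Adj z v → Sees G Q ψ z C := by
          rcases A' with x | x | x | x
          · exact pair c hc e he hcB heB hce (Or.inr (Or.inl a)) hcb (Or.inl x)
          · exact absurd (a.1.trans x.1.symm) hce
          · exact pair c hc e he hcB heB hce (Or.inr (Or.inl a)) hcb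
              (Or.inr ⟨fun y => hce (y.trans x.1.symm), x⟩)
          · exact (four e he c hc heB hcB hce.symm x (Or.inr (Or.inl a))).elim
        exact ⟨this.2.1 ▸ this.1, this.2.2⟩
      · have hcb : c ≠ b := a.1 ▸ jb
        rcases A' with x | x | x | x
        · have := pair c hc e he hcB heB hce (Or.inr (Or.inr a)) hcb (Or.inl x)
          exact ⟨this.2.1 ▸ this.1, this.2.2⟩
        · have := pair e he c hc heB hcB hce.symm (Or.inr (Or.inl x)) (x.1 ▸ hCb)
            (Or.inr ⟨fun y => hce (a.1.trans y.symm), a⟩)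
          exact ⟨this.2.1 ▸ this.1, this.2.2⟩
        · exact absurd (a.1.trans x.1.symm) hce
        · exact (four e he c hc heB hcB hce.symm x (Or.inr (Or.inr (Or.inl a)))).elim
      · exact (four c hc e he hcB heB hce a A').elim
  obtain ⟨C, hC, C', hC', hne, f1, f2⟩ := free_two hb h.hP hψ hvQ hv4
  obtain ⟨a1, a2⟩ := alt C hC f1
  obtain ⟨c1, c2⟩ := alt C' hC' f2
  exact sees4 hb h.clq hcard hzv (h1 zv hzv) (h2 zv hzv) (a2 zv hzv hzv') (c2 zv hzv hzv') bb
    (hvb ▸ f1.1.symm) (hvb ▸ f2.1.symm) a1.symm c1.symm hne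

end
end BK

namespace BK
section
open Classical
set_option linter.unusedSectionVars false

variable {V : Type*} [Fintype V] {G : SimpleGraph V} {k : ℕ} {ι : Type*} {P : Finset ι}
  {Q : Finset V} {φ : V → ι}
variable {b b' j : ι} {r : V} {f : ι → V}

theorem T20.free_j (h : T20 G k Q P φ b b' j r f) {u : V} (hub : φ u = b) (hur : ¬ G.Adj u r) :
    Free G Q φ u j :=
  ⟨by rw [hub]; exact h.jb, fun x hx hux e => by rw [h.jr x hx e] at hux; exact hur hux⟩

theorem T20.L1 (h : T20 G k Q P φ b b' j r f) :
    ∃ m, Sat G Q P φ b b' j f m ∧ ((∃ v, v ∉ Q ∧ φ v = b ∧ ∀ z ∈ Q, z ≠ f m → G.Adj z v) ∨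
      ∃ u, u ∉ Q ∧ φ u = b ∧ ¬ G.Adj u r ∧ ∀ z ∈ Q, z ≠ f m → ¬ G.Adj z u) := by
  have hb := h.base
  have k8 := hb.k8
  have hcard := h.card
  have bb := h.bb
  have jb := h.jb
  have jb' := h.jb'
  have hc3 := cls_le hb h.col b
  by_cases h3 : (cls Q φ b).card ≤ 2
  · obtain ⟨m, hm, hv⟩ := h.L2 h.col h.fb h.fb' h3 (fun m _ _ z hz => hz) (fun v _ hv => hv)
      h.rQ h.rj (fun z hz hs => by
        obtain ⟨x, x1, x2, x3⟩ := hs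
        rw [← h.jr x x1 x3]; exact x2) (Or.inr h.nr)
    exact ⟨m, hm, Or.inl hv⟩
  obtain ⟨u, hu, hub, hur⟩ := h.rb (by omega)
  have hf := h.free_j hub hur
  have hψ := h.col.move h.jP hf
  by_contra hgoal
  have lift : ∀ e, e ≠ b → ∀ z, Sees G Q φ z e → Sees G Q (Function.update φ u j) z e := by
    rintro e he z ⟨x, x1, x2, x3⟩
    rw [sees_move]
    refine Or.inl ⟨x, x1, ?_, x2, x3⟩
    rintro rfl; exact he (x3.symm.trans hub)
  have low : ∀ e, e ≠ j → ∀ z, Sees G Q (Function.update φ u j) z e → Sees G Q φ z e := by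
    intro e he z hs
    rw [sees_move] at hs
    rcases hs with ⟨x, x1, x2, x3, x4⟩ | ⟨-, x, -⟩
    · exact ⟨x, x1, x3, x4⟩
    · exact absurd x he
  have hjs : ∀ z ∈ Q, Sees G Q (Function.update φ u j) z j → G.Adj z u := by
    intro z hz hs
    rw [sees_move] at hs
    rcases hs with ⟨x, x1, x2, x3, x4⟩ | ⟨-, -, x⟩
    · rw [h.jr x x1 x4] at x3; exact absurd x3 (h.nr z hz)
    · exact x
  have O1 : ¬ Full G Q (Function.update φ u j) b := by
    intro hfull
    have hsub : cls Q (Function.update φ u j) b ⊆ (cls Q φ b).erase u := by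
      intro x hx
      rw [mem_cls] at hx
      by_cases e : x = u
      · subst e; simp at hx; exact absurd hx.2 jb
      · rw [Function.update_of_ne e] at hx
        exact mem_erase.2 ⟨e, mem_cls.2 hx⟩
    have := card_le_card hsub
    rw [card_erase_of_mem (mem_cls.2 ⟨hu, hub⟩)] at this
    obtain ⟨m, hm, hv⟩ := h.L2 hψ hfull (fun z hz => lift b' bb.symm z (h.fb' z hz)) (by omega)
      (fun m _ hj z hz => low m hj z hz) (fun v _ hv => by
        by_cases e : v = u
        · subst e; exact hub
        · rwa [Function.update_of_ne e] at hv) hu (by simp) hjs (Or.inl hub)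
    exact hgoal ⟨m, hm, Or.inl hv⟩
  rcases hall_B hb h.clq h.hP {b'} (by simpa using hcard) hψ with
      ⟨c, hc, hcB, hfull⟩ | ⟨q, hq, c, hc, e, he, hcB, heB, hce, hsee⟩
  · rw [mem_singleton] at hcB
    by_cases e1 : c = b
    · subst e1; exact O1 hfull
    by_cases e2 : c = j
    · subst e2
      obtain ⟨z, hz, hzu⟩ := h.ncompl hu
      exact hzu (hjs z hz (hfull z hz))
    · obtain ⟨m1, m2⟩ := h.miss c hc e1 hcB e2
      exact m2 (low c e2 _ (hfull _ m1))
  · rw [mem_singleton] at hcB heB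
    have hm : ∀ c ∈ P, c ≠ b → c ≠ b' → c ≠ j →
        (∀ z ∈ Q, z ≠ q → Sees G Q (Function.update φ u j) z c) →
        f c = q ∧ Sat G Q P φ b b' j f c := by
      intro c hc e1 e2 e3 hs
      obtain ⟨m1, m2⟩ := h.miss c hc e1 e2 e3
      have hq : f c = q := by
        by_contra hne
        exact m2 (low c e3 _ (hs _ m1 hne))
      exact ⟨hq, hc, e1, e2, e3, fun z hz hzf => low c e3 _ (hs z hz (hq ▸ hzf))⟩
    have bj : (∀ z ∈ Q, z ≠ q → Sees G Q (Function.update φ u j) z b) →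
        (∀ z ∈ Q, z ≠ q → Sees G Q (Function.update φ u j) z j) → False := by
      intro s1 s2
      apply O1
      intro z hz
      by_cases e : z = q
      · subst e
        obtain ⟨x, x1, x2, x3⟩ := h.fb z hz
        rw [sees_move]
        refine Or.inl ⟨x, x1, ?_, x2, x3⟩
        rintro rfl
        obtain ⟨y, hy, hyx⟩ := h.ncompl x1
        by_cases e : y = z
        · subst e; exact hyx x2
        · exact hyx (hjs y hy (s2 y hy e))
      · exact s1 z hz e
    have bm : ∀ c ∈ P, c ≠ b → c ≠ b' → c ≠ j →
        (∀ z ∈ Q, z ≠ q → Sees G Q (Function.update φ u j) z c) →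
        (∀ z ∈ Q, z ≠ q → Sees G Q (Function.update φ u j) z b) → False := by
      intro c hc e1 e2 e3 hs hs'
      obtain ⟨hfq, hS⟩ := hm c hc e1 e2 e3 hs
      refine hgoal ⟨c, hS, Or.inr ⟨u, hu, hub, hur, fun z hz hzf hzu => ?_⟩⟩
      rw [hfq] at hzf
      exact sees4 hb h.clq hcard hz (hs z hz hzf) (hs' z hz hzf) (lift b' bb.symm z (h.fb' z hz))
        (show Sees G Q (Function.update φ u j) z j from ⟨u, hu, hzu, by simp⟩) e1 e2 e3 bb jb.symm jb'.symm
    have jm : ∀ c ∈ P, c ≠ b → c ≠ b' → c ≠ j →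
        (∀ z ∈ Q, z ≠ q → Sees G Q (Function.update φ u j) z c) →
        (∀ z ∈ Q, z ≠ q → Sees G Q (Function.update φ u j) z j) → False := by
      intro c hc e1 e2 e3 hs hs'
      obtain ⟨hfq, hS⟩ := hm c hc e1 e2 e3 hs
      refine hgoal ⟨c, hS, Or.inl ⟨u, hu, hub, fun z hz hzf => ?_⟩⟩
      rw [hfq] at hzf
      exact hjs z hz (hs' z hz hzf)
    have sc : ∀ z ∈ Q, z ≠ q → Sees G Q (Function.update φ u j) z c :=
      fun z hz hzq => (hsee z hz hzq).1
    have se : ∀ z ∈ Q, z ≠ q → Sees G Q (Function.update φ u j) z e :=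
      fun z hz hzq => (hsee z hz hzq).2
    by_cases c1 : c = b
    · subst c1
      by_cases c2 : e = j
      · subst c2; exact bj sc se
      · exact bm e he hce.symm heB c2 se sc
    by_cases c2 : c = j
    · subst c2
      by_cases c3 : e = b
      · subst c3; exact bj se sc
      · exact jm e he c3 heB hce.symm se sc
    by_cases c3 : e = b
    · subst c3; exact bm c hc c1 hcB c2 sc se
    by_cases c4 : e = j
    · subst c4; exact jm c hc c1 hcB c2 sc se
    obtain ⟨d1, -⟩ := hm c hc c1 hcB c2 sc
    obtain ⟨d2, -⟩ := hm e he c3 heB c4 se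
    exact hce (h.inj c hc e he c1 hcB c2 c3 heB c4 (d1.trans d2.symm))

theorem T20.L3 (h : T20 G k Q P φ b b' j r f) {m : ι} (hS : Sat G Q P φ b b' j f m)
    (hncomp : ∀ v, v ∉ Q → φ v = b → ∃ z ∈ Q, z ≠ f m ∧ ¬ G.Adj z v)
    {u : V} (hu : u ∉ Q) (hub : φ u = b) (hur : ¬ G.Adj u r)
    (huK : ∀ z ∈ Q, z ≠ f m → ¬ G.Adj z u) : False := by
  have hb := h.base
  have k8 := hb.k8
  have hcard := h.card
  have bb := h.bb
  have jb := h.jb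
  have jb' := h.jb'
  have hc3 := cls_le hb h.col b
  obtain ⟨mP, mb, mb', mj, mS⟩ := hS
  obtain ⟨fQ, fm⟩ := h.miss m mP mb mb' mj
  have hf := h.free_j hub hur
  have hψ := h.col.move h.jP hf
  obtain ⟨v, hv, hv3⟩ := cover_big (G := G) (K := Q.erase (f m)) (D := (cls Q φ b).erase u) (by
      intro z hz
      rw [mem_erase] at hz
      obtain ⟨x, x1, x2, x3⟩ := h.fb z hz.2
      refine ⟨x, mem_erase.2 ⟨?_, mem_cls.2 ⟨x1, x3⟩⟩, x2.symm⟩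
      rintro rfl; exact huK z hz.2 hz.1 x2) 2 (by
        rw [card_erase_of_mem (mem_cls.2 ⟨hu, hub⟩), card_erase_of_mem fQ]; omega)
  rw [mem_erase, mem_cls] at hv
  obtain ⟨hvu, hvQ, hvb⟩ := hv
  obtain ⟨C, hC, hfC, hCm⟩ : ∃ C ∈ P, Free G Q (Function.update φ u j) v C ∧
      (G.Adj (f m) v → C ≠ m) := by
    have hle := card_le_card (nQ_mono (G := G) (erase_subset (f m) Q) v)
    by_cases hfv : G.Adj (f m) v
    · have hlt : (nQ G (Q.erase (f m)) v).card < (nQ G Q v).card := by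
        apply card_lt_card
        refine ⟨nQ_mono (erase_subset _ _) v, fun hsub => ?_⟩
        have := hsub (mem_nQ.2 ⟨fQ, hfv.symm⟩)
        rw [mem_nQ, mem_erase] at this
        exact this.1.1 rfl
      obtain ⟨C, hC, h1, h2⟩ := free_avoid hb h.hP hψ hvQ (by omega) m
      exact ⟨C, hC, h2, fun _ => h1⟩
    · obtain ⟨C, hC, h2⟩ := free_one hb h.hP hψ hvQ (by omega)
      exact ⟨C, hC, h2, fun e => absurd e hfv⟩
  have hCb : C ≠ b := by
    have := hfC.1
    rwa [Function.update_of_ne hvu, hvb] at this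
  obtain ⟨z0, hz0, hz0f, hz0v⟩ := hncomp v hvQ hvb
  have hs : ∀ z ∈ Q, z ≠ f m → ∀ e, e ≠ b' →
      Sees G Q (Function.update (Function.update φ u j) v C) z e →
      (e = b ∧ ¬ G.Adj z v) ∨ (e = C ∧ G.Adj z v) ∨ e = m := by
    intro z hz hzf e heb he
    rw [sees_move] at he
    rcases he with ⟨x, x1, x2, x3, x4⟩ | ⟨-, x1, x2⟩
    · have hxu : x ≠ u := by rintro rfl; exact huK z hz hzf x3
      rw [Function.update_of_ne hxu] at x4
      by_cases e1 : e = m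
      · exact Or.inr (Or.inr e1)
      by_cases e2 : e = b
      · left
        refine ⟨e2, fun hzv => ?_⟩
        obtain ⟨y, y1, y2, y3⟩ := h.fb' z hz
        obtain ⟨t, t1, t2, t3⟩ := mS z hz hzf
        refine out4 hb h.clq hcard hz x1 x3 hvQ hzv y1 y2 t1 t2 x2 ?_ ?_ ?_ ?_ ?_
        · rintro rfl; exact heb (x4.symm.trans y3)
        · rintro rfl; exact e1 (x4.symm.trans t3)
        · rintro rfl; exact bb (hvb.symm.trans y3)
        · rintro rfl; exact mb (t3.symm.trans hvb)
        · rintro rfl; exact mb' (t3.symm.trans y3)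
      · exfalso
        exact sees4 hb h.clq hcard hz (h.fb z hz) (h.fb' z hz) (mS z hz hzf)
          (show Sees G Q φ z e from ⟨x, x1, x3, x4⟩) bb mb.symm (Ne.symm e2) mb'.symm (Ne.symm heb) (Ne.symm e1)
    · exact Or.inr (Or.inl ⟨x1, x2⟩)
  have hfm : ¬ Sees G Q (Function.update (Function.update φ u j) v C) (f m) m := by
    intro he
    rw [sees_move] at he
    rcases he with ⟨x, x1, x2, x3, x4⟩ | ⟨-, x1, x2⟩
    · by_cases hxu : x = u
      · subst hxu; simp at x4; exact mj x4.symm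
      · rw [Function.update_of_ne hxu] at x4
        exact fm ⟨x, x1, x3, x4⟩
    · exact hCm x2 x1.symm
  have exN : ∀ p : V, ∃ z ∈ Q, z ≠ f m ∧ z ≠ p ∧ G.Adj z v := by
    intro p
    obtain ⟨z, hz⟩ := card_pos.1 (show 0 < ((nQ G (Q.erase (f m)) v).erase p).card by
      have := pred_card_le_card_erase (s := nQ G (Q.erase (f m)) v) (a := p); omega)
    rw [mem_erase, mem_nQ, mem_erase] at hz
    exact ⟨z, hz.2.1.2, hz.2.1.1, hz.1, hz.2.2.symm⟩
  rcases hall_B hb h.clq h.hP {b'} (by simpa using hcard) (hψ.move hC hfC) with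
      ⟨c, hc, hcB, hfull⟩ | ⟨q, hq, c, hc, e, he, hcB, heB, hce, hsee⟩
  · rw [mem_singleton] at hcB
    have hcm : c ≠ m := by rintro rfl; exact hfm (hfull _ fQ)
    obtain ⟨y, hy, hyf, -, hyv⟩ := exN v
    have a1 := hs y hy hyf c hcB (hfull y hy)
    have a2 := hs z0 hz0 hz0f c hcB (hfull z0 hz0)
    grind
  · rw [mem_singleton] at hcB heB
    obtain ⟨y, hy, hyf, hyq, hyv⟩ := exN q
    have a1 := hs y hy hyf c hcB (hsee y hy hyq).1
    have a2 := hs y hy hyf e heB (hsee y hy hyq).2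
    have hq : f m = q := by
      by_contra hne
      have b1 := hsee _ fQ hne
      have : c = m ∨ e = m := by grind
      rcases this with rfl | rfl
      · exact hfm b1.1
      · exact hfm b1.2
    have hz0q : z0 ≠ q := hq ▸ hz0f
    have a3 := hs z0 hz0 hz0f c hcB (hsee z0 hz0 hz0q).1
    have a4 := hs z0 hz0 hz0f e heB (hsee z0 hz0 hz0q).2
    grind

theorem T20.false (h : T20 G k Q P φ b b' j r f) : False := by
  have hb := h.base
  have k8 := hb.k8
  have hcard := h.card
  obtain ⟨m, hS, hm⟩ := h.L1
  obtain ⟨n, hS', hn⟩ := h.swap.L1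
  by_cases c1 : ∃ v, v ∉ Q ∧ φ v = b ∧ ∀ z ∈ Q, z ≠ f m → G.Adj z v
  · by_cases c2 : ∃ v, v ∉ Q ∧ φ v = b' ∧ ∀ z ∈ Q, z ≠ f n → G.Adj z v
    · have hmn : m = n := by
        by_contra hne
        obtain ⟨z, hz⟩ := card_pos.1 (show 0 < ((Q.erase (f m)).erase (f n)).card by
          have := pred_card_le_card_erase (s := Q.erase (f m)) (a := f n)
          have := pred_card_le_card_erase (s := Q) (a := f m); omega)
        rw [mem_erase, mem_erase] at hz
        obtain ⟨z2, z1, hz⟩ := hz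
        exact sees4 hb h.clq hcard hz (h.fb z hz) (h.fb' z hz) (hS.2.2.2.2 z hz z1)
          (hS'.2.2.2.2 z hz z2) h.bb hS.2.1.symm hS'.2.2.1.symm hS.2.2.1.symm hS'.2.1.symm hne
      subst hmn
      obtain ⟨v, hv, hvb, hvc⟩ := c1
      obtain ⟨w, hw, hwb, hwc⟩ := c2
      exact TLp hb h.clq hcard h.no (h.miss m hS.1 hS.2.1 hS.2.2.1 hS.2.2.2.1).1 hv hw
        (by rintro rfl; exact h.bb (hvb.symm.trans hwb)) hvc hwc
    · rcases hn with c | ⟨u, hu, hub, hur, huK⟩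
      · exact c2 c
      · push Not at c2
        exact h.swap.L3 hS' c2 hu hub hur huK
  · rcases hm with c | ⟨u, hu, hub, hur, huK⟩
    · exact c1 c
    · push Not at c1
      exact h.L3 hS c1 hu hub hur huK

end
end BK

namespace BK
section
open Classical
set_option linter.unusedSectionVars false

variable {V : Type*} [Fintype V] {G : SimpleGraph V} {k : ℕ} {ι : Type*} {P : Finset ι}
  {Q : Finset V} {φ : V → ι}

/-- two adjacent uncoloured vertices, both not seeing colour `j` -/
structure St (G : SimpleGraph V) (k : ℕ) (P : Finset ι) (φ : V → ι) (x y : V) (j : ι) : Prop where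
  base : Base G k
  xy : G.Adj x y
  hP : P.card = k
  pr : ∀ u v, u ≠ x → u ≠ y → v ≠ x → v ≠ y → G.Adj u v → φ u ≠ φ v
  me : ∀ v, v ≠ x → v ≠ y → φ v ∈ P
  jP : j ∈ P
  jx : ∀ v, v ≠ x → v ≠ y → φ v = j → ¬ G.Adj x v
  jy : ∀ v, v ≠ x → v ≠ y → φ v = j → ¬ G.Adj y v
  no : ∀ W : Finset V, W.card = k → ¬ Clq G W

/-- `z` is doubled at colour `m` -/
def Db (G : SimpleGraph V) (φ : V → ι) (x y z : V) (m : ι) : Prop :=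
  ∃ u v, u ≠ v ∧ u ≠ x ∧ u ≠ y ∧ v ≠ x ∧ v ≠ y ∧ G.Adj z u ∧ G.Adj z v ∧ φ u = m ∧ φ v = m

/-- `a` is the unique neighbour of `z` of colour `m` -/
def Un (G : SimpleGraph V) (φ : V → ι) (x y z a : V) (m : ι) : Prop :=
  a ≠ x ∧ a ≠ y ∧ G.Adj z a ∧ φ a = m ∧ ∀ v, v ≠ x → v ≠ y → G.Adj z v → φ v = m → v = a

variable {x y : V} {j : ι}

theorem St.swap (h : St G k P φ x y j) : St G k P φ y x j :=
  ⟨h.base, h.xy.symm, h.hP, fun u v a b c d => h.pr u v b a d c, fun v a b => h.me v b a, h.jP,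
    fun v a b => h.jy v b a, fun v a b => h.jx v b a, h.no⟩

theorem Db.swap {z : V} {m : ι} (h : Db G φ x y z m) : Db G φ y x z m := by
  obtain ⟨u, v, a1, a2, a3, a4, a5, a6⟩ := h
  exact ⟨u, v, a1, a3, a2, a5, a4, a6⟩

theorem Un.swap {z a : V} {m : ι} (h : Un G φ x y z a m) : Un G φ y x z a m := by
  obtain ⟨a1, a2, a3, a4, a5⟩ := h
  exact ⟨a2, a1, a3, a4, fun v p q => a5 v q p⟩

theorem St.sees (h : St G k P φ x y j) {m : ι} (hm : m ∈ P) (hmj : m ≠ j) :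
    ∃ v, v ≠ x ∧ v ≠ y ∧ G.Adj x v ∧ φ v = m := by
  by_contra hcon
  push Not at hcon
  have hxy := h.xy.ne
  refine h.base.nc' h.hP (fun v => if v = x then m else if v = y then j else φ v) ?_ ?_
  · intro u v huv
    have := huv.symm
    have := huv.ne
    have := h.pr u v
    have := h.jy u
    have := h.jy v
    have := hcon u
    have := hcon v
    grind
  · intro v
    have := h.me v
    have := h.jP
    grind

theorem St.L2 (h : St G k P φ x y j) {m : ι} (hm : m ∈ P) (hmj : m ≠ j) {a : V}
    (ha : Un G φ x y x a m) (haj : ∀ v, v ≠ x → v ≠ y → φ v = j → ¬ G.Adj a v) : G.Adj y a := by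
  by_contra hcon
  have hxy := h.xy.ne
  obtain ⟨a1, a2, a3, a4, a5⟩ := ha
  refine h.base.nc' h.hP
    (fun v => if v = x then m else if v = y then j else if v = a then j else φ v) ?_ ?_
  · intro u v huv
    have := huv.symm
    have := huv.ne
    have := h.pr u v
    have := h.jy u
    have := h.jy v
    have := haj u
    have := haj v
    have := a5 u
    have := a5 v
    grind
  · intro v
    have := h.me v
    have := h.jP
    grind

theorem St.L3 (h : St G k P φ x y j) {m : ι} (hm : m ∈ P) (hmj : m ≠ j) {a : V}
    (ha : Un G φ x y x a m) (haj : ∀ v, v ≠ x → v ≠ y → φ v = j → ¬ G.Adj a v)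
    {m' : ι} (hm' : m' ∈ P) (hmj' : m' ≠ j) {a' : V} (hmm : m ≠ m')
    (ha' : Un G φ x y y a' m') (haj' : ∀ v, v ≠ x → v ≠ y → φ v = j → ¬ G.Adj a' v) :
    G.Adj a a' := by
  by_contra hcon
  have hcon' : ¬ G.Adj a' a := fun e => hcon e.symm
  have hxy := h.xy.ne
  obtain ⟨a1, a2, a3, a4, a5⟩ := ha
  obtain ⟨b1, b2, b3, b4, b5⟩ := ha'
  refine h.base.nc' h.hP
    (fun v => if v = x then m else if v = y then m' else if v = a then j else
      if v = a' then j else φ v) ?_ ?_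
  · intro u v huv
    have := huv.symm
    have := huv.ne
    have := h.pr u v
    have := haj u
    have := haj v
    have := haj' u
    have := haj' v
    have := a5 u
    have := a5 v
    have := b5 u
    have := b5 v
    grind
  · intro v
    have := h.me v
    have := h.jP
    grind

/-- recolouring `f := b`, `x := m`, `y := j` -/
theorem St.L4 (h : St G k P φ x y j) {m : ι} (hm : m ∈ P) (hmj : m ≠ j) {a : V}
    (ha : Un G φ x y x a m) {b : ι} (hb : b ∈ P) (hbj : b ≠ j) (hbm : b ≠ m) :
    ∃ v, v ≠ x ∧ v ≠ y ∧ G.Adj a v ∧ φ v = b := by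
  by_contra hcon
  push Not at hcon
  have hxy := h.xy.ne
  obtain ⟨a1, a2, a3, a4, a5⟩ := ha
  refine h.base.nc' h.hP
    (fun v => if v = x then m else if v = y then j else if v = a then b else φ v) ?_ ?_
  · intro u v huv
    have := huv.symm
    have := huv.ne
    have := h.pr u v
    have := h.jy u
    have := h.jy v
    have := hcon u
    have := hcon v
    have := a5 u
    have := a5 v
    grind
  · intro v
    have := h.me v
    have := h.jP
    grind

theorem count (N E : Finset V) (φ : V → ι) (M : Finset ι) (hE : E ⊆ N)
    (h : ∀ m ∈ M, ∃ v ∈ N, v ∉ E ∧ φ v = m) : M.card + E.card ≤ N.card := by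
  have : M.card ≤ (N \ E).card := by
    refine le_trans (card_le_card (t := (N \ E).image φ) ?_) card_image_le
    intro m hm
    obtain ⟨v, h1, h2, h3⟩ := h m hm
    exact mem_image.2 ⟨v, mem_sdiff.2 ⟨h1, h2⟩, h3⟩
  rw [card_sdiff_of_subset hE] at this
  have := card_le_card hE
  omega

theorem St.uD (h : St G k P φ x y j) {m m' : ι} (hm : Db G φ x y x m) (hm' : Db G φ x y x m') :
    m = m' := by
  by_contra hne
  obtain ⟨u, v, uv, u1, u2, v1, v2, u3, v3, u4, v4⟩ := hm
  obtain ⟨s, t, st, s1, s2, t1, t2, s3, t3, s4, t4⟩ := hm'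
  have hxy := h.xy
  have us : u ≠ s := by rintro rfl; exact hne (u4.symm.trans s4)
  have hN : (univ.filter (fun w => G.Adj x w)).card ≤ k + 1 := h.base.deg x
  have hE : ({y, u, s} : Finset V) ⊆ univ.filter (fun w => G.Adj x w) := by
    intro w hw
    simp only [mem_insert, mem_singleton] at hw
    refine mem_filter.2 ⟨mem_univ _, ?_⟩
    rcases hw with rfl | rfl | rfl <;> assumption
  have := count _ _ φ (P.erase j) hE ?_
  · rw [card_erase_of_mem h.jP, h.hP, card_eq_three.2 ⟨y, u, s, u2.symm, s2.symm, us, rfl⟩] at this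
    have := h.base.k8
    omega
  · intro n hn
    rw [mem_erase] at hn
    obtain ⟨w, w1, w2, w3, w4⟩ := h.sees hn.2 hn.1
    by_cases e : n = m
    · refine ⟨v, mem_filter.2 ⟨mem_univ _, v3⟩, ?_, by grind⟩
      simp only [mem_insert, mem_singleton]; grind
    by_cases e' : n = m'
    · refine ⟨t, mem_filter.2 ⟨mem_univ _, t3⟩, ?_, by grind⟩
      simp only [mem_insert, mem_singleton]; grind
    refine ⟨w, mem_filter.2 ⟨mem_univ _, w3⟩, ?_, by grind⟩
    simp only [mem_insert, mem_singleton]; grind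

theorem St.exU (h : St G k P φ x y j) {m : ι} (hm : m ∈ P) (hmj : m ≠ j)
    (hD : ¬ Db G φ x y x m) : ∃ a, Un G φ x y x a m := by
  obtain ⟨a, a1, a2, a3, a4⟩ := h.sees hm hmj
  refine ⟨a, a1, a2, a3, a4, fun v v1 v2 v3 v4 => ?_⟩
  by_contra hne
  exact hD ⟨v, a, hne, v1, v2, a1, a2, v3, a3, v4, a4⟩

/-- letters -/
structure Lt (G : SimpleGraph V) (φ : V → ι) (x y : V) (j : ι) (f : V) (m : ι) : Prop where
  nx : f ≠ x
  ny : f ≠ y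
  ax : G.Adj x f
  ay : G.Adj y f
  col : φ f = m
  nj : ∀ v, v ≠ x → v ≠ y → φ v = j → ¬ G.Adj f v
  un : Un G φ x y x f m ∨ Un G φ x y y f m

theorem St.adj (h : St G k P φ x y j) {m m' : ι} (hm : m ∈ P) (hmj : m ≠ j) (hm' : m' ∈ P)
    (hmj' : m' ≠ j) (hne : m ≠ m') {f f' : V} (hf : Lt G φ x y j f m) (hf' : Lt G φ x y j f' m') :
    G.Adj f f' := by
  by_cases h1 : Un G φ x y x f m ∧ Un G φ x y y f' m'
  · exact h.L3 hm hmj h1.1 hf.nj hm' hmj' hne h1.2 hf'.nj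
  by_cases h2 : Un G φ x y y f m ∧ Un G φ x y x f' m'
  · exact (h.L3 hm' hmj' h2.2 hf'.nj hm hmj hne.symm h2.1 hf.nj).symm
  have dbl : ∀ z n g, G.Adj z g → Lt G φ x y j g n → ¬ Un G φ x y z g n → Db G φ x y z n := by
    intro z n g zg hg hu
    by_contra hD
    refine hu ⟨hg.nx, hg.ny, zg, hg.col, fun v v1 v2 v3 v4 => ?_⟩
    by_contra e
    exact hD ⟨v, g, e, v1, v2, hg.nx, hg.ny, v3, zg, v4, hg.col⟩
  exfalso
  have k1 := hf.un
  have k2 := hf'.un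
  by_cases h3 : Un G φ x y x f m
  · have a1 := dbl y m f hf.ay hf (by tauto)
    have a2 := dbl y m' f' hf'.ay hf' (by tauto)
    exact hne (h.swap.uD a1.swap a2.swap)
  · have a1 := dbl x m f hf.ax hf (by tauto)
    have a2 := dbl x m' f' hf'.ax hf' (by tauto)
    exact hne (h.uD a1 a2)

/-- the clique built from letters -/
noncomputable def LQ (x y : V) (S : Finset ι) (f : ι → V) : Finset V :=
  insert x (insert y (S.image f))

theorem St.clq (h : St G k P φ x y j) {S : Finset ι} (hS : S ⊆ P) (hj : j ∉ S) {f : ι → V}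
    (hf : ∀ m ∈ S, Lt G φ x y j (f m) m) : Clq G (LQ x y S f) ∧ (LQ x y S f).card = S.card + 2 := by
  have hxy := h.xy
  constructor
  · intro a ha b hb hab
    simp only [LQ, mem_insert, mem_image] at ha hb
    have := hxy.symm
    rcases ha with rfl | rfl | ⟨m, hm, rfl⟩ <;> rcases hb with rfl | rfl | ⟨m', hm', rfl⟩
    · exact absurd rfl hab
    · exact hxy
    · exact (hf _ hm').ax
    · exact this
    · exact absurd rfl hab
    · exact (hf _ hm').ay
    · exact (hf _ hm).ax.symm
    · exact (hf _ hm).ay.symm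
    · exact h.adj (hS hm) (fun e => hj (e ▸ hm)) (hS hm') (fun e => hj (e ▸ hm'))
        (by rintro rfl; exact hab rfl) (hf _ hm) (hf _ hm')
  · unfold LQ
    rw [card_insert_of_notMem, card_insert_of_notMem, card_image_of_injOn]
    · intro m hm m' hm' e
      rw [← (hf m hm).col, ← (hf m' hm').col, e]
    · intro e
      obtain ⟨m, hm, e⟩ := mem_image.1 e
      exact (hf m hm).ny e
    · intro e
      rcases mem_insert.1 e with e | e
      · exact hxy.ne e
      obtain ⟨m, hm, e⟩ := mem_image.1 e
      exact (hf m hm).nx e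

theorem St.small (h : St G k P φ x y j) {S : Finset ι} (hS : S ⊆ P) (hj : j ∉ S) {f : ι → V}
    (hf : ∀ m ∈ S, Lt G φ x y j (f m) m) : S.card + 3 ≤ k := by
  by_contra hcon
  obtain ⟨h1, h2⟩ := h.clq hS hj hf
  obtain ⟨W, hW, hk⟩ := exists_subset_card_eq (show k ≤ (LQ x y S f).card by omega)
  exact h.no W hk (fun a ha b hb => h1 a (hW ha) b (hW hb))

/-- (A): no two singletons -/
theorem St.A (h : St G k P φ x y j) (he : ∀ v, v ≠ x → v ≠ y → φ v ≠ j) : False := by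
  have hl : ∀ m, ∃ f, m ∈ P → m ≠ j → ¬ (Db G φ x y x m ∧ Db G φ x y y m) → Lt G φ x y j f m := by
    intro m
    by_cases hm : m ∈ P ∧ m ≠ j ∧ ¬ (Db G φ x y x m ∧ Db G φ x y y m)
    · obtain ⟨h1, h2, h3⟩ := hm
      by_cases hx : Db G φ x y x m
      · obtain ⟨a, ha⟩ := h.swap.exU h1 h2 (fun e => h3 ⟨hx, e.swap⟩)
        have := h.swap.L2 h1 h2 ha (fun v a b c => absurd c (he v b a))
        exact ⟨a, fun _ _ _ => ⟨ha.2.1, ha.1, this, ha.2.2.1, ha.2.2.2.1,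
          fun v a b c => absurd c (he v a b), Or.inr ha.swap⟩⟩
      · obtain ⟨a, ha⟩ := h.exU h1 h2 hx
        have := h.L2 h1 h2 ha (fun v a b c => absurd c (he v a b))
        exact ⟨a, fun _ _ _ => ⟨ha.1, ha.2.1, ha.2.2.1, this, ha.2.2.2.1,
          fun v a b c => absurd c (he v a b), Or.inl ha⟩⟩
    · exact ⟨x, fun a b c => absurd ⟨a, b, c⟩ hm⟩
  choose f hf using hl
  have k8 := h.base.k8
  by_cases hd : ∃ d ∈ P, d ≠ j ∧ Db G φ x y x d
  · obtain ⟨d, hd, hdj, hdx⟩ := hd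
    have := h.small (S := (P.erase j).erase d) (f := f)
      ((erase_subset _ _).trans (erase_subset _ _)) (by simp) (by
        intro m hm
        rw [mem_erase, mem_erase] at hm
        exact hf m hm.2.2 hm.2.1 (fun e => hm.1 (h.uD e.1 hdx)))
    rw [card_erase_of_mem (by rw [mem_erase]; exact ⟨hdj, hd⟩), card_erase_of_mem h.jP, h.hP] at this
    omega
  · push Not at hd
    have := h.small (S := P.erase j) (f := f) (erase_subset _ _) (by simp) (by
        intro m hm
        rw [mem_erase] at hm
        exact hf m hm.2 hm.1 (fun e => hd m hm.2 hm.1 e.1))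
    rw [card_erase_of_mem h.jP, h.hP] at this
    omega

end
end BK

namespace BK
section
open Classical
set_option linter.unusedSectionVars false

variable {V : Type*} [Fintype V] {G : SimpleGraph V} {k : ℕ} {ι : Type*} {P : Finset ι}
  {Q : Finset V} {φ : V → ι}

/-- floating state -/
structure Fl (G : SimpleGraph V) (k : ℕ) (P : Finset ι) (φ : V → ι) (x y : V) (j : ι) (r : V) :
    Prop extends St G k P φ x y j where
  rx : r ≠ x
  ry : r ≠ y
  rj : φ r = j
  jr : ∀ v, v ≠ x → v ≠ y → φ v = j → v = r

variable {x y r : V} {j : ι}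

theorem Fl.swap (h : Fl G k P φ x y j r) : Fl G k P φ y x j r :=
  ⟨h.toSt.swap, h.ry, h.rx, h.rj, fun v a b => h.jr v b a⟩

theorem Fl.xr (h : Fl G k P φ x y j r) : ¬ G.Adj x r := h.jx r h.rx h.ry h.rj
theorem Fl.yr (h : Fl G k P φ x y j r) : ¬ G.Adj y r := h.jy r h.rx h.ry h.rj

theorem Fl.r_sees (h : Fl G k P φ x y j r) {m : ι} (hm : m ∈ P) (hmj : m ≠ j) :
    ∃ v, v ≠ x ∧ v ≠ y ∧ G.Adj r v ∧ φ v = m := by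
  by_contra hcon
  push Not at hcon
  have hst : St G k P (Function.update φ r m) x y j := by
    refine ⟨h.base, h.xy, h.hP, ?_, ?_, h.jP, ?_, ?_, h.no⟩
    · intro u v u1 u2 v1 v2 huv
      have := h.pr u v u1 u2 v1 v2 huv
      have := hcon u u1 u2
      have := hcon v v1 v2
      have := huv.symm
      have := huv.ne
      simp only [Function.update_apply]
      grind
    · intro v v1 v2
      have := h.me v v1 v2
      simp only [Function.update_apply]
      grind
    · intro v v1 v2
      have := h.jx v v1 v2
      simp only [Function.update_apply]
      grind
    · intro v v1 v2
      have := h.jy v v1 v2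
      simp only [Function.update_apply]
      grind
  refine hst.A ?_
  intro v v1 v2
  have := h.jr v v1 v2
  simp only [Function.update_apply]
  grind

theorem Fl.nar (h : Fl G k P φ x y j r) {m : ι} (hm : m ∈ P) (hmj : m ≠ j) {a : V}
    (ha : Un G φ x y x a m) (hr : ¬ Db G φ x y r m) : ¬ G.Adj a r := by
  intro har
  obtain ⟨a1, a2, a3, a4, a5⟩ := ha
  have hxy := h.xy.ne
  have rx := h.rx
  have ry := h.ry
  have hu : ∀ v, v ≠ x → v ≠ y → φ v = m → G.Adj r v → v = a := by
    intro v v1 v2 v3 v4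
    by_contra hne
    exact hr ⟨v, a, hne, v1, v2, a1, a2, v4, har.symm, v3, a4⟩
  have hxr := h.xr
  have hyr := h.yr
  by_cases hay : G.Adj y a
  · have hst : St G k P (fun v => if v = x then m else if v = r then m else φ v) a y j := by
      refine ⟨h.base, hay.symm, h.hP, ?_, ?_, h.jP, ?_, ?_, h.no⟩
      · intro u v u1 u2 v1 v2 huv
        have := h.pr u v
        have := hu u
        have := hu v
        have := a5 u
        have := a5 v
        have := huv.symm
        have := huv.ne
        grind
      · intro v v1 v2
        have := h.me v
        grind
      · intro v v1 v2
        have := h.jr v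
        grind
      · intro v v1 v2
        have := h.jr v
        grind
    refine hst.A ?_
    intro v v1 v2
    have := h.jr v
    grind
  · refine h.base.nc' h.hP
      (fun v => if v = x then m else if v = r then m else if v = a then j else
        if v = y then j else φ v) ?_ ?_
    · intro u v huv
      have := huv.symm
      have := huv.ne
      have := h.pr u v
      have := hu u
      have := hu v
      have := a5 u
      have := a5 v
      have := h.jr u
      have := h.jr v
      grind
    · intro v
      have := h.me v
      have := h.jP
      grind

theorem Fl.letter' (h : Fl G k P φ x y j r) {m : ι} (hm : m ∈ P) (hmj : m ≠ j)
    (hr : ¬ Db G φ x y r m) (hx : ¬ Db G φ x y x m) : ∃ f, Lt G φ x y j f m := by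
  obtain ⟨a, ha⟩ := h.exU hm hmj hx
  have hnr := h.nar hm hmj ha hr
  have hnj : ∀ v, v ≠ x → v ≠ y → φ v = j → ¬ G.Adj a v := by
    intro v v1 v2 v3; rw [h.jr v v1 v2 v3]; exact hnr
  exact ⟨a, ha.1, ha.2.1, ha.2.2.1, h.L2 hm hmj ha hnj, ha.2.2.2.1, hnj, Or.inl ha⟩

theorem Lt.swap {f : V} {m : ι} (h : Lt G φ x y j f m) : Lt G φ y x j f m :=
  ⟨h.ny, h.nx, h.ay, h.ax, h.col, fun v a b => h.nj v b a, h.un.symm.imp Un.swap Un.swap⟩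

theorem Fl.letter (h : Fl G k P φ x y j r) {m : ι} (hm : m ∈ P) (hmj : m ≠ j)
    (hr : ¬ Db G φ x y r m) (hx : ¬ (Db G φ x y x m ∧ Db G φ x y y m)) :
    ∃ f, Lt G φ x y j f m := by
  by_cases h1 : Db G φ x y x m
  · obtain ⟨f, hf⟩ := h.swap.letter' hm hmj (fun e => hr e.swap) (fun e => hx ⟨h1, e.swap⟩)
    exact ⟨f, hf.swap⟩
  · exact h.letter' hm hmj hr h1

theorem St.col' (h : St G k P φ x y j) (S : Finset ι) (f : ι → V) : Col G (LQ x y S f) P φ := by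
  constructor
  · intro u v hu hv
    simp only [LQ, mem_insert, not_or] at hu hv
    exact h.pr u v hu.1 hu.2.1 hv.1 hv.2.1
  · intro v hv
    simp only [LQ, mem_insert, not_or] at hv
    exact h.me v hv.1 hv.2.1

theorem St.out {S : Finset ι} {f : ι → V} (hf : ∀ m ∈ S, Lt G φ x y j (f m) m) {v : V}
    (h1 : v ≠ x) (h2 : v ≠ y) (h3 : φ v ∉ S) : v ∉ LQ x y S f := by
  simp only [LQ, mem_insert, not_or, mem_image, not_exists]
  refine ⟨h1, h2, ?_⟩
  rintro m ⟨hm, rfl⟩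
  rw [(hf m hm).col] at h3
  exact h3 hm

theorem St.full (h : St G k P φ x y j) {S : Finset ι} (hS : S ⊆ P) (hj : j ∉ S) {f : ι → V}
    (hf : ∀ m ∈ S, Lt G φ x y j (f m) m) {b : ι} (hb : b ∈ P) (hbj : b ≠ j) (hbS : b ∉ S) :
    Full G (LQ x y S f) φ b := by
  intro z hz
  have key : ∃ v, v ≠ x ∧ v ≠ y ∧ G.Adj z v ∧ φ v = b := by
    simp only [LQ, mem_insert, mem_image] at hz
    rcases hz with rfl | rfl | ⟨m, hm, rfl⟩
    · exact h.sees hb hbj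
    · obtain ⟨v, a1, a2, a3⟩ := h.swap.sees hb hbj
      exact ⟨v, a2, a1, a3⟩
    · have hmj : m ≠ j := fun e => hj (e ▸ hm)
      have hbm : b ≠ m := fun e => hbS (e ▸ hm)
      rcases (hf m hm).un with hu | hu
      · exact h.L4 (hS hm) hmj hu hb hbj hbm
      · obtain ⟨v, a1, a2, a3⟩ := h.swap.L4 (hS hm) hmj hu.swap hb hbj hbm
        exact ⟨v, a2, a1, a3⟩
  obtain ⟨v, v1, v2, v3, v4⟩ := key
  exact ⟨v, St.out hf v1 v2 (by rwa [v4]), v3, v4⟩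

/-- counting at `r` -/
theorem Fl.rcount (h : Fl G k P φ x y j r) {E : Finset V} (hE : ∀ u ∈ E, G.Adj r u)
    (h3 : E.card = 3) (h2 : ∀ m ∈ P, m ≠ j → (∃ u ∈ E, φ u = m) →
      ∃ v, v ∉ E ∧ G.Adj r v ∧ φ v = m) : False := by
  have := count (univ.filter (fun w => G.Adj r w)) E φ (P.erase j)
    (fun u hu => mem_filter.2 ⟨mem_univ _, hE u hu⟩) ?_
  · rw [card_erase_of_mem h.jP, h.hP] at this
    have := h.base.deg r
    have := h.base.k8
    omega
  · intro m hm
    rw [mem_erase] at hm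
    by_cases e : ∃ u ∈ E, φ u = m
    · obtain ⟨v, v1, v2, v3⟩ := h2 m hm.2 hm.1 e
      exact ⟨v, mem_filter.2 ⟨mem_univ _, v2⟩, v1, v3⟩
    · obtain ⟨v, v1, v2, v3, v4⟩ := h.r_sees hm.2 hm.1
      exact ⟨v, mem_filter.2 ⟨mem_univ _, v3⟩, fun hv => e ⟨v, hv, v4⟩, v4⟩

theorem Fl.b2 (h : Fl G k P φ x y j r) {a b c : ι} (hab : a ≠ b) (hac : a ≠ c) (hbc : b ≠ c)
    (ha : Db G φ x y r a) (hb : Db G φ x y r b) (hc : Db G φ x y r c) : False := by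
  obtain ⟨u, v, uv, u1, u2, v1, v2, u3, v3, u4, v4⟩ := ha
  obtain ⟨s, t, st, s1, s2, t1, t2, s3, t3, s4, t4⟩ := hb
  obtain ⟨p, q, pq, p1, p2, q1, q2, p3, q3, p4, q4⟩ := hc
  refine h.rcount (E := {u, s, p}) ?_ ?_ ?_
  · simp only [mem_insert, mem_singleton]; grind
  · exact card_eq_three.2 ⟨u, s, p, by grind, by grind, by grind, rfl⟩
  · simp only [mem_insert, mem_singleton]
    rintro m _ _ ⟨w, rfl | rfl | rfl, hw⟩
    · exact ⟨v, by grind, v3, by grind⟩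
    · exact ⟨t, by grind, t3, by grind⟩
    · exact ⟨q, by grind, q3, by grind⟩

theorem Fl.r3 (h : Fl G k P φ x y j r) {a b : ι} (hab : a ≠ b)
    (hb : Db G φ x y r b) {Q : Finset V} (h3 : (cls Q φ a).card = 3) :
    ∃ u, u ∉ Q ∧ φ u = a ∧ ¬ G.Adj u r := by
  by_contra hcon
  push Not at hcon
  obtain ⟨p, q, w, pq, pw, qw, he⟩ := card_eq_three.1 h3
  have hm : ∀ u ∈ ({p, q, w} : Finset V), G.Adj r u ∧ φ u = a := by
    intro u hu
    rw [← he, mem_cls] at hu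
    exact ⟨(hcon u hu.1 hu.2).symm, hu.2⟩
  have hp := hm p (by simp)
  have hq := hm q (by simp)
  have hw := hm w (by simp)
  obtain ⟨s, t, st, s1, s2, t1, t2, s3, t3, s4, t4⟩ := hb
  refine h.rcount (E := {p, q, s}) ?_ ?_ ?_
  · simp only [mem_insert, mem_singleton]; grind
  · exact card_eq_three.2 ⟨p, q, s, by grind, by grind, by grind, rfl⟩
  · simp only [mem_insert, mem_singleton]
    rintro m _ _ ⟨z, rfl | rfl | rfl, hz⟩
    · exact ⟨w, by grind, hw.1, by grind⟩
    · exact ⟨w, by grind, hw.1, by grind⟩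
    · exact ⟨t, by grind, t3, by grind⟩

theorem Fl.B2 (h : Fl G k P φ x y j r) :
    ((P.erase j).filter (fun m => Db G φ x y r m)).card ≤ 2 := by
  by_contra hcon
  push Not at hcon
  obtain ⟨a, b, c, ha, hb, hc, h1, h2, h3⟩ := two_lt_card_iff.1 hcon
  exact h.b2 h1 h2 h3 (mem_filter.1 ha).2 (mem_filter.1 hb).2 (mem_filter.1 hc).2

theorem Fl.dd (h : Fl G k P φ x y j r) :
    ∃ d ∈ P, d ≠ j ∧ ¬ Db G φ x y r d ∧ Db G φ x y x d ∧ Db G φ x y y d := by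
  by_contra hcon
  push Not at hcon
  have k8 := h.base.k8
  have hl : ∀ m, ∃ f, m ∈ P → m ≠ j → ¬ Db G φ x y r m → Lt G φ x y j f m := by
    intro m
    by_cases hm : m ∈ P ∧ m ≠ j ∧ ¬ Db G φ x y r m
    · obtain ⟨f, hf⟩ := h.letter hm.1 hm.2.1 hm.2.2
        (fun e => hcon m hm.1 hm.2.1 hm.2.2 e.1 e.2)
      exact ⟨f, fun _ _ _ => hf⟩
    · exact ⟨x, fun a b c => absurd ⟨a, b, c⟩ hm⟩
  choose f hf using hl
  have hB2 := h.B2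
  set S := (P.erase j).filter (fun m => ¬ Db G φ x y r m) with hSdef
  have hS : ∀ m, m ∈ S ↔ m ≠ j ∧ m ∈ P ∧ ¬ Db G φ x y r m := by
    intro m; rw [hSdef, mem_filter, mem_erase]; tauto
  have hSP : S ⊆ P := fun m hm => ((hS m).1 hm).2.1
  have hSj : j ∉ S := fun e => ((hS j).1 e).1 rfl
  have hLt : ∀ m ∈ S, Lt G φ x y j (f m) m := fun m hm =>
    hf m ((hS m).1 hm).2.1 ((hS m).1 hm).1 ((hS m).1 hm).2.2
  have hsmall := h.small hSP hSj hLt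
  have hcard : ((P.erase j).filter (fun m => Db G φ x y r m)).card + S.card = k - 1 := by
    rw [hSdef, card_filter_add_card_filter_not, card_erase_of_mem h.jP, h.hP]
  obtain ⟨b, b', bb, hBe⟩ := card_eq_two.1
    (show ((P.erase j).filter (fun m => Db G φ x y r m)).card = 2 by omega)
  have hBm : ∀ m, (m = b ∨ m = b') ↔ (m ≠ j ∧ m ∈ P) ∧ Db G φ x y r m := by
    intro m
    have : m ∈ ((P.erase j).filter (fun m => Db G φ x y r m)) ↔ m ∈ ({b, b'} : Finset ι) := by
      rw [hBe]
    rw [mem_filter, mem_erase, mem_insert, mem_singleton] at this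
    exact this.symm
  obtain ⟨hclq, hc⟩ := h.clq hSP hSj hLt
  have hb := (hBm b).1 (Or.inl rfl)
  have hb' := (hBm b').1 (Or.inr rfl)
  have hbS : b ∉ S := fun e => ((hS b).1 e).2.2 hb.2
  have hbS' : b' ∉ S := fun e => ((hS b').1 e).2.2 hb'.2
  have hmS : ∀ m ∈ P, m ≠ b → m ≠ b' → m ≠ j → m ∈ S := by
    intro m h1 h2 h3 h4
    rw [hS]
    refine ⟨h4, h1, fun e => ?_⟩
    rcases (hBm m).2 ⟨⟨h4, h1⟩, e⟩ with e | e
    exacts [h2 e, h3 e]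
  have hT : T20 G k (LQ x y S f) P φ b b' j r f :=
    { base := h.base, clq := hclq, hP := h.hP, col := h.col' S f, card := by omega, bb := bb
      jb := hb.1.1.symm, jb' := hb'.1.1.symm, jP := h.jP
      fb := h.full hSP hSj hLt hb.1.2 hb.1.1 hbS
      fb' := h.full hSP hSj hLt hb'.1.2 hb'.1.1 hbS'
      rQ := St.out hLt h.rx h.ry (by rwa [h.rj])
      rj := h.rj
      jr := fun v hv hj => by
        simp only [LQ, mem_insert, not_or] at hv
        exact h.jr v hv.1 hv.2.1 hj
      nr := by
        intro z hz
        simp only [LQ, mem_insert, mem_image] at hz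
        rcases hz with rfl | rfl | ⟨m, hm, rfl⟩
        · exact h.xr
        · exact h.yr
        · exact (hLt m hm).nj r h.rx h.ry h.rj
      miss := by
        intro m h1 h2 h3 h4
        have hm := hmS m h1 h2 h3 h4
        refine ⟨?_, ?_⟩
        · simp only [LQ, mem_insert, mem_image]; exact Or.inr (Or.inr ⟨m, hm, rfl⟩)
        · rintro ⟨v, v1, v2, v3⟩
          simp only [LQ, mem_insert, not_or] at v1
          have l := hLt m hm
          exact h.pr _ v l.nx l.ny v1.1 v1.2.1 v2 (l.col.trans v3.symm)
      inj := by
        intro m h1 n g1 h2 h3 h4 g2 g3 g4 e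
        rw [← (hLt m (hmS m h1 h2 h3 h4)).col, ← (hLt n (hmS n g1 g2 g3 g4)).col, e]
      rb := fun e => h.r3 bb hb'.2 e
      rb' := fun e => h.r3 bb.symm hb.2 e
      no := h.no }
  exact hT.false

theorem Fl.step (h : Fl G k P φ x y j r) {f : V} {m : ι} (hm : m ∈ P) (hmj : m ≠ j)
    (hf : Lt G φ x y j f m) (hu : Un G φ x y x f m) :
    Fl G k P (Function.update φ x m) f y j r := by
  obtain ⟨a1, a2, a3, a4, a5⟩ := hu
  have hxy := h.xy.ne
  have rj := h.rj
  refine ⟨⟨h.base, hf.ay.symm, h.hP, ?_, ?_, h.jP, ?_, ?_, h.no⟩, ?_, h.ry, ?_, ?_⟩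
  · intro u v u1 u2 v1 v2 huv
    have := h.pr u v
    have := a5 u
    have := a5 v
    have := huv.symm
    have := huv.ne
    simp only [Function.update_apply]
    grind
  · intro v v1 v2
    have := h.me v
    simp only [Function.update_apply]
    grind
  · intro v v1 v2
    have := hf.nj v
    simp only [Function.update_apply]
    grind
  · intro v v1 v2
    have := h.jy v
    simp only [Function.update_apply]
    grind
  · rintro rfl; exact hmj (a4.symm.trans rj)
  · rw [Function.update_of_ne h.rx]; exact rj
  · intro v v1 v2
    have := h.jr v
    simp only [Function.update_apply]
    grind

theorem Fl.dbl (h : Fl G k P φ x y j r) {f : V} {m d : ι} (hm : m ∈ P) (hmj : m ≠ j)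
    (hf : Lt G φ x y j f m) (hu : Un G φ x y x f m) (hd : Db G φ x y y d) (hmd : m ≠ d) :
    Db G φ x y f d := by
  have h' := h.step hm hmj hf hu
  obtain ⟨e, he, hej, _, h1, h2⟩ := h'.dd
  have hfc := hf.col
  have hyd : Db G (Function.update φ x m) f y y d := by
    obtain ⟨u, v, uv, u1, u2, v1, v2, u3, v3, u4, v4⟩ := hd
    refine ⟨u, v, uv, ?_, u2, ?_, v2, u3, v3, ?_, ?_⟩
    · rintro rfl; exact hmd (hfc.symm.trans u4)
    · rintro rfl; exact hmd (hfc.symm.trans v4)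
    · rw [Function.update_of_ne u1]; exact u4
    · rw [Function.update_of_ne v1]; exact v4
  have hed : e = d := h'.swap.uD h2.swap hyd.swap
  subst hed
  obtain ⟨u, v, uv, u1, u2, v1, v2, u3, v3, u4, v4⟩ := h1
  have ux : u ≠ x := by rintro rfl; rw [Function.update_self] at u4; exact hmd u4
  have vx : v ≠ x := by rintro rfl; rw [Function.update_self] at v4; exact hmd v4
  rw [Function.update_of_ne ux] at u4
  rw [Function.update_of_ne vx] at v4
  exact ⟨u, v, uv, ux, u2, vx, v2, u3, v3, u4, v4⟩

theorem Fl.false (h : Fl G k P φ x y j r) : False := by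
  have k8 := h.base.k8
  obtain ⟨d, hd, hdj, hdr, hdx, hdy⟩ := h.dd
  have hl : ∀ m, ∃ f, m ∈ P → m ≠ j → ¬ Db G φ x y r m → m ≠ d → Lt G φ x y j f m := by
    intro m
    by_cases hm : m ∈ P ∧ m ≠ j ∧ ¬ Db G φ x y r m ∧ m ≠ d
    · obtain ⟨f, hf⟩ := h.letter hm.1 hm.2.1 hm.2.2.1
        (fun e => hm.2.2.2 (h.uD e.1 hdx))
      exact ⟨f, fun _ _ _ _ => hf⟩
    · exact ⟨x, fun a b c e => absurd ⟨a, b, c, e⟩ hm⟩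
  choose f hf using hl
  have hB2 := h.B2
  set B := (P.erase j).filter (fun m => Db G φ x y r m) with hBdef
  set S := ((P.erase j).filter (fun m => ¬ Db G φ x y r m)).erase d with hSdef
  have hS : ∀ m, m ∈ S ↔ m ≠ j ∧ m ∈ P ∧ ¬ Db G φ x y r m ∧ m ≠ d := by
    intro m; rw [hSdef, mem_erase, mem_filter, mem_erase]; tauto
  have hB : ∀ m, m ∈ B ↔ m ≠ j ∧ m ∈ P ∧ Db G φ x y r m := by
    intro m; rw [hBdef, mem_filter, mem_erase]; tauto
  have hSP : S ⊆ P := fun m hm => ((hS m).1 hm).2.1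
  have hSj : j ∉ S := fun e => ((hS j).1 e).1 rfl
  have hdS : d ∉ S := fun e => ((hS d).1 e).2.2.2 rfl
  have hLt : ∀ m ∈ S, Lt G φ x y j (f m) m := fun m hm =>
    hf m ((hS m).1 hm).2.1 ((hS m).1 hm).1 ((hS m).1 hm).2.2.1 ((hS m).1 hm).2.2.2
  have hsmall := h.small hSP hSj hLt
  have hcard : B.card + (S.card + 1) = k - 1 := by
    rw [hSdef, card_erase_add_one (by rw [mem_filter, mem_erase]; exact ⟨⟨hdj, hd⟩, hdr⟩),
      hBdef, card_filter_add_card_filter_not, card_erase_of_mem h.jP, h.hP]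
  obtain ⟨hclq, hc⟩ := h.clq hSP hSj hLt
  have hD : DD G k (LQ x y S f) P φ B d j r :=
    { base := h.base, clq := hclq, hP := h.hP, col := h.col' S f, card := by omega, B2 := hB2
      dB := fun e => hdr ((hB d).1 e).2.2
      jB := fun e => ((hB j).1 e).1 rfl
      jd := hdj.symm, jP := h.jP
      dd := by
        intro z hz
        have : Db G φ x y z d := by
          simp only [LQ, mem_insert, mem_image] at hz
          rcases hz with rfl | rfl | ⟨m, hm, rfl⟩
          · exact hdx
          · exact hdy
          · have hm' := (hS m).1 hm
            rcases (hLt m hm).un with hu | hu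
            · exact h.dbl hm'.2.1 hm'.1 (hLt m hm) hu hdy hm'.2.2.2
            · exact (h.swap.dbl hm'.2.1 hm'.1 (hLt m hm).swap hu.swap hdx.swap hm'.2.2.2).swap
        obtain ⟨u, v, uv, u1, u2, v1, v2, u3, v3, u4, v4⟩ := this
        exact ⟨u, v, uv, St.out hLt u1 u2 (by rwa [u4]), St.out hLt v1 v2 (by rwa [v4]),
          u3, v3, u4, v4⟩
      fB := by
        intro b hb
        have hb := (hB b).1 hb
        exact h.full hSP hSj hLt hb.2.1 hb.1 (fun e => ((hS b).1 e).2.2.1 hb.2.2)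
      jr := fun v hv hj => by
        simp only [LQ, mem_insert, not_or] at hv
        exact h.jr v hv.1 hv.2.1 hj
      rd := by
        intro u v hu hv u1 v1 u2 v2
        simp only [LQ, mem_insert, not_or] at hu hv
        by_contra hne
        exact hdr ⟨u, v, hne, hu.1, hu.2.1, hv.1, hv.2.1, u2.symm, v2.symm, u1, v1⟩
      rb := by
        intro hB2 b hb h3
        obtain ⟨b', hb', hne⟩ := exists_mem_ne (show 1 < B.card by omega) b
        exact h.r3 hne.symm ((hB b').1 hb').2.2 h3
      no := h.no }
  exact hD.false (card_pos.1 (by omega))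

end
end BK

namespace BK
section
open Classical
set_option linter.unusedSectionVars false

variable {V : Type*} [Fintype V] {G : SimpleGraph V} {k : ℕ} {ι : Type*} {P : Finset ι}
  {Q : Finset V} {φ : V → ι}

/-- one uncoloured vertex and a pair class -/
structure Tk (G : SimpleGraph V) (k : ℕ) (P : Finset ι) (φ : V → ι) (x y r : V) (j : ι) :
    Prop where
  base : Base G k
  hP : P.card = k
  pr : ∀ u v, u ≠ x → v ≠ x → G.Adj u v → φ u ≠ φ v
  me : ∀ v, v ≠ x → φ v ∈ P
  jP : j ∈ P
  yx : y ≠ x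
  rx : r ≠ x
  yr : y ≠ r
  yj : φ y = j
  rj : φ r = j
  jc : ∀ v, v ≠ x → φ v = j → v = y ∨ v = r
  no : ∀ W : Finset V, W.card = k → ¬ Clq G W

variable {x y r : V} {j : ι}

theorem Tk.swap (h : Tk G k P φ x y r j) : Tk G k P φ x r y j :=
  ⟨h.base, h.hP, h.pr, h.me, h.jP, h.rx, h.yx, h.yr.symm, h.rj, h.yj, fun v a b => (h.jc v a b).symm,
    h.no⟩

theorem Tk.sees (h : Tk G k P φ x y r j) {m : ι} (hm : m ∈ P) :
    ∃ v, v ≠ x ∧ G.Adj x v ∧ φ v = m := by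
  by_contra hcon
  push Not at hcon
  refine h.base.nc' h.hP (fun v => if v = x then m else φ v) ?_ ?_
  · intro u v huv
    have := huv.symm
    have := huv.ne
    have := h.pr u v
    have := hcon u
    have := hcon v
    grind
  · intro v
    have := h.me v
    grind

theorem Tk.adj_y (h : Tk G k P φ x y r j) : G.Adj x y := by
  by_contra hxy
  obtain ⟨v, v1, v2, v3⟩ := h.sees h.jP
  have hxr : G.Adj x r := by
    rcases h.jc v v1 v3 with rfl | rfl
    exacts [absurd v2 hxy, v2]
  have hry : ¬ G.Adj r y := fun e => h.pr r y h.rx h.yx e (h.rj.trans h.yj.symm)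
  have hfl : Fl G k P φ x r j y := by
    refine ⟨⟨h.base, hxr, h.hP, fun u v a _ b _ => h.pr u v a b, fun v a _ => h.me v a, h.jP,
      ?_, ?_, h.no⟩, h.yx, h.yr, h.yj, ?_⟩
    · intro v v1 v2 v3
      rcases h.jc v v1 v3 with rfl | rfl
      exacts [hxy, absurd rfl v2]
    · intro v v1 v2 v3
      rcases h.jc v v1 v3 with rfl | rfl
      exacts [hry, absurd rfl v2]
    · intro v v1 v2 v3
      rcases h.jc v v1 v3 with rfl | rfl
      exacts [rfl, absurd rfl v2]
  exact hfl.false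

theorem Tk.adj_r (h : Tk G k P φ x y r j) : G.Adj x r := h.swap.adj_y

theorem Tk.uniq (h : Tk G k P φ x y r j) {m : ι} (hm : m ∈ P) (hmj : m ≠ j) :
    ∃ a, a ≠ x ∧ G.Adj x a ∧ φ a = m ∧ ∀ v, v ≠ x → G.Adj x v → φ v = m → v = a := by
  obtain ⟨a, a1, a2, a3⟩ := h.sees hm
  refine ⟨a, a1, a2, a3, fun v v1 v2 v3 => ?_⟩
  by_contra hne
  have hy := h.adj_y
  have hr := h.adj_r
  have yj := h.yj
  have rj := h.rj
  have yr := h.yr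
  have := count (univ.filter (fun w => G.Adj x w)) {y, v} φ P ?_ ?_
  · rw [h.hP, card_pair (by rintro rfl; exact hmj (v3.symm.trans yj))] at this
    have := h.base.deg x
    omega
  · intro w hw
    simp only [mem_insert, mem_singleton] at hw
    refine mem_filter.2 ⟨mem_univ _, ?_⟩
    rcases hw with rfl | rfl <;> assumption
  · intro n hn
    simp only [mem_insert, mem_singleton]
    by_cases e : n = j
    · exact ⟨r, mem_filter.2 ⟨mem_univ _, hr⟩, by grind, by grind⟩
    by_cases e' : n = m
    · exact ⟨a, mem_filter.2 ⟨mem_univ _, a2⟩, by grind, by grind⟩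
    obtain ⟨w, w1, w2, w3⟩ := h.sees hn
    exact ⟨w, mem_filter.2 ⟨mem_univ _, w2⟩, by grind, by grind⟩

theorem Tk.step (h : Tk G k P φ x y r j) {m : ι} (hm : m ∈ P) (hmj : m ≠ j) {a : V}
    (a1 : a ≠ x) (a2 : G.Adj x a) (a3 : φ a = m)
    (a4 : ∀ v, v ≠ x → G.Adj x v → φ v = m → v = a) :
    Tk G k P (Function.update φ x m) a y r j := by
  have yj := h.yj
  have rj := h.rj
  refine ⟨h.base, h.hP, ?_, ?_, h.jP, ?_, ?_, h.yr, ?_, ?_, ?_, h.no⟩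
  · intro u v u1 v1 huv
    have := h.pr u v
    have := a4 u
    have := a4 v
    have := huv.symm
    have := huv.ne
    simp only [Function.update_apply]
    grind
  · intro v v1
    have := h.me v
    simp only [Function.update_apply]
    grind
  · rintro rfl; exact hmj (a3.symm.trans yj)
  · rintro rfl; exact hmj (a3.symm.trans rj)
  · rw [Function.update_of_ne h.yx]; exact yj
  · rw [Function.update_of_ne h.rx]; exact rj
  · intro v v1
    have := h.jc v
    simp only [Function.update_apply]
    grind

/-- a second letter at colour `n` -/
theorem Tk.second (h : Tk G k P φ x y r j) {m n : ι} (hm : m ∈ P) (hmj : m ≠ j) {a b : V}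
    (a1 : a ≠ x) (a2 : G.Adj x a) (a3 : φ a = m)
    (a4 : ∀ v, v ≠ x → G.Adj x v → φ v = m → v = a) (hn : n ∈ P) (hnj : n ≠ j) (hmn : m ≠ n)
    (hab : ¬ G.Adj a b) : ∃ d, d ≠ x ∧ d ≠ b ∧ φ d = n ∧ G.Adj y d := by
  have h' := h.step hm hmj a1 a2 a3 a4
  obtain ⟨d, d1, d2, d3, d4⟩ := h'.uniq hn hnj
  have h'' := h'.step hn hnj d1 d2 d3 d4
  have dx : d ≠ x := by rintro rfl; rw [Function.update_self] at d3; exact hmn d3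
  rw [Function.update_of_ne dx] at d3
  exact ⟨d, dx, by rintro rfl; exact hab d2, d3, h''.adj_y.symm⟩

theorem Tk.false (h : Tk G k P φ x y r j) : False := by
  have hl : ∀ m, ∃ a, m ∈ P → m ≠ j → (a ≠ x ∧ G.Adj x a ∧ φ a = m ∧
      ∀ v, v ≠ x → G.Adj x v → φ v = m → v = a) := by
    intro m
    by_cases hm : m ∈ P ∧ m ≠ j
    · obtain ⟨a, ha⟩ := h.uniq hm.1 hm.2
      exact ⟨a, fun _ _ => ha⟩
    · exact ⟨x, fun a b => absurd ⟨a, b⟩ hm⟩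
  choose f hf using hl
  have k8 := h.base.k8
  by_cases hall : ∀ m ∈ P, m ≠ j → ∀ n ∈ P, n ≠ j → m ≠ n → G.Adj (f m) (f n)
  · refine h.no (insert x ((P.erase j).image f)) ?_ ?_
    · rw [card_insert_of_notMem, card_image_of_injOn, card_erase_of_mem h.jP, h.hP]
      · omega
      · intro m hm n hn e
        rw [mem_coe, mem_erase] at hm hn
        rw [← (hf m hm.2 hm.1).2.2.1, ← (hf n hn.2 hn.1).2.2.1, e]
      · intro e
        obtain ⟨m, hm, e⟩ := mem_image.1 e
        rw [mem_erase] at hm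
        exact (hf m hm.2 hm.1).1 e
    · intro a ha b hb hab
      simp only [mem_insert, mem_image, mem_erase] at ha hb
      rcases ha with rfl | ⟨m, hm, rfl⟩ <;> rcases hb with rfl | ⟨n, hn, rfl⟩
      · exact absurd rfl hab
      · exact (hf n hn.2 hn.1).2.1
      · exact (hf m hm.2 hm.1).2.1.symm
      · exact hall m hm.2 hm.1 n hn.2 hn.1 (by rintro rfl; exact hab rfl)
  · push Not at hall
    obtain ⟨m, hm, hmj, n, hn, hnj, hmn, hna⟩ := hall
    have fm := hf m hm hmj
    have fn := hf n hn hnj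
    obtain ⟨d, d1, d2, d3, d4⟩ := h.second hm hmj fm.1 fm.2.1 fm.2.2.1 fm.2.2.2 hn hnj hmn hna
    obtain ⟨e, e1, e2, e3, e4⟩ := h.second hn hnj fn.1 fn.2.1 fn.2.2.1 fn.2.2.2 hm hmj hmn.symm
      (fun z => hna z.symm)
    have hy := h.adj_y.symm
    have hde : d ≠ e := by rintro rfl; exact hmn (e3.symm.trans d3)
    have := count (univ.filter (fun w => G.Adj y w)) {x, d, e} φ (P.erase j) ?_ ?_
    · rw [card_erase_of_mem h.jP, h.hP,
        card_eq_three.2 ⟨x, d, e, d1.symm, e1.symm, hde, rfl⟩] at this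
      have := h.base.deg y
      omega
    · intro w hw
      simp only [mem_insert, mem_singleton] at hw
      refine mem_filter.2 ⟨mem_univ _, ?_⟩
      rcases hw with rfl | rfl | rfl <;> assumption
    · intro l hl
      rw [mem_erase] at hl
      have fl := hf l hl.2 hl.1
      have := (h.step hl.2 hl.1 fl.1 fl.2.1 fl.2.2.1 fl.2.2.2).adj_y.symm
      refine ⟨f l, mem_filter.2 ⟨mem_univ _, this⟩, ?_, fl.2.2.1⟩
      simp only [mem_insert, mem_singleton, not_or]
      have fl1 := fl.1
      have fl3 := fl.2.2.1
      have fm3 := fm.2.2.1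
      have fn3 := fn.2.2.1
      refine ⟨fl1, ?_, ?_⟩ <;> grind

/-- if some class has at most two vertices, contradiction -/
theorem small_class (hb : Base G k) (no : ∀ W : Finset V, W.card = k → ¬ Clq G W)
    (hP : P.card = k) {x : V} (pr : ∀ u v, u ≠ x → v ≠ x → G.Adj u v → φ u ≠ φ v)
    (me : ∀ v, v ≠ x → φ v ∈ P) {j : ι} (hj : j ∈ P)
    (h2 : (cls {x} φ j).card ≤ 2) : False := by
  have sees : ∃ v, v ≠ x ∧ G.Adj x v ∧ φ v = j := by
    by_contra hcon
    push Not at hcon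
    refine hb.nc' hP (fun v => if v = x then j else φ v) ?_ ?_
    · intro u v huv
      have := huv.symm
      have := huv.ne
      have := pr u v
      have := hcon u
      have := hcon v
      grind
    · intro v
      have := me v
      grind
  obtain ⟨y, y1, y2, y3⟩ := sees
  have hmem : ∀ v, v ∈ cls {x} φ j ↔ v ≠ x ∧ φ v = j := by
    intro v; rw [mem_cls, mem_singleton]
  by_cases hr : ∃ r, r ≠ x ∧ φ r = j ∧ y ≠ r
  · obtain ⟨r, r1, r2, r3⟩ := hr
    have hk : Tk G k P φ x y r j := by
      refine ⟨hb, hP, pr, me, hj, y1, r1, r3, y3, r2, ?_, no⟩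
      intro v v1 v2
      by_contra hcon
      push Not at hcon
      have : ({y, r, v} : Finset V) ⊆ cls {x} φ j := by
        intro w hw
        simp only [mem_insert, mem_singleton] at hw
        rw [hmem]
        rcases hw with rfl | rfl | rfl
        exacts [⟨y1, y3⟩, ⟨r1, r2⟩, ⟨v1, v2⟩]
      have := card_le_card this
      rw [card_eq_three.2 ⟨y, r, v, r3, hcon.1.symm, hcon.2.symm, rfl⟩] at this
      omega
    exact hk.false
  · push Not at hr
    have he : ∀ v, v ≠ x → v ≠ y → φ v ≠ j := fun v v1 v2 v3 => v2 (hr v v1 v3).symm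
    have hst : St G k P φ x y j :=
      ⟨hb, y2, hP, fun u v a _ b _ => pr u v a b, fun v a _ => me v a, hj,
        fun v a b c => absurd c (he v a b), fun v a b c => absurd c (he v a b), no⟩
    exact hst.A he

set_option maxHeartbeats 1000000 in
/-- (N) -/
theorem big_n (hb : Base G k) (no : ∀ W : Finset V, W.card = k → ¬ Clq G W)
    (hn : 3 * k + 1 ≤ Fintype.card V) : False := by
  have k8 := hb.k8
  have nok : ∀ W : Finset V, Clq G W → W.card + 1 ≤ k := by
    intro W hW
    by_contra hcon
    obtain ⟨W', h1, h2⟩ := exists_subset_card_eq (show k ≤ W.card by omega)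
    exact no W' h2 (fun a ha b hb => hW a (h1 ha) b (h1 hb))
  have cn : ∀ u v, u ≠ v → ¬ G.Adj u v → ∀ C : Finset V, (∀ w ∈ C, G.Adj u w ∧ G.Adj v w) →
      C.card ≤ 2 := by
    intro u v huv hna C hC
    have hu := hb.deg u
    have hv := hb.deg v
    set A := univ.filter (fun w => G.Adj u w)
    set B := univ.filter (fun w => G.Adj v w)
    have h1 : C.card ≤ (A ∩ B).card := card_le_card (fun w hw =>
      mem_inter.2 ⟨mem_filter.2 ⟨mem_univ _, (hC w hw).1⟩, mem_filter.2 ⟨mem_univ _, (hC w hw).2⟩⟩)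
    have h2 := card_union_add_card_inter A B
    have h3 : ((univ \ (A ∪ B)) \ {u, v}).card + 1 ≤ k := by
      apply nok
      intro a ha b hb' hab
      by_contra hcon
      simp only [A, B, mem_sdiff, mem_univ, mem_union, mem_filter, true_and, not_or, mem_insert,
        mem_singleton] at ha hb'
      exact hb.alpha u v a b huv (fun e => ha.2.1 e.symm) (fun e => hb'.2.1 e.symm)
        (fun e => ha.2.2 e.symm) (fun e => hb'.2.2 e.symm) hab hna ha.1.1 hb'.1.1 ha.1.2 hb'.1.2
        hcon
    have h4 := le_card_sdiff ({u, v} : Finset V) (univ \ (A ∪ B))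
    have h5 := le_card_sdiff (A ∪ B) (univ : Finset V)
    have h6 : ({u, v} : Finset V).card ≤ 2 := card_le_two
    rw [card_univ] at h5
    omega
  have ccl : ∀ A C : Finset V, Clq G A → 3 ≤ A.card → (∀ x ∈ C, ∀ a ∈ A, G.Adj x a) →
      A.card + C.card + 1 ≤ k := by
    intro A C hA h3 hC
    have hd : Disjoint A C := by
      rw [Finset.disjoint_left]
      intro a ha ha'
      exact (hC a ha' a ha).ne rfl
    rw [← card_union_of_disjoint hd]
    apply nok
    intro a ha b hb' hab
    rw [mem_union] at ha hb'
    rcases ha with ha | ha <;> rcases hb' with hb' | hb'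
    · exact hA a ha b hb' hab
    · exact (hC b hb' a ha).symm
    · exact hC a ha b hb'
    · by_contra hcon
      have := cn a b hab hcon A (fun w hw => ⟨hC a ha w hw, hC b hb' w hw⟩)
      omega
  obtain ⟨q⟩ : Nonempty V := Fintype.card_pos_iff.1 (by omega)
  set W := univ.filter (fun w => w ≠ q ∧ ¬ G.Adj q w) with hW
  have hWm : ∀ w, w ∈ W ↔ w ≠ q ∧ ¬ G.Adj q w := by intro w; rw [hW, mem_filter]; simp
  have hWc : 2 * k - 1 ≤ W.card := by
    have h1 := hb.deg q
    have h2 : (univ : Finset V) ⊆ insert q (univ.filter (fun w => G.Adj q w) ∪ W) := by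
      intro w _
      simp only [mem_insert, mem_union, hWm, mem_filter, mem_univ, true_and]
      tauto
    have h3 := card_le_card h2
    have h4 := card_insert_le q (univ.filter (fun w => G.Adj q w) ∪ W)
    have h5 := card_union_le (univ.filter (fun w => G.Adj q w)) W
    rw [card_univ] at h3
    omega
  have a3 : ∀ a ∈ W, ∀ b ∈ W, ∀ c ∈ W, a ≠ b → a ≠ c → b ≠ c → ¬ G.Adj a b → ¬ G.Adj a c →
      G.Adj b c := by
    intro a ha b hb' c hc h1 h2 h3 h4 h5
    by_contra h6
    rw [hWm] at ha hb' hc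
    exact hb.alpha q a b c ha.1.symm hb'.1.symm hc.1.symm h1 h2 h3 ha.2 hb'.2 hc.2 h4 h5 h6
  have : ∃ u ∈ W, ∃ v ∈ W, u ≠ v ∧ ¬ G.Adj u v := by
    by_contra hcon
    push Not at hcon
    have := nok W hcon
    omega
  obtain ⟨u, hu, v, hv, huv, hna⟩ := this
  have hna' : ¬ G.Adj v u := fun e => hna e.symm
  set A := W.filter (fun w => w ≠ v ∧ ¬ G.Adj v w) with hA
  set B := W.filter (fun w => w ≠ u ∧ ¬ G.Adj u w) with hB
  set N := W.filter (fun w => G.Adj u w ∧ G.Adj v w) with hN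
  have hAm : ∀ w, w ∈ A ↔ w ∈ W ∧ w ≠ v ∧ ¬ G.Adj v w := by intro w; rw [hA, mem_filter]
  have hBm : ∀ w, w ∈ B ↔ w ∈ W ∧ w ≠ u ∧ ¬ G.Adj u w := by intro w; rw [hB, mem_filter]
  have hNm : ∀ w, w ∈ N ↔ w ∈ W ∧ G.Adj u w ∧ G.Adj v w := by intro w; rw [hN, mem_filter]
  have uA : u ∈ A := (hAm u).2 ⟨hu, huv, hna'⟩
  have hsum : W.card ≤ A.card + B.card + N.card := by
    have h1 : W ⊆ (A ∪ B) ∪ N := by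
      intro w hw
      simp only [mem_union, hAm, hBm, hNm]
      by_cases e : w = u
      · subst e; tauto
      by_cases e' : w = v
      · subst e'; tauto
      tauto
    have := card_le_card h1
    have := card_union_le (A ∪ B) N
    have := card_union_le A B
    omega
  have hN2 : N.card ≤ 2 := cn u v huv hna N (fun w hw => ((hNm w).1 hw).2)
  have cA : Clq G A := by
    intro a ha b hb' hab
    rw [hAm] at ha hb'
    exact a3 v hv a ha.1 b hb'.1 ha.2.1.symm hb'.2.1.symm hab ha.2.2 hb'.2.2
  have cB : Clq G B := by
    intro a ha b hb' hab
    rw [hBm] at ha hb'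
    exact a3 u hu a ha.1 b hb'.1 ha.2.1.symm hb'.2.1.symm hab ha.2.2 hb'.2.2
  have nA := nok A cA
  have nB := nok B cB
  have cAC := ccl A (N.filter (fun x => ∀ a ∈ A, G.Adj x a)) cA (by omega)
    (fun x hx => (mem_filter.1 hx).2)
  have cBC := ccl B (N.filter (fun x => ∀ a ∈ B, G.Adj x a)) cB (by omega)
    (fun x hx => (mem_filter.1 hx).2)
  have : ∃ x ∈ N, ¬ (∀ a ∈ A, G.Adj x a) ∧ ¬ (∀ a ∈ B, G.Adj x a) := by
    by_contra hcon
    have h1 : N ⊆ N.filter (fun x => ∀ a ∈ A, G.Adj x a) ∪ N.filter (fun x => ∀ a ∈ B, G.Adj x a) := by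
      intro x hx
      by_cases p : ∀ a ∈ A, G.Adj x a
      · exact mem_union_left _ (mem_filter.2 ⟨hx, p⟩)
      · by_cases p' : ∀ a ∈ B, G.Adj x a
        · exact mem_union_right _ (mem_filter.2 ⟨hx, p'⟩)
        · exact absurd ⟨x, hx, p, p'⟩ hcon
    have := card_le_card h1
    have := card_union_le (N.filter (fun x => ∀ a ∈ A, G.Adj x a))
      (N.filter (fun x => ∀ a ∈ B, G.Adj x a))
    omega
  obtain ⟨x, hx, hxA, hxB⟩ := this
  push Not at hxA hxB
  obtain ⟨a, ha, hxa⟩ := hxA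
  obtain ⟨b, hb', hxb⟩ := hxB
  have hxN := (hNm x).1 hx
  have hbB := (hBm b).1 hb'
  have haA := (hAm a).1 ha
  have xa : x ≠ a := by rintro rfl; exact haA.2.2 hxN.2.2
  have xb : x ≠ b := by rintro rfl; exact hbB.2.2 hxN.2.1
  have h1 : (A.filter (fun w => G.Adj x w)).card ≤ 2 := by
    apply cn x a xa hxa
    intro w hw
    rw [mem_filter] at hw
    exact ⟨hw.2, cA a ha w hw.1 (by rintro rfl; exact hxa hw.2)⟩
  have h2 : (A.filter (fun w => ¬ G.Adj x w)).card ≤ 2 := by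
    apply cn u b hbB.2.1.symm hbB.2.2
    intro w hw
    rw [mem_filter] at hw
    have hwA := (hAm w).1 hw.1
    refine ⟨cA u uA w hw.1 (by rintro rfl; exact hw.2 hxN.2.1.symm), ?_⟩
    by_cases e : b = w
    · subst e
      exfalso
      rcases eq_or_ne b v with e | e
      · exact hwA.2.1 e
      · exact hna (a3 b hbB.1 u hu v hv hbB.2.1 e huv (fun e => hbB.2.2 e.symm)
          (fun e => hwA.2.2 e.symm))
    · exact a3 x hxN.1 b hbB.1 w hwA.1 xb (by rintro rfl; exact hwA.2.2 hxN.2.2) e hxb hw.2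
  have h3 := card_filter_add_card_filter_not (s := A) (fun w => G.Adj x w)
  omega

theorem Base.false (hb : Base G k) (hno : ∀ W : Finset V, W.card = k + 1 → ¬ Clq G W) : False := by
  have no := W1 hb hno
  have k8 := hb.k8
  by_cases hn : 3 * k + 1 ≤ Fintype.card V
  · exact big_n hb no hn
  have : Nonempty V := by
    by_contra hcon
    rw [not_nonempty_iff] at hcon
    exact hb.nc ⟨fun v => hcon.elim v, fun v => hcon.elim v⟩
  obtain ⟨x⟩ := this
  obtain ⟨c, hc⟩ := hb.crit x
  by_cases hj : ∃ j, (cls {x} c j).card ≤ 2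
  · obtain ⟨j, hj⟩ := hj
    exact small_class hb no (P := univ) (by simp) hc (fun _ _ => mem_univ _) (mem_univ j) hj
  · push Not at hj
    have h1 : (univ.erase x).card = ∑ j : Fin k, ((univ.erase x).filter (fun v => c v = j)).card :=
      card_eq_sum_card_fiberwise (fun _ _ => mem_coe.2 (mem_univ _))
    have h2 : ∀ j ∈ (univ : Finset (Fin k)), 3 ≤ ((univ.erase x).filter (fun v => c v = j)).card := by
      intro j _
      have := hj j
      have e : cls {x} c j = (univ.erase x).filter (fun v => c v = j) := by
        ext v; rw [mem_cls, mem_filter, mem_erase, mem_singleton]; simp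
      rw [← e]; omega
    have h3 := card_nsmul_le_sum _ _ _ h2
    rw [← h1, card_erase_of_mem (mem_univ _), card_univ] at h3
    simp at h3
    omega

/-- passage to a minimal non-colourable induced subgraph -/
theorem main_aux {V : Type*} [Fintype V] (G : SimpleGraph V) (k : ℕ) (k8 : 8 ≤ k)
    (alpha : ∀ a b c d : V, a ≠ b → a ≠ c → a ≠ d → b ≠ c → b ≠ d → c ≠ d →
    ¬ G.Adj a b → ¬ G.Adj a c → ¬ G.Adj a d → ¬ G.Adj b c → ¬ G.Adj b d → ¬ G.Adj c d → False)
    (deg : ∀ v, (univ.filter (fun w => G.Adj v w)).card ≤ k + 1)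
    (hno : ∀ W : Finset V, W.card = k + 1 → ¬ Clq G W) : 
    ∃ c : V → Fin k, ∀ u v, G.Adj u v → c u ≠ c v := by
  by_contra hcon
  let Bad : Finset V → Prop := fun s => ¬ ∃ c : V → Fin k, ∀ u ∈ s, ∀ v ∈ s, G.Adj u v → c u ≠ c v
  have huniv : Bad univ := fun ⟨c, hc⟩ => hcon ⟨c, fun u v => hc u (mem_univ _) v (mem_univ _)⟩
  obtain ⟨s, hs, hmin⟩ := exists_min_image ((univ : Finset (Finset V)).filter Bad) card
    ⟨univ, mem_filter.2 ⟨mem_univ _, huniv⟩⟩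
  have hs := (mem_filter.1 hs).2
  have hb : Base (G.induce (s : Set V)) k := by
    refine ⟨k8, ?_, ?_, ?_, ?_⟩
    · intro a b c d h1 h2 h3 h4 h5 h6
      have e : ∀ {p q : (s : Set V)}, p ≠ q → (p : V) ≠ q := fun h e => h (Subtype.ext e)
      exact alpha a b c d (e h1) (e h2) (e h3) (e h4) (e h5) (e h6)
    · intro v
      refine le_trans ?_ (deg v)
      rw [← card_map (Function.Embedding.subtype _)]
      apply card_le_card
      intro w hw
      obtain ⟨w', h1, rfl⟩ := mem_map.1 hw
      exact mem_filter.2 ⟨mem_univ _, (mem_filter.1 h1).2⟩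
    · rintro ⟨c, hc⟩
      refine hs ⟨fun v => if h : v ∈ s then c ⟨v, h⟩ else ⟨0, by omega⟩, ?_⟩
      intro u hu v hv huv
      simp only [hu, hv, dif_pos]
      exact hc _ _ huv
    · intro v
      have : ¬ Bad (s.erase v) := by
        intro hbad
        have := hmin _ (mem_filter.2 ⟨mem_univ _, hbad⟩)
        have := card_erase_lt_of_mem (show (v : V) ∈ s from v.2)
        omega
      simp only [Bad, not_not] at this
      obtain ⟨c, hc⟩ := this
      refine ⟨fun w => c w, fun u w hu hw huw => ?_⟩
      exact hc u (mem_erase.2 ⟨fun e => hu (Subtype.ext e), u.2⟩) w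
        (mem_erase.2 ⟨fun e => hw (Subtype.ext e), w.2⟩) huw
  refine hb.false ?_
  intro W hW hcl
  refine hno (W.map (Function.Embedding.subtype _)) (by rw [card_map]; exact hW) ?_
  intro a ha b hb' hab
  obtain ⟨a', h1, rfl⟩ := mem_map.1 ha
  obtain ⟨b', h2, rfl⟩ := mem_map.1 hb'
  exact hcl a' h1 b' h2 (fun e => hab (by rw [e]))

end
end BK

/-- Borodin–Kostochka conjecture for `4K₁`-free graphs: if `Δ(G) ≥ 9` then
`χ(G) ≤ max {Δ(G) - 1, ω(G)}`. -/
theorem borodin_kostochka_fourK1Free {V : Type*} [Fintype V]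
    (G : SimpleGraph V) [DecidableRel G.Adj]
    (hG : FourK1Free G) (hΔ : 9 ≤ G.maxDegree) :
    G.chromaticNumber ≤ ((max (G.maxDegree - 1) G.cliqueNum : ℕ) : ℕ∞) := by
  classical
  obtain ⟨c, hc⟩ := BK.main_aux G (max (G.maxDegree - 1) G.cliqueNum) (by omega) (by
      intro a b c d h1 h2 h3 h4 h5 h6 n1 n2 n3 n4 n5 n6
      refine hG ⟨{a, b, c, d}, card_eq_four.2 ⟨a, b, c, d, h1, h2, h3, h4, h5, h6, rfl⟩, ?_⟩
      intro v hv w hw hvw e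
      have e' := e.symm
      simp only [mem_insert, mem_singleton] at hv hw
      rcases hv with rfl | rfl | rfl | rfl <;> rcases hw with rfl | rfl | rfl | rfl <;>
        first
        | exact hvw rfl
        | exact n1 e
        | exact n2 e
        | exact n3 e
        | exact n4 e
        | exact n5 e
        | exact n6 e
        | exact n1 e'
        | exact n2 e'
        | exact n3 e'
        | exact n4 e'
        | exact n5 e'
        | exact n6 e')
    (by
      intro v
      have h1 := G.degree_le_maxDegree v
      have h2 : (univ.filter (fun w => G.Adj v w)).card = G.degree v := by
        rw [← SimpleGraph.card_neighborFinset_eq_degree]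
        congr 1
        ext w
        simp
      have h3 : (univ.filter (fun w => G.Adj v w)).card ≤ max (G.maxDegree - 1) G.cliqueNum + 1 := by
        omega
      convert h3)
    (by
      intro W hW hcl
      have h1 : G.IsClique (W : Set V) := fun a ha b hb hab => hcl a ha b hb hab
      have h2 := h1.card_le_cliqueNum
      omega)
  have hcol : G.Colorable (max (G.maxDegree - 1) G.cliqueNum) :=
    ⟨SimpleGraph.Coloring.mk c (fun {u v} h => hc u v h)⟩
  exact hcol.chromaticNumber_le
end
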